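/- arXiv:1602.09119 — 2 statements merged into one kernel-verified Lean document; each statement's English description precedes it below -/
import Mathlib

section
/- Let n and p be distinct primes, and let K be a degree n number field whose discriminant D_K is a perfect square in ℤ (equivalently, the Galois group of the Galois closure of K acts on the n embeddings of K into the algebraic closure by even permutations). If p is totally ramified in K, i.e., pO_K = 𝔭ⁿ for a prime ideal 𝔭 of the ring of integers O_K, then p is a quadratic residue modulo n, i.e., the image of p in ℤ/nℤ is a square. -/
open scoped NumberField

/-!
Let `a` be a uniformizer of `𝔭`. Its minimal polynomial is Eisenstein at `p`, so modulo a prime `𝔔`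
above `p` of the normal closure the ratios of the conjugates of `a` are well defined, and since
`p ≠ n` they run exactly once through the `n`-th roots of unity. Fixing one conjugate therefore
identifies the set of embeddings of `K` with `μ_n`, and a Frobenius at `𝔔` acts on it as
`ξ ↦ c * ξ ^ p`. For `n` odd, multiplication by `c` is even, and Zolotarev's lemma says that
`ξ ↦ ξ ^ p` is even only if `p` is a square modulo `n`. But every Galois element acts evenly on the
embeddings, because it fixes the square root `det (φ_j (b_i))` of the discriminant.
-/

open Equiv Polynomial

/-! ### Zolotarev's lemma -/

theorem sign_toPerm_generator {F : Type*} [Field F] [Fintype F] [DecidableEq F]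
    (hF : ringChar F ≠ 2) {g : Fˣ} (hg : ∀ u : Fˣ, u ∈ Subgroup.zpowers g) :
    Perm.sign (MulAction.toPermHom Fˣ F g) = -1 := by
  have moves_one : g • (1 : F) ≠ 1 := by
    intro h
    rw [Units.smul_def, smul_eq_mul, mul_one, Units.val_eq_one] at h
    obtain ⟨k, hk⟩ := hg (-1)
    simp only [h, one_zpow] at hk
    exact Ring.neg_one_ne_one_of_char_ne_two hF (by simpa using (congrArg Units.val hk).symm)
  have isCycle : Perm.IsCycle (MulAction.toPermHom Fˣ F g) := by
    refine ⟨1, moves_one, fun y hy => ?_⟩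
    have hy0 : y ≠ 0 := by rintro rfl; simp at hy
    obtain ⟨k, hk⟩ := Subgroup.mem_zpowers_iff.1 (hg (Units.mk0 y hy0))
    refine ⟨k, ?_⟩
    rw [← map_zpow, hk, MulAction.toPermHom_apply, MulAction.toPerm_apply, Units.smul_def,
      Units.val_mk0, smul_eq_mul, mul_one]
  have support_eq : (MulAction.toPermHom Fˣ F g).support = {0}ᶜ := by
    ext y
    rw [Perm.mem_support, Finset.mem_compl, Finset.mem_singleton,
      MulAction.toPermHom_apply, MulAction.toPerm_apply,
      Units.smul_def, smul_eq_mul]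
    refine ⟨fun h => by rintro rfl; simp at h, fun hy h => moves_one ?_⟩
    rw [Units.smul_def, smul_eq_mul, mul_one, mul_eq_right₀ hy |>.1 h]
  have card_even : Even (Fintype.card F - 1) := by
    have := FiniteField.odd_card_of_char_ne_two hF
    grind
  rw [isCycle.sign, support_eq, Finset.card_compl, Finset.card_singleton, card_even.neg_one_pow]

theorem isSquare_of_sign_toPerm_eq_one {F : Type*} [Field F] [Fintype F] [DecidableEq F]
    {u : Fˣ} (hu : Perm.sign (MulAction.toPermHom Fˣ F u) = 1) : IsSquare (u : F) := by
  by_cases hF : ringChar F = 2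
  · exact FiniteField.isSquare_of_char_two hF _
  obtain ⟨g, hg⟩ := IsCyclic.exists_generator (α := Fˣ)
  obtain ⟨k, rfl⟩ := mem_powers_iff_mem_zpowers.2 (hg u)
  have hk : (-1 : ℤˣ) ^ k = 1 := by
    rwa [map_pow, map_pow, sign_toPerm_generator hF hg] at hu
  have k_even : Even k := (neg_one_pow_eq_one_iff_even (by decide)).1 hk
  simpa using k_even.isSquare_pow (g : F)

theorem isSquare_of_sign_powCoprime_eq_one {C : Type*} [Group C] [Fintype C] [DecidableEq C]
    [Fact (Nat.card C).Prime] {q : ℕ} (hq : (Nat.card C).Coprime q)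
    (hsign : Perm.sign (powCoprime hq) = 1) : IsSquare (q : ZMod (Nat.card C)) := by
  have cyclic : IsCyclic C := isCyclic_of_prime_card rfl
  let e : ZMod (Nat.card C) ≃ C :=
    Multiplicative.ofAdd.trans (zmodCyclicMulEquiv cyclic).toEquiv
  refine isSquare_of_sign_toPerm_eq_one (u := ZMod.unitOfCoprime q hq.symm) ?_
  rw [← hsign]
  refine Perm.sign_eq_sign_of_equiv _ _ e fun x => ?_
  change zmodCyclicMulEquiv cyclic (Multiplicative.ofAdd ((q : ZMod (Nat.card C)) * x)) =
    zmodCyclicMulEquiv cyclic (Multiplicative.ofAdd x) ^ q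
  rw [← map_pow, ← ofAdd_nsmul, nsmul_eq_mul]

theorem sign_mulRight_of_odd_card {C : Type*} [Group C] [Fintype C] [DecidableEq C]
    (hC : Odd (Nat.card C)) (c : C) : Perm.sign (Equiv.mulRight c) = 1 := by
  have pow_card : Perm.sign (Equiv.mulRight c) ^ Nat.card C = 1 := by
    rw [← map_pow, Equiv.pow_mulRight, pow_card_eq_one', Equiv.mulRight_one, map_one]
  rcases Int.units_eq_one_or (Perm.sign (Equiv.mulRight c)) with h | h
  · exact h
  · rw [h, hC.neg_one_pow] at pow_card
    exact absurd pow_card (by decide)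

theorem sign_eq_sign_powCoprime {ι C : Type*} [Fintype ι] [DecidableEq ι] [Group C] [Fintype C]
    [DecidableEq C] {ζ : ι → ι → C} (ζ_mul : ∀ i j l, ζ i j * ζ j l = ζ i l)
    (ζ_ne_one : ∀ i j, i ≠ j → ζ i j ≠ 1) (hcard : Nat.card C = Fintype.card ι)
    (hodd : Odd (Nat.card C)) {q : ℕ} (hq : (Nat.card C).Coprime q) {τ : Perm ι}
    (hτ : ∀ i j, ζ (τ i) (τ j) = ζ i j ^ q) : Perm.sign τ = Perm.sign (powCoprime hq) := by
  obtain ⟨o⟩ : Nonempty ι := Fintype.card_pos_iff.1 (hcard ▸ hodd.pos)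
  have injective : Function.Injective (ζ · o) := by
    intro i j (h : ζ i o = ζ j o)
    by_contra hij
    exact ζ_ne_one i j hij (mul_eq_right.1 ((ζ_mul i j o).trans h))
  have bijective : Function.Bijective (ζ · o) :=
    (Fintype.bijective_iff_injective_and_card _).2
      ⟨injective, by rw [← hcard, Nat.card_eq_fintype_card]⟩
  calc
    Perm.sign τ = Perm.sign (Equiv.mulRight (ζ (τ o) o) * powCoprime hq : Perm C) := by
      refine Perm.sign_eq_sign_of_equiv _ _ (Equiv.ofBijective _ bijective) fun i => ?_
      change ζ (τ i) o = ζ i o ^ q * ζ (τ o) o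
      rw [← hτ, ζ_mul]
    _ = Perm.sign (powCoprime hq) := by rw [map_mul, sign_mulRight_of_odd_card hodd, one_mul]

theorem isSquare_zmod_card_of_sign_eq_one {ι C : Type*} [Fintype ι] [DecidableEq ι] [Group C]
    [Finite C] {ζ : ι → ι → C} (ζ_mul : ∀ i j l, ζ i j * ζ j l = ζ i l)
    (ζ_ne_one : ∀ i j, i ≠ j → ζ i j ≠ 1) (hcard : Nat.card C = Fintype.card ι)
    (hprime : (Nat.card C).Prime) {q : ℕ} (hq : (Nat.card C).Coprime q) {τ : Perm ι}
    (hτ : ∀ i j, ζ (τ i) (τ j) = ζ i j ^ q) (hsign : Perm.sign τ = 1) :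
    IsSquare (q : ZMod (Nat.card C)) := by
  classical
  have := Fintype.ofFinite C
  have := Fact.mk hprime
  rcases hprime.eq_two_or_odd' with htwo | hodd
  · exact FiniteField.isSquare_of_char_two ((ZMod.ringChar_zmod_n _).trans htwo) _
  · refine isSquare_of_sign_powCoprime_eq_one hq ?_
    rw [← sign_eq_sign_powCoprime ζ_mul ζ_ne_one hcard hodd hq hτ, hsign]

theorem pow_card_eq_of_prod_X_sub_C_eq {B ι : Type*} [CommRing B] [Fintype ι] {x : ι → B}
    {f : B[X]} (hprod : ∏ i, (X - C (x i)) = X ^ Fintype.card ι + f) (i : ι) :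
    x i ^ Fintype.card ι = -f.eval (x i) := by
  have h := congrArg (eval (x i)) hprod
  rw [eval_prod, Finset.prod_eq_zero (Finset.mem_univ i) (by simp), eval_add, eval_pow, eval_X] at h
  exact eq_neg_of_add_eq_zero_left h.symm

theorem isSquare_zmod_card_of_prod_X_sub_C_eq {ι k : Type*} [Fintype ι] [DecidableEq ι]
    [Field k] {z : ι → ι → k} (z_mul : ∀ i j l, z i j * z j l = z i l)
    (z_prod : ∀ j, ∏ i, (X - C (z i j)) = X ^ Fintype.card ι - 1)
    (hprime : (Fintype.card ι).Prime) (hcard : (Fintype.card ι : k) ≠ 0) {q : ℕ}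
    (hq : (Fintype.card ι).Coprime q) {τ : Perm ι} (hτ : ∀ i j, z (τ i) (τ j) = z i j ^ q)
    (hsign : Perm.sign τ = 1) : IsSquare (q : ZMod (Fintype.card ι)) := by
  have : NeZero (Fintype.card ι) := ⟨hprime.ne_zero⟩
  have z_pow (i j : ι) : z i j ^ Fintype.card ι = 1 := by
    simpa using pow_card_eq_of_prod_X_sub_C_eq ((z_prod j).trans (sub_eq_add_neg _ _)) i
  let ζ (i j : ι) : rootsOfUnity (Fintype.card ι) k := rootsOfUnity.mkOfPowEq (z i j) (z_pow i j)
  have ζ_mul (i j l : ι) : ζ i j * ζ j l = ζ i l := Subtype.ext (Units.ext (z_mul i j l))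
  have ζ_injective (j : ι) : Function.Injective (ζ · j) := by
    have z_injective : Function.Injective (z · j) := by
      apply Separable.injective_of_prod_X_sub_C
      rw [z_prod, X_pow_sub_one_separable_iff]
      exact hcard
    exact fun i l h => z_injective (congrArg (fun y : rootsOfUnity _ k => ((y : kˣ) : k)) h)
  have ζ_ne_one (i j : ι) (hij : i ≠ j) : ζ i j ≠ 1 := by
    have ζ_self : ζ j j = 1 := mul_eq_left.1 (ζ_mul j j j)
    exact fun h => hij (ζ_injective j (h.trans ζ_self.symm))
  have card_eq : Nat.card (rootsOfUnity (Fintype.card ι) k) = Fintype.card ι := by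
    obtain ⟨o⟩ : Nonempty ι := Fintype.card_pos_iff.1 hprime.pos
    refine (card_rootsOfUnity k _).antisymm ?_
    exact Nat.card_eq_fintype_card.symm.trans_le
      (Nat.card_le_card_of_injective _ (ζ_injective o))
  have := isSquare_zmod_card_of_sign_eq_one ζ_mul ζ_ne_one card_eq (by rwa [card_eq])
    (by rwa [card_eq]) (fun i j => Subtype.ext (Units.ext (hτ i j))) hsign
  rwa [card_eq] at this

/-! ### Ratios of the roots of an Eisenstein polynomial -/

section RootRatios

variable {B k ι : Type*} [CommRing B] [Field k] [Fintype ι] {π : B →+* k} {x : ι → B} {ϖ : B}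
  {g : B[X]}

theorem root_pow_card (hprod : ∏ i, (X - C (x i)) = X ^ Fintype.card ι + C ϖ * g) (i : ι) :
    x i ^ Fintype.card ι = ϖ * -g.eval (x i) := by
  rw [pow_card_eq_of_prod_X_sub_C_eq hprod, eval_C_mul, mul_neg]

theorem prod_C_mul_X_sub_root (hprod : ∏ i, (X - C (x i)) = X ^ Fintype.card ι + C ϖ * g) (j : ι) :
    ∏ i, (C (x j) * X - C (x i)) =
      C (x j) ^ Fintype.card ι * X ^ Fintype.card ι + C ϖ * g.comp (C (x j) * X) := by
  have h := congrArg (·.comp (C (x j) * X)) hprod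
  simpa only [Polynomial.prod_comp, sub_comp, X_comp, C_comp, add_comp, pow_comp, mul_comp,
    mul_pow] using h

theorem map_root_eq_zero (hprod : ∏ i, (X - C (x i)) = X ^ Fintype.card ι + C ϖ * g)
    (hϖ : π ϖ = 0) (i : ι) : π (x i) = 0 := by
  have : Nonempty ι := ⟨i⟩
  refine pow_eq_zero_iff (n := Fintype.card ι) Fintype.card_ne_zero |>.1 ?_
  rw [← map_pow, root_pow_card hprod i, map_mul, hϖ, zero_mul]

theorem dvd_root_mul_root_pow [IsDomain B] [IsIntegrallyClosed B]
    (hprod : ∏ i, (X - C (x i)) = X ^ Fintype.card ι + C ϖ * g) (i j : ι) :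
    ϖ ∣ x i * x j ^ (Fintype.card ι - 1) := by
  have : Nonempty ι := ⟨i⟩
  have dvd_pow_card (l : ι) : ϖ ∣ x l ^ Fintype.card ι := ⟨_, root_pow_card hprod l⟩
  rw [← IsIntegrallyClosed.pow_dvd_pow_iff (n := Fintype.card ι) Fintype.card_ne_zero]
  calc
    ϖ ^ Fintype.card ι = ϖ * ϖ ^ (Fintype.card ι - 1) :=
      (mul_pow_sub_one Fintype.card_ne_zero ϖ).symm
    _ ∣ x i ^ Fintype.card ι * (x j ^ Fintype.card ι) ^ (Fintype.card ι - 1) :=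
      mul_dvd_mul (dvd_pow_card i) (pow_dvd_pow_of_dvd (dvd_pow_card j) _)
    _ = (x i * x j ^ (Fintype.card ι - 1)) ^ Fintype.card ι := by
      rw [mul_pow, pow_right_comm]

-- `r i j` plays the role of `(x i / x j) * (x j ^ n / ϖ)`, whose second factor is a unit modulo
-- `ker π` not depending on `j`.
variable [IsDomain B] {r : ι → ι → B} (hϖ : ϖ ≠ 0)
  (hr : ∀ i j, x i * x j ^ (Fintype.card ι - 1) = ϖ * r i j)
include hϖ hr

theorem rootRatio_mul_rootRatio (i j l : ι) : r i j * r j l = r j j * r i l := by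
  apply mul_left_cancel₀ (pow_ne_zero 2 hϖ)
  linear_combination
    -(ϖ * r j l) * hr i j - x i * x j ^ (Fintype.card ι - 1) * hr j l +
      (ϖ * r i l) * hr j j + x j * x j ^ (Fintype.card ι - 1) * hr i l

theorem map_rootRatio_of_semiconj {σ : B →+* B} (hσϖ : σ ϖ = ϖ) {τ : ι → ι}
    (hσ : ∀ i, σ (x i) = x (τ i)) (i j : ι) : σ (r i j) = r (τ i) (τ j) := by
  apply mul_left_cancel₀ hϖ
  rw [← hr, ← hσ, ← hσ, ← map_pow, ← map_mul, hr, map_mul, hσϖ]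

variable (hprod : ∏ i, (X - C (x i)) = X ^ Fintype.card ι + C ϖ * g)
include hprod

theorem rootRatio_self (i : ι) : r i i = -g.eval (x i) := by
  have : Nonempty ι := ⟨i⟩
  apply mul_left_cancel₀ hϖ
  rw [← hr, mul_pow_sub_one Fintype.card_ne_zero, root_pow_card hprod]

theorem prod_C_mul_X_sub_rootRatio (j : ι) :
    ∏ i, (C (r j j) * X - C (r i j)) =
      C (r j j) ^ (Fintype.card ι - 1) *
        (C (r j j) * X ^ Fintype.card ι + g.comp (C (x j) * X)) := by
  have : Nonempty ι := ⟨j⟩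
  have hn : Fintype.card ι ≠ 0 := Fintype.card_ne_zero
  have hpow : x j ^ Fintype.card ι = ϖ * r j j := by rw [← hr, mul_pow_sub_one hn]
  apply mul_left_cancel₀ (pow_ne_zero (Fintype.card ι) (C_ne_zero.2 hϖ))
  calc
    C ϖ ^ Fintype.card ι * ∏ i, (C (r j j) * X - C (r i j))
      = ∏ i, (C (x j ^ (Fintype.card ι - 1)) * (C (x j) * X - C (x i))) := by
        rw [Fintype.card, ← Finset.prod_const, ← Finset.prod_mul_distrib]
        refine Finset.prod_congr rfl fun i _ => ?_
        rw [mul_sub, mul_sub, ← mul_assoc, ← mul_assoc, ← C_mul, ← C_mul, ← C_mul, ← C_mul,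
          ← hr, ← hr, Fintype.card, mul_comm (x i), mul_comm (x j)]
    _ = (C (x j ^ Fintype.card ι)) ^ (Fintype.card ι - 1) * ∏ i, (C (x j) * X - C (x i)) := by
        rw [Finset.prod_mul_distrib, Finset.prod_const, ← Fintype.card, ← C_pow, ← C_pow,
          pow_right_comm]
    _ = _ := by
        rw [prod_C_mul_X_sub_root hprod, ← C_pow (n := Fintype.card ι), hpow, C_mul, mul_pow,
          ← mul_pow_sub_one hn (C ϖ)]
        ring

variable (hπϖ : π ϖ = 0)
include hπϖ

theorem map_rootRatio_self (i : ι) : π (r i i) = -π (g.coeff 0) := by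
  rw [rootRatio_self hϖ hr hprod, map_neg, ← eval_map_apply, map_root_eq_zero hprod hπϖ i,
    ← coeff_zero_eq_eval_zero, coeff_map]

variable (hg : π (g.coeff 0) ≠ 0)
include hg

theorem prod_X_sub_map_rootRatio_div (j : ι) :
    ∏ i, (X - C (π (r i j) / π (r j j))) = X ^ Fintype.card ι - 1 := by
  have : Nonempty ι := ⟨j⟩
  have hn : Fintype.card ι ≠ 0 := Fintype.card_ne_zero
  have hself : π (r j j) = -π (g.coeff 0) := map_rootRatio_self hϖ hr hprod hπϖ j
  have hu : π (r j j) ≠ 0 := by rw [hself]; exact neg_ne_zero.2 hg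
  have h := congrArg (map π) (prod_C_mul_X_sub_rootRatio hϖ hr hprod j)
  simp only [Polynomial.map_prod, Polynomial.map_sub, Polynomial.map_mul, map_C, map_X,
    Polynomial.map_pow, Polynomial.map_add, map_comp, map_root_eq_zero hprod hπϖ j, C_0, zero_mul,
    comp_zero] at h
  rw [← coeff_zero_eq_eval_zero, coeff_map, ← neg_neg (π (g.coeff 0)), ← hself] at h
  apply mul_left_cancel₀ (pow_ne_zero (Fintype.card ι) (C_ne_zero.2 hu))
  calc
    C (π (r j j)) ^ Fintype.card ι * ∏ i, (X - C (π (r i j) / π (r j j)))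
      = ∏ i, (C (π (r j j)) * X - C (π (r i j))) := by
        rw [Fintype.card, ← Finset.prod_const, ← Finset.prod_mul_distrib]
        refine Finset.prod_congr rfl fun i _ => ?_
        rw [mul_sub, ← C_mul, mul_div_cancel₀ _ hu]
    _ = _ := by
        rw [h, ← mul_pow_sub_one hn (C (π (r j j))), C_neg]
        ring

omit hr in
theorem isSquare_zmod_card_of_frobenius [IsIntegrallyClosed B] [DecidableEq ι]
    (hprime : (Fintype.card ι).Prime) (hcard : (Fintype.card ι : k) ≠ 0) {q : ℕ}
    (hq : (Fintype.card ι).Coprime q) {σ : B →+* B} (hσϖ : σ ϖ = ϖ)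
    (hfrob : ∀ b, π (σ b) = π b ^ q) {τ : Perm ι} (hσ : ∀ i, σ (x i) = x (τ i))
    (hsign : Perm.sign τ = 1) : IsSquare (q : ZMod (Fintype.card ι)) := by
  choose r hr using dvd_root_mul_root_pow hprod
  have self_ne_zero (i : ι) : π (r i i) ≠ 0 := by
    rw [map_rootRatio_self hϖ hr hprod hπϖ]
    exact neg_ne_zero.2 hg
  refine isSquare_zmod_card_of_prod_X_sub_C_eq (z := fun i j => π (r i j) / π (r j j))
    (fun i j l => ?_) (prod_X_sub_map_rootRatio_div hϖ hr hprod hπϖ hg) hprime hcard hq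
    (τ := τ) (fun i j => ?_) hsign
  · rw [div_mul_div_comm, ← map_mul, rootRatio_mul_rootRatio hϖ hr, map_mul,
      mul_div_mul_left _ _ (self_ne_zero j)]
  · rw [← map_rootRatio_of_semiconj hϖ hr hσϖ hσ, ← map_rootRatio_of_semiconj hϖ hr hσϖ hσ,
      hfrob, hfrob, div_pow]

end RootRatios

/-! ### Embeddings -/

section Embeddings

variable {F K E : Type*} [Field F] [Field K] [Field E] [Algebra F K] [Algebra F E]
  [FiniteDimensional F K] [Algebra.IsSeparable F K]
  (hsplits : ∀ x : K, ((minpoly F x).map (algebraMap F E)).Splits)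
include hsplits

theorem algebraMap_discr_eq_det_sq {ι : Type*} [Fintype ι] [DecidableEq ι] (b : ι → K)
    (e : ι ≃ (K →ₐ[F] E)) :
    algebraMap F E (Algebra.discr F b) = (Algebra.embeddingsMatrixReindex F E b e).det ^ 2 := by
  let j : E →ₐ[F] AlgebraicClosure E := IsScalarTower.toAlgHom F E (AlgebraicClosure E)
  have j_comp_bijective : Function.Bijective (j.comp : (K →ₐ[F] E) → _) := by
    rw [Fintype.bijective_iff_injective_and_card, AlgHom.card_of_splits F K E hsplits, AlgHom.card]
    exact ⟨fun φ ψ h => AlgHom.ext fun x => j.injective (DFunLike.congr_fun h x), rfl⟩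
  have discr_eq := Algebra.discr_eq_det_embeddingsMatrixReindex_pow_two F (AlgebraicClosure E) b
    (e.trans (Equiv.ofBijective _ j_comp_bijective))
  apply FaithfulSMul.algebraMap_injective E (AlgebraicClosure E)
  rw [← IsScalarTower.algebraMap_apply, discr_eq, map_pow, RingHom.map_det]
  rfl

theorem sign_arrowCongr_eq_one_of_isSquare_discr [NeZero (2 : E)]
    [DecidableEq (K →ₐ[F] E)] {ι : Type*} [Fintype ι] [DecidableEq ι] (b : Module.Basis ι F K)
    (hb : IsSquare (Algebra.discr F b)) (g : E ≃ₐ[F] E) :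
    Perm.sign (AlgEquiv.refl.arrowCongr g : Perm (K →ₐ[F] E)) = 1 := by
  let e : ι ≃ (K →ₐ[F] E) := Fintype.equivOfCardEq <| by
    rw [AlgHom.card_of_splits F K E hsplits, Module.finrank_eq_card_basis b]
  set τ : Perm (K →ₐ[F] E) := AlgEquiv.refl.arrowCongr g
  set δ : E := (Algebra.embeddingsMatrixReindex F E b e).det with δ_def
  have δ_sq : algebraMap F E (Algebra.discr F b) = δ ^ 2 := algebraMap_discr_eq_det_sq hsplits b e
  have δ_ne_zero : δ ≠ 0 := by
    rintro h
    rw [h, zero_pow two_ne_zero, map_eq_zero] at δ_sq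
    exact Algebra.discr_not_zero_of_basis F b δ_sq
  have g_fixes_δ : g δ = δ := by
    obtain ⟨r, hr⟩ := hb
    rw [hr, map_mul, ← pow_two] at δ_sq
    rcases sq_eq_sq_iff_eq_or_eq_neg.1 δ_sq.symm with h | h <;> simp [h]
  have g_permutes_columns : g δ = Perm.sign τ * δ := by
    calc
      g δ = ((Algebra.embeddingsMatrixReindex F E b e).submatrix id (e.symm.permCongr τ)).det := by
        rw [δ_def, AlgEquiv.map_det]
        congr 1
        ext i k
        simp [τ, Algebra.embeddingsMatrixReindex, Algebra.embeddingsMatrix]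
      _ = Perm.sign τ * δ := by rw [Matrix.det_permute', Perm.sign_permCongr]
  rcases Int.units_eq_one_or (Perm.sign τ) with h | h
  · exact h
  · rw [g_fixes_δ, h] at g_permutes_columns
    have : (2 : E) * δ = 0 := by
      push_cast at g_permutes_columns
      linear_combination g_permutes_columns
    exact absurd this (mul_ne_zero two_ne_zero δ_ne_zero)

theorem map_minpoly_eq_prod_algHom {a : K}
    (ha : (minpoly F a).natDegree = Module.finrank F K) :
    (minpoly F a).map (algebraMap F E) = ∏ φ : K →ₐ[F] E, (X - C (φ a)) := by
  have a_integral : IsIntegral F a := Algebra.IsIntegral.isIntegral a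
  have eval_injective : Function.Injective fun φ : K →ₐ[F] E => φ a :=
    (Field.primitive_element_iff_algHom_eq_of_eval' F E hsplits a).1
      ((Field.primitive_element_iff_minpoly_natDegree_eq F a).2 ha)
  have prod_dvd : ∏ φ : K →ₐ[F] E, (X - C (φ a)) ∣ (minpoly F a).map (algebraMap F E) := by
    refine Finset.prod_dvd_of_coprime
      (fun φ _ ψ _ hne => pairwise_coprime_X_sub_C eval_injective hne) fun φ _ => ?_
    rw [dvd_iff_isRoot, IsRoot.def, eval_map_algebraMap, aeval_algHom_apply, minpoly.aeval,
      map_zero]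
  refine eq_of_monic_of_dvd_of_natDegree_le (monic_prod_X_sub_C _ _)
    ((minpoly.monic a_integral).map _) prod_dvd ?_
  rw [natDegree_map, ha, natDegree_finsetProd_X_sub_C_eq_card, Finset.card_univ,
    AlgHom.card_of_splits F K E hsplits]

end Embeddings

/-! ### Uniformizers -/

theorem exists_eq_X_pow_add_C_mul_of_isEisensteinAt {A : Type*} [CommRing A] {f : A[X]} {ϖ : A}
    (hf : f.Monic) (hEis : f.IsEisensteinAt (Ideal.span {ϖ})) (hdeg : f.natDegree ≠ 0) :
    ∃ g : A[X], f = X ^ f.natDegree + C ϖ * g ∧ ¬ ϖ ∣ g.coeff 0 := by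
  have dvd_eraseLead : C ϖ ∣ f.eraseLead := by
    refine (C_dvd_iff_dvd_coeff _ _).2 fun i => ?_
    rcases lt_trichotomy i f.natDegree with hi | rfl | hi
    · rw [eraseLead_coeff_of_ne _ hi.ne]
      exact Ideal.mem_span_singleton.1 (hEis.mem hi)
    · simp
    · simp [eraseLead_coeff_of_ne _ hi.ne', coeff_eq_zero_of_natDegree_lt hi]
  obtain ⟨g, hg⟩ := dvd_eraseLead
  have hfg : f = X ^ f.natDegree + C ϖ * g := by
    nth_rw 1 [← eraseLead_add_C_mul_X_pow f, hf.leadingCoeff, C_1, one_mul, hg, add_comm]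
  refine ⟨g, hfg, fun hdvd => hEis.notMem ?_⟩
  rw [Ideal.span_singleton_pow, Ideal.mem_span_singleton, hfg, coeff_add, coeff_X_pow,
    if_neg hdeg.symm, zero_add, coeff_C_mul, pow_two]
  exact mul_dvd_mul_left ϖ hdvd

section Uniformizer

variable {A R : Type*} [CommRing A] [CommRing R] [IsDedekindDomain R] [Algebra A R] {P : Ideal R}
  [hP : P.IsPrime] {a : R} {n : ℕ}

theorem pow_notMem_pow_succ (hbot : P ≠ ⊥) (ha : a ∈ P) (ha' : a ∉ P ^ 2) (i : ℕ) :
    a ^ i ∉ P ^ (i + 1) := by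
  have emultiplicity_eq : emultiplicity P (Ideal.span {a}) = (1 : ℕ) := by
    rw [emultiplicity_eq_coe, pow_one, Ideal.dvd_span_singleton, Ideal.dvd_span_singleton]
    exact ⟨ha, ha'⟩
  rw [← Ideal.dvd_span_singleton, ← Ideal.span_singleton_pow, pow_dvd_iff_le_emultiplicity,
    emultiplicity_pow (Ideal.prime_of_isPrime hbot hP), emultiplicity_eq, Nat.cast_one, mul_one,
    Nat.cast_le]
  exact Nat.not_succ_le_self i

variable (hbot : P ≠ ⊥) (ha : a ∈ P) (ha' : a ∉ P ^ 2)
  (hram : (P.under A).map (algebraMap A R) ≤ P ^ n)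
include hbot ha ha' hram

theorem coeff_mem_under_of_aeval_mem_pow {f : A[X]} (hf : f.natDegree < n)
    (haeval : aeval a f ∈ P ^ n) (i : ℕ) : f.coeff i ∈ P.under A := by
  induction i using Nat.strong_induction_on with
  | _ i ih =>
  rcases lt_or_ge i n with hi | hi
  swap
  · simp [coeff_eq_zero_of_natDegree_lt (hf.trans_le hi)]
  have pow_le : P ^ n ≤ P ^ (i + 1) := Ideal.pow_le_pow_right hi
  have others_mem : ∑ j ∈ (Finset.range n).erase i, algebraMap A R (f.coeff j) * a ^ j ∈
      P ^ (i + 1) := by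
    refine Ideal.sum_mem _ fun j hj => ?_
    rcases lt_or_gt_of_ne (Finset.ne_of_mem_erase hj) with hji | hij
    · exact Ideal.mul_mem_right _ _ (pow_le (hram (Ideal.mem_map_of_mem _ (ih j hji))))
    · exact Ideal.mul_mem_left _ _ (Ideal.pow_le_pow_right hij (Ideal.pow_mem_pow ha j))
  rw [aeval_eq_sum_range' hf] at haeval
  simp only [Algebra.smul_def] at haeval
  rw [← Finset.add_sum_erase _ _ (Finset.mem_range.2 hi)] at haeval
  have term_mem := (Ideal.add_mem_iff_left _ others_mem).1 (pow_le haeval)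
  exact (hP.mul_mem_pow P term_mem).resolve_right (pow_notMem_pow_succ hbot ha ha' i)

theorem le_natDegree_of_aeval_eq_zero {f : A[X]} (hf : f.Monic) (hroot : aeval a f = 0) :
    n ≤ f.natDegree := by
  by_contra! hlt
  have hone := coeff_mem_under_of_aeval_mem_pow hbot ha ha' hram hlt (by simp [hroot]) f.natDegree
  rw [hf.coeff_natDegree] at hone
  exact (hP.under A).ne_top ((Ideal.eq_top_iff_one _).2 hone)

theorem isEisensteinAt_under_of_aeval_eq_zero {f : A[X]} (hf : f.Monic) (hroot : aeval a f = 0)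
    (hdeg : f.natDegree = n) : f.IsEisensteinAt (P.under A) := by
  have one_notMem : (1 : A) ∉ P.under A := (Ideal.ne_top_iff_one _).1 (hP.under A).ne_top
  have coeff_mem (i : ℕ) (hi : i < n) : f.coeff i ∈ P.under A := by
    have aeval_eraseLead : aeval a f.eraseLead = -a ^ n := by
      rw [← self_sub_C_mul_X_pow]
      simp [hf.leadingCoeff, hroot, hdeg]
    rw [← eraseLead_coeff_of_ne i (hi.trans_eq hdeg.symm).ne]
    refine coeff_mem_under_of_aeval_mem_pow hbot ha ha' hram ?_ ?_ i
    · exact (eraseLead_natDegree_lt_or_eraseLead_eq_zero f).elim (·.trans_eq hdeg)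
        fun h => by simpa [h] using Nat.zero_lt_of_lt hi
    · rw [aeval_eraseLead]
      exact neg_mem (Ideal.pow_mem_pow ha n)
  refine ⟨by rwa [hf.leadingCoeff], fun hi => coeff_mem _ (hdeg ▸ hi), fun hcoeff => ?_⟩
  have term_mem (i : ℕ) (hi : i < n) : f.coeff i • a ^ i ∈ P ^ (n + 1) := by
    rw [Algebra.smul_def]
    rcases eq_or_ne i 0 with rfl | hi0
    · have hsq : algebraMap A R (f.coeff 0) ∈ (P ^ n) ^ 2 :=
        Ideal.pow_right_mono hram 2 (Ideal.map_pow (algebraMap A R) _ 2 ▸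
          Ideal.mem_map_of_mem _ hcoeff)
      rw [← pow_mul] at hsq
      exact Ideal.mul_mem_right _ _ (Ideal.pow_le_pow_right (by lia) hsq)
    · rw [pow_succ]
      exact Ideal.mul_mem_mul (hram (Ideal.mem_map_of_mem _ (coeff_mem i hi)))
        (Ideal.pow_mem_of_mem _ ha _ (Nat.pos_of_ne_zero hi0))
  rw [aeval_eq_sum_range, hdeg, Finset.sum_range_succ, ← hdeg, hf.coeff_natDegree, one_smul,
    hdeg] at hroot
  refine pow_notMem_pow_succ hbot ha ha' n ?_
  rw [eq_neg_of_add_eq_zero_right hroot]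
  exact neg_mem (Ideal.sum_mem _ fun i hi => term_mem i (Finset.mem_range.1 hi))

end Uniformizer

/-! ### Number fields -/

theorem under_eq_span_of_natCast_mem {R : Type*} [CommRing R] {P : Ideal R} [hP : P.IsPrime] {p : ℕ}
    (hp : p.Prime) (hmem : (p : R) ∈ P) : P.under ℤ = Ideal.span {(p : ℤ)} := by
  have := Fact.mk hp
  refine ((Int.ideal_span_isMaximal_of_prime p).eq_of_le (hP.under ℤ).ne_top ?_).symm
  rw [Ideal.span_singleton_le_iff_mem, Ideal.mem_comap]
  simpa using hmem

theorem exists_minpoly_isEisensteinAt {K : Type*} [Field K] [NumberField K] {p : ℕ}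
    (hp : p.Prime) {𝔭 : Ideal (𝓞 K)} [h𝔭 : 𝔭.IsPrime]
    (htot : Ideal.span {(p : 𝓞 K)} = 𝔭 ^ Module.finrank ℚ K) :
    ∃ a : 𝓞 K, (minpoly ℤ a).natDegree = Module.finrank ℚ K ∧
      (minpoly ℤ a).IsEisensteinAt (Ideal.span {(p : ℤ)}) := by
  have hmem : (p : 𝓞 K) ∈ 𝔭 := Ideal.pow_le_self Module.finrank_pos.ne'
    (htot ▸ Ideal.mem_span_singleton_self _)
  have hbot : 𝔭 ≠ ⊥ := by
    rintro rfl
    exact hp.ne_zero (Nat.cast_eq_zero.1 (Ideal.mem_bot.1 hmem))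
  have hunder : 𝔭.under ℤ = Ideal.span {(p : ℤ)} := under_eq_span_of_natCast_mem hp hmem
  have hram : (𝔭.under ℤ).map (algebraMap ℤ (𝓞 K)) ≤ 𝔭 ^ Module.finrank ℚ K := by
    simp [hunder, Ideal.map_span, htot]
  obtain ⟨a, ha, ha'⟩ : ∃ a ∈ 𝔭, a ∉ 𝔭 ^ 2 := by
    simpa using Set.exists_of_ssubset (Ideal.pow_right_strictAnti 𝔭 hbot h𝔭.ne_top one_lt_two)
  have a_integral : IsIntegral ℤ a := Algebra.IsIntegral.isIntegral a
  have hdeg : (minpoly ℤ a).natDegree = Module.finrank ℚ K := by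
    refine le_antisymm ?_ (le_natDegree_of_aeval_eq_zero hbot ha ha' hram (minpoly.monic a_integral)
      (minpoly.aeval ℤ a))
    rw [← NumberField.RingOfIntegers.rank]
    exact minpoly.natDegree_le a
  exact ⟨a, hdeg, hunder ▸ isEisensteinAt_under_of_aeval_eq_zero hbot ha ha' hram
    (minpoly.monic a_integral) (minpoly.aeval ℤ a) hdeg⟩

theorem map_minpoly_int_eq_prod_algHom {K L : Type*} [Field K] [NumberField K] [Field L]
    [NumberField L] (hsplits : ∀ x : K, ((minpoly ℚ x).map (algebraMap ℚ L)).Splits) {a : 𝓞 K}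
    (ha : (minpoly ℤ a).natDegree = Module.finrank ℚ K) :
    (minpoly ℤ a).map (algebraMap ℤ (𝓞 L)) =
      ∏ φ : K →ₐ[ℚ] L, (X - C (NumberField.RingOfIntegers.mapRingHom (φ : K →+* L) a)) := by
  have minpoly_rat : minpoly ℚ (a : K) = (minpoly ℤ a).map (algebraMap ℤ ℚ) :=
    minpoly.isIntegrallyClosed_eq_field_fractions ℚ K (Algebra.IsIntegral.isIntegral a)
  have prod_rat := map_minpoly_eq_prod_algHom hsplits (a := (a : K))
    (by rw [minpoly_rat, (minpoly.monic (Algebra.IsIntegral.isIntegral a)).natDegree_map, ha])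
  apply map_injective (algebraMap (𝓞 L) L) NumberField.RingOfIntegers.coe_injective
  rw [minpoly_rat, map_map] at prod_rat
  rw [map_map, Polynomial.map_prod, RingHom.ext_int ((algebraMap (𝓞 L) L).comp _) _, prod_rat]
  simp

theorem exists_frobenius_over_prime (L : Type*) [Field L] [NumberField L] [IsGalois ℚ L] {p : ℕ}
    (hp : p.Prime) :
    ∃ 𝔔 : Ideal (𝓞 L), 𝔔.IsMaximal ∧ (∀ z : ℤ, (z : 𝓞 L) ∈ 𝔔 ↔ (p : ℤ) ∣ z) ∧
      ∃ σ : Gal(L/ℚ), ∀ b : 𝓞 L, σ • b - b ^ p ∈ 𝔔 := by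
  have := Fact.mk hp
  have := Int.ideal_span_isMaximal_of_prime p
  obtain ⟨𝔔, h𝔔, hover⟩ :=
    Ideal.exists_maximal_ideal_liesOver_of_isIntegral (S := 𝓞 L) (Ideal.span {(p : ℤ)})
  obtain ⟨σ, hσ⟩ := IsArithFrobAt.exists_of_isInvariant ℤ Gal(L/ℚ) 𝔔
  have card_eq : Nat.card (ℤ ⧸ 𝔔.under ℤ) = p := by
    rw [← hover.over, Nat.card_congr (Int.quotientSpanNatEquivZMod p).toEquiv, Nat.card_zmod]
  refine ⟨𝔔, h𝔔, fun z => ?_, σ, fun b => ?_⟩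
  · rw [← Ideal.mem_span_singleton, hover.over, Ideal.mem_comap, eq_intCast]
  · simpa [card_eq] using hσ b

theorem isSquare_zmod_finrank_of_isEisensteinAt {K L : Type*} [Field K] [NumberField K] [Field L]
    [NumberField L] [IsGalois ℚ L]
    (hsplits : ∀ x : K, ((minpoly ℚ x).map (algebraMap ℚ L)).Splits)
    (hn : (Module.finrank ℚ K).Prime) {p : ℕ} (hp : p.Prime) (hnp : Module.finrank ℚ K ≠ p)
    (hsq : IsSquare (NumberField.discr K)) {a : 𝓞 K}
    (hdeg : (minpoly ℤ a).natDegree = Module.finrank ℚ K)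
    (hEis : (minpoly ℤ a).IsEisensteinAt (Ideal.span {(p : ℤ)})) :
    IsSquare (p : ZMod (Module.finrank ℚ K)) := by
  classical
  obtain ⟨g, hg, hg0⟩ := exists_eq_X_pow_add_C_mul_of_isEisensteinAt
    (minpoly.monic (Algebra.IsIntegral.isIntegral a)) hEis (hdeg ▸ hn.ne_zero)
  obtain ⟨𝔔, h𝔔, mem_iff, σ, hσ⟩ := exists_frobenius_over_prime L hp
  let _ : Field (𝓞 L ⧸ 𝔔) := Ideal.Quotient.field 𝔔
  have mk_eq_zero_iff (z : ℤ) : Ideal.Quotient.mk 𝔔 z = 0 ↔ (p : ℤ) ∣ z :=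
    Ideal.Quotient.eq_zero_iff_mem.trans (mem_iff z)
  have card_eq : Fintype.card (K →ₐ[ℚ] L) = Module.finrank ℚ K :=
    AlgHom.card_of_splits ℚ K L hsplits
  have hprod : ∏ φ : K →ₐ[ℚ] L, (X - C (NumberField.RingOfIntegers.mapRingHom (φ : K →+* L) a)) =
      X ^ Fintype.card (K →ₐ[ℚ] L) + C (p : 𝓞 L) * g.map (algebraMap ℤ (𝓞 L)) := by
    rw [← map_minpoly_int_eq_prod_algHom hsplits hdeg, hg, hdeg, card_eq]
    simp
  have discr_isSquare : IsSquare (Algebra.discr ℚ (NumberField.integralBasis K)) := by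
    rw [← NumberField.coe_discr]
    exact hsq.map (Int.castRingHom ℚ)
  rw [← card_eq] at hn hnp ⊢
  refine isSquare_zmod_card_of_frobenius (π := Ideal.Quotient.mk 𝔔)
    (σ := MulSemiringAction.toRingHom Gal(L/ℚ) (𝓞 L) σ)
    (τ := AlgEquiv.refl.arrowCongr σ) (by exact_mod_cast hp.ne_zero) hprod ?_ ?_ hn ?_
    ((Nat.coprime_primes hn hp).2 hnp) (map_natCast _ p) (fun b => ?_) (fun φ => rfl)
    (sign_arrowCongr_eq_one_of_isSquare_discr hsplits (NumberField.integralBasis K)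
      discr_isSquare σ)
  · exact_mod_cast (mk_eq_zero_iff p).2 dvd_rfl
  · rw [coeff_map, eq_intCast]
    exact (mk_eq_zero_iff _).not.2 hg0
  · have := (mk_eq_zero_iff (Fintype.card (K →ₐ[ℚ] L))).not.2
    rw [Int.natCast_dvd_natCast, Nat.prime_dvd_prime_iff_eq hp hn] at this
    simpa using this hnp.symm
  · rw [← map_pow, Ideal.Quotient.mk_eq_mk_iff_sub_mem]
    exact hσ b

/-- If `K` is a degree `n` number field (`n` prime) whose discriminant is a perfect
square, and the prime `p ≠ n` is totally ramified in `K` (i.e. `pO_K = 𝔭ⁿ` for a prime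
ideal `𝔭` of the ring of integers), then `p` is a quadratic residue modulo `n`. -/
theorem stmt1 (n p : ℕ) (hn : n.Prime) (hp : p.Prime) (hnp : n ≠ p)
    (K : Type) [Field K] [NumberField K]
    (hdeg : Module.finrank ℚ K = n)
    (hsq : IsSquare (NumberField.discr K))
    (𝔭 : Ideal (𝓞 K)) (h𝔭 : 𝔭.IsPrime)
    (htot : Ideal.span {(p : 𝓞 K)} = 𝔭 ^ n) :
    IsSquare (p : ZMod n) := by
  subst hdeg
  obtain ⟨a, a_deg, a_eisenstein⟩ := exists_minpoly_isEisensteinAt hp htot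
  let L := IntermediateField.normalClosure ℚ K (AlgebraicClosure ℚ)
  have : IsNormalClosure ℚ K L :=
    Algebra.IsAlgebraic.isNormalClosure_normalClosure fun _ => IsAlgClosed.splits _
  have : NumberField L := { }
  have : IsGalois ℚ L := { to_normal := IsNormalClosure.normal (K := K) }
  exact isSquare_zmod_finrank_of_isEisensteinAt (IsNormalClosure.splits (L := L)) hn hp hnp hsq
    a_deg a_eisenstein
end

section
/- The polynomial x³² − x³¹ + 2x³⁰ + x²⁹ + 8x²⁸ − 7x²⁷ + 21x²⁶ − 9x²⁵ − 12x²⁴ + 248x²³ − 548x²² − 65x²¹ + 2653x²⁰ − 4879x¹⁹ + 2564x¹⁸ + 4198x¹⁷ − 7780x¹⁶ + 3593x¹⁵ + 4020x¹⁴ − 7014x¹³ + 4935x¹² − 2042x¹¹ + 929x¹⁰ − 787x⁹ + 695x⁸ − 215x⁷ + 70x⁶ − 42x⁵ + 15x⁴ − 15x³ + 2x² + x + 1 is irreducible over ℚ, and the degree 32 number field K it defines has |D_K| = 21³², and the Galois group of its Galois closure has order 672 and contains a subgroup of index 2 isomorphic to SL₂(𝔽₇). -/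
open Polynomial IntermediateField
open scoped MatrixGroups Classical NumberField

noncomputable section

abbrev Qbar := AlgebraicClosure ℚ

/-- The discriminant of a (finite-dimensional) subfield of `Qbar`. -/
def absd (K : IntermediateField ℚ Qbar) : ℤ :=
  if h : FiniteDimensional ℚ K then
    haveI := h
    haveI : NumberField K := ⟨⟩
    NumberField.discr K
  else 0

def f3 : ℚ[X] :=
  X ^ 32 - X ^ 31 + 2 * X ^ 30 + X ^ 29 + 8 * X ^ 28 - 7 * X ^ 27 + 21 * X ^ 26 - 9 * X ^ 25 -
    12 * X ^ 24 + 248 * X ^ 23 - 548 * X ^ 22 - 65 * X ^ 21 + 2653 * X ^ 20 - 4879 * X ^ 19 +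
    2564 * X ^ 18 + 4198 * X ^ 17 - 7780 * X ^ 16 + 3593 * X ^ 15 + 4020 * X ^ 14 -
    7014 * X ^ 13 + 4935 * X ^ 12 - 2042 * X ^ 11 + 929 * X ^ 10 - 787 * X ^ 9 + 695 * X ^ 8 -
    215 * X ^ 7 + 70 * X ^ 6 - 42 * X ^ 5 + 15 * X ^ 4 - 15 * X ^ 3 + 2 * X ^ 2 + X + 1

/-!
A root `α` of `f3` generates `K = ℚ(t, w, y)`, where `t` is a root of an octic, `w` is a primitive
cube root of unity and `y ^ 2` is an explicit element of `ℚ(t, w)`. The eight values of `t` are the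
points of the projective line over `𝔽₇`. For fixed `w`, the sixteen values of `y` are indexed by the
nonzero vectors of `𝔽₇²` up to squares, in such a way that `21 * y_u * y_v` is a universal
polynomial in `t_u`, `t_v`, `w` times the quadratic character of `det (u, v)`. Hence the stabilizer
of `w`, of index two in the Galois group, preserves the quadratic characters of determinants, which
forces it to act through `SL₂(𝔽₇)`. The labelling itself is found by reducing all roots modulo
`8893`, a prime at which `f3` splits completely.

Conversely, modulo `2` the square of a Frobenius element fixes one point of the projective line and
permutes the other seven cyclically, so its sixth power is a transvection; by transitivity there is
a second transvection with another fixed point, and the two generate `SL₂(𝔽₇)`.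

For the discriminant, `ℚ(t, w) / ℚ(t)` and `K / ℚ(t, w)` are unramified, being generated by roots of
monic integral quadratics of unit discriminant, so `|D_K|` is the fourth power of the discriminant
of `ℚ(t)`. The latter is `21 ^ 8`: multiply the conductor of `ℤ[θ]`, for a suitable integer `θ`, by
the different, and use that `ℤ[θ]` is maximal at `3` and `7`.
-/

namespace SL2Seven

/-! ### Computation in towers of monogenic extensions -/

/-- The operations of a computable presentation of a commutative ring; elements of `R` need not
be normal forms, so equality is tested through `isZero`. -/
structure RingOps (R : Type) where
  zero : R
  one : R
  add : R → R → R
  neg : R → R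
  mul : R → R → R
  isZero : R → Bool

/-- `φ` interprets the presentation `o` in the ring `S`. -/
structure Interprets {R : Type} {S : Type*} [CommRing S] (o : RingOps R) (φ : R → S) : Prop where
  zero : φ o.zero = 0
  one : φ o.one = 1
  add : ∀ a b, φ (o.add a b) = φ a + φ b
  neg : ∀ a, φ (o.neg a) = -φ a
  mul : ∀ a b, φ (o.mul a b) = φ a * φ b
  isZero : ∀ a, o.isZero a = true → φ a = 0

/-- The value at `x` of the polynomial with coefficients `φ c` for `c` in the list, constant
coefficient first. -/
def horner {R : Type} {S : Type*} [CommRing S] (φ : R → S) (x : S) (l : List R) : S :=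
  l.foldr (fun c v => φ c + x * v) 0

section horner
variable {R : Type} {S : Type*} [CommRing S] (φ : R → S) (x : S)

theorem horner_nil : horner φ x [] = 0 := rfl

theorem horner_cons (c : R) (l : List R) : horner φ x (c :: l) = φ c + x * horner φ x l := rfl

theorem horner_singleton (c : R) : horner φ x [c] = φ c := by
  rw [horner_cons, horner_nil, mul_zero, add_zero]

theorem horner_map {R' : Type} (g : R' → R) (l : List R') :
    horner φ x (l.map g) = horner (fun r => φ (g r)) x l := by
  induction l with
  | nil => rfl
  | cons c l ih => rw [List.map_cons, horner_cons, horner_cons, ih]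

theorem map_horner {S' : Type*} [CommRing S'] (g : S →+* S') (l : List R) :
    g (horner φ x l) = horner (fun r => g (φ r)) (g x) l := by
  induction l with
  | nil => exact map_zero g
  | cons c l ih => rw [horner_cons, horner_cons, map_add, map_mul, ih]

theorem horner_eq_take_add_drop (n : ℕ) (l : List R) :
    horner φ x l = horner φ x (l.take n) + x ^ n * horner φ x (l.drop n) := by
  induction l generalizing n with
  | nil => simp [horner_nil]
  | cons c l ih =>
    cases n with
    | zero => simp [horner_nil]
    | succ n =>
      rw [List.take_succ_cons, List.drop_succ_cons, horner_cons, horner_cons, ih n]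
      ring

end horner

namespace RingOps
variable {R : Type} (o : RingOps R)

/-- The operations of a concrete ring with decidable equality. They are taken from the notation
classes, whose instances reduce faster in the kernel than the projections of a `CommRing`. -/
def standard (R : Type) [Zero R] [One R] [Add R] [Neg R] [Mul R] [DecidableEq R] : RingOps R where
  zero := 0
  one := 1
  add a b := a + b
  neg a := -a
  mul a b := a * b
  isZero a := decide (a = 0)

/-- Equality test. -/
def eq (a b : R) : Bool := o.isZero (o.add a (o.neg b))

/-- Powers `a ^ n`. -/
def pow (a : R) (n : ℕ) : R := n.rec o.one fun _ b => o.mul a b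

/-- The iterated power `a ^ (p ^ n)`. -/
def frobenius (p : ℕ) (a : R) (n : ℕ) : R := n.rec a fun _ b => o.pow b p

/-- Horner evaluation at `a` of a list of coefficients, which are mapped to the presentation
by `c`. -/
def eval {C : Type} (c : C → R) (a : R) (l : List C) : R :=
  l.foldr (fun x v => o.add (c x) (o.mul a v)) o.zero

/-- Addition of polynomials given by their lists of coefficients. -/
def listAdd : List R → List R → List R
  | [], b => b
  | a, [] => a
  | x :: a, y :: b => o.add x y :: listAdd a b

/-- Multiplication of polynomials given by their lists of coefficients. -/
def listMul : List R → List R → List R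
  | [], _ => []
  | x :: a, b => o.listAdd (b.map (o.mul x)) (o.zero :: listMul a b)

/-- One reduction step modulo `Xⁿ - low`: `Xⁿ` times the coefficients from the `n`-th on is
replaced by `low` times these. -/
def listReduce (n : ℕ) (low l : List R) : List R :=
  o.listAdd (l.take n) (o.listMul (l.drop n) low)

/-- Multiplication of polynomials modulo `Xⁿ - low`. -/
def listMulMod (n : ℕ) (low : List R) : List R → List R → List R
  | [], _ => []
  | x :: a, b => o.listAdd (b.map (o.mul x)) (o.listReduce n low (o.zero :: listMulMod n low a b))

/-- The ring `R[X]/(Xⁿ - low)`, its elements being represented by lists of coefficients. -/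
def adjoinRoot (n : ℕ) (low : List R) : RingOps (List R) where
  zero := []
  one := [o.one]
  add := o.listAdd
  neg := List.map o.neg
  mul := o.listMulMod n low
  isZero l := l.all o.isZero

end RingOps

namespace Interprets
variable {R : Type} {S : Type*} [CommRing S] {o : RingOps R} {φ : R → S}

theorem standard {R : Type} [CommRing R] [DecidableEq R] (f : R →+* S) :
    Interprets (RingOps.standard R) f where
  zero := map_zero f
  one := map_one f
  add := map_add f
  neg := map_neg f
  mul := map_mul f
  isZero a ha := by rw [of_decide_eq_true ha, map_zero]

theorem eq (h : Interprets o φ) {a b : R} (hab : o.eq a b = true) : φ a = φ b := by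
  have := h.isZero _ hab
  rwa [h.add, h.neg, ← sub_eq_add_neg, sub_eq_zero] at this

theorem pow (h : Interprets o φ) (a : R) (n : ℕ) : φ (o.pow a n) = φ a ^ n := by
  induction n with
  | zero => rw [pow_zero]; exact h.one
  | succ n ih => rw [pow_succ', ← ih]; exact h.mul _ _

theorem frobenius (h : Interprets o φ) (p : ℕ) (a : R) (n : ℕ) :
    φ (o.frobenius p a n) = φ a ^ p ^ n := by
  induction n with
  | zero => rw [pow_zero, pow_one]; rfl
  | succ n ih => rw [pow_succ, pow_mul, ← ih]; exact h.pow _ _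

theorem eval (h : Interprets o φ) {C : Type} (c : C → R) (a : R) (l : List C) :
    φ (o.eval c a l) = horner (fun x => φ (c x)) (φ a) l := by
  induction l with
  | nil => exact h.zero
  | cons x l ih => rw [horner_cons, ← ih, ← h.mul, ← h.add]; rfl

theorem listAdd (h : Interprets o φ) (x : S) (a b : List R) :
    horner φ x (o.listAdd a b) = horner φ x a + horner φ x b := by
  fun_induction RingOps.listAdd o a b with
  | case1 b => rw [horner_nil, zero_add]
  | case2 a => rw [horner_nil, add_zero]
  | case3 u a v b ih => rw [horner_cons, horner_cons, horner_cons, h.add, ih]; ring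

theorem listSMul (h : Interprets o φ) (x : S) (c : R) (a : List R) :
    horner φ x (a.map (o.mul c)) = φ c * horner φ x a := by
  induction a with
  | nil => rw [List.map_nil, horner_nil, mul_zero]
  | cons u a ih => rw [List.map_cons, horner_cons, horner_cons, h.mul, ih]; ring

theorem listMul (h : Interprets o φ) (x : S) (a b : List R) :
    horner φ x (o.listMul a b) = horner φ x a * horner φ x b := by
  induction a with
  | nil => rw [RingOps.listMul, horner_nil, zero_mul]
  | cons u a ih =>
    rw [RingOps.listMul, h.listAdd, h.listSMul, horner_cons, horner_cons, h.zero, ih]; ring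

variable {x : S} {n : ℕ} {low : List R}

theorem listReduce (h : Interprets o φ) (hx : x ^ n = horner φ x low) (a : List R) :
    horner φ x (o.listReduce n low a) = horner φ x a := by
  rw [RingOps.listReduce, h.listAdd, h.listMul, horner_eq_take_add_drop φ x n a, hx, mul_comm]

theorem listMulMod (h : Interprets o φ) (hx : x ^ n = horner φ x low) (a b : List R) :
    horner φ x (o.listMulMod n low a b) = horner φ x a * horner φ x b := by
  induction a with
  | nil => rw [RingOps.listMulMod, horner_nil, zero_mul]
  | cons u a ih =>
    rw [RingOps.listMulMod, h.listAdd, h.listSMul, h.listReduce hx, horner_cons, horner_cons,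
      h.zero, ih]
    ring

theorem adjoinRoot (h : Interprets o φ) (hx : x ^ n = horner φ x low) :
    Interprets (o.adjoinRoot n low) (horner φ x) where
  zero := rfl
  one := (horner_singleton φ x _).trans h.one
  add := h.listAdd x
  neg a := by
    induction a with
    | nil => exact neg_zero.symm
    | cons u a ih =>
      have ih : horner φ x (a.map o.neg) = -horner φ x a := ih
      change horner φ x (o.neg u :: a.map o.neg) = _
      rw [horner_cons, horner_cons, h.neg, ih]
      ring
  mul := h.listMulMod hx
  isZero a ha := by
    induction a with
    | nil => rfl
    | cons u a ih =>
      obtain ⟨hu, ha⟩ : o.isZero u = true ∧ a.all o.isZero = true := by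
        simpa only [RingOps.adjoinRoot, List.all_cons, Bool.and_eq_true] using ha
      rw [horner_cons, h.isZero u hu, ih ha, mul_zero, add_zero]

end Interprets

/-! ### The fields `ℚ(t) ⊂ ℚ(t, w) ⊂ ℚ(t, w, y)` -/

section Evaluation
variable {S : Type*} [CommRing S]

/-- The value at `t` of a polynomial with integer coefficients, constant coefficient first. -/
def ev₁ (t : S) (l : List ℤ) : S := horner (Int.castRingHom S) t l

/-- The value at `(t, w)` of a polynomial in two variables; the outer list is indexed by the
powers of `w`. -/
def ev₂ (t w : S) (l : List (List ℤ)) : S := horner (ev₁ t) w l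

/-- The value at `(t, w, y)` of a polynomial in three variables; the outermost list is indexed by
the powers of `y`. -/
def ev₃ (t w y : S) (l : List (List (List ℤ))) : S := horner (ev₂ t w) y l

theorem ev₁_singleton (t : S) (n : ℤ) : ev₁ t [n] = n := horner_singleton _ _ _

theorem ev₂_singleton (t w : S) (l : List ℤ) : ev₂ t w [l] = ev₁ t l := horner_singleton _ _ _

theorem ev₃_singleton (t w y : S) (l : List (List ℤ)) : ev₃ t w y [l] = ev₂ t w l :=
  horner_singleton _ _ _

variable {S' : Type*} [CommRing S'] (g : S →+* S')

theorem map_ev₁ (t : S) (l : List ℤ) : g (ev₁ t l) = ev₁ (g t) l := by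
  rw [ev₁, map_horner]
  exact congrArg (horner · _ l) (funext fun n => map_intCast g n)

theorem map_ev₂ (t w : S) (l : List (List ℤ)) : g (ev₂ t w l) = ev₂ (g t) (g w) l := by
  rw [ev₂, map_horner, ev₂, funext (map_ev₁ g t)]

theorem map_ev₃ (t w y : S) (l : List (List (List ℤ))) :
    g (ev₃ t w y l) = ev₃ (g t) (g w) (g y) l := by
  rw [ev₃, map_horner, ev₃, funext (map_ev₂ g t w)]

end Evaluation

/-- The minimal polynomial of `t`. -/
def octic : List ℤ := [1, 5, 7, -7, 7, -7, 7, -4, 1]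

/-- The square of `y`, as a polynomial in `t` and `w`. -/
def radicand : List (List ℤ) :=
  [[40, 82, -96, 92, -85, 75, -41, 10], [17, 110, -111, 103, -98, 87, -46, 11]]

/-- `18 α` as a polynomial in `t`, `w` and `y`, for a root `α` of `f3`. -/
def eighteenAlpha : List (List (List ℤ)) :=
  [[[-10, -37, 30, -32, 37, -33, 17, -4], [-20, -83, 78, -73, 74, -66, 34, -8]],
   [[-4, -14, 19, -13, 15, -14, 6, -1], [-5, -10, 20, -17, 15, -16, 9, -2]]]

/-- A square root of `441 * radicand(t, w) * radicand(t', w)` as a polynomial in `t`, `t'` and `w`,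
for different roots `t`, `t'` of the octic. -/
def pairRoot : List (List (List ℤ)) :=
  [[[389, 1100, -939, 907, -965, 897, -484, 110],
    [-414, -1386, 1920, -2340, 2292, -1914, 954, -228],
    [183, 486, -1488, 1830, -1626, 1041, -423, 84], [-167, -146, 1050, -1186, 710, -255, 55, -14],
    [225, 210, -858, 690, -282, 123, -75, 30], [-141, -192, 471, -309, 129, -123, 84, -30],
    [44, 68, -141, 85, -59, 66, -43, 14]],
   [[277, 778, -738, 872, -1030, 927, -491, 112], [42, -270, 612, -630, 240, -90, -24, 6],
    [-24, 150, -369, -105, 447, -414, 207, -36], [-178, -514, 189, 289, -461, 144, 5, -22],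
    [294, 726, -345, 3, -93, 438, -309, 90], [-159, -396, 138, -36, 132, -303, 177, -48],
    [43, 112, -57, 47, -73, 105, -56, 16]]]

/-- A square root of the product of the two conjugates of the radicand over `ℚ(t)`, divided
by `√-3 = 1 + 2 w`. -/
def conjRoot : List ℤ := [-13, -28, 30, -35, 37, -33, 17, -4]

/-- The coefficients of `f3`, constant coefficient first. -/
def f3Coeffs : List ℤ :=
  [1, 1, 2, -15, 15, -42, 70, -215, 695, -787, 929, -2042, 4935, -7014, 4020, 3593, -7780, 4198,
   2564, -4879, 2653, -65, -548, 248, -12, -9, 21, -7, 8, 1, 2, -1, 1]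

/-- `ℤ[t]`. -/
def opsT : RingOps (List ℤ) := (RingOps.standard ℤ).adjoinRoot 8 [-1, -5, -7, 7, -7, 7, -7, 4]

/-- `ℤ[t, w]`. -/
def opsTW : RingOps (List (List ℤ)) := opsT.adjoinRoot 2 [[-1], [-1]]

/-- `ℤ[t, w, y]`. -/
def opsTWY : RingOps (List (List (List ℤ))) := opsTW.adjoinRoot 2 [radicand]

/-- `t' ^ 7` as a polynomial in `t` and lower powers of `t'`, for two different roots of the octic;
the relation is the divided difference of the octic. -/
def secondRootPowSeven : List (List ℤ) :=
  [[-5, -7, 7, -7, 7, -7, 4, -1], [-7, 7, -7, 7, -7, 4, -1], [7, -7, 7, -7, 4, -1],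
   [-7, 7, -7, 4, -1], [7, -7, 4, -1], [-7, 4, -1], [4, -1]]

/-- `ℤ[t, t']` for two different roots of the octic. -/
def opsTT : RingOps (List (List ℤ)) := opsT.adjoinRoot 7 secondRootPowSeven

/-- `ℤ[t, t', w]` for two different roots of the octic. -/
def opsTTW : RingOps (List (List (List ℤ))) := opsTT.adjoinRoot 2 [[[-1]], [[-1]]]

section Interpretation
variable {S : Type*} [CommRing S] {t t' w y : S}

theorem interprets_opsT (ht : ev₁ t octic = 0) : Interprets opsT (ev₁ t) := by
  refine (Interprets.standard (Int.castRingHom S)).adjoinRoot ?_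
  simp only [ev₁, octic, horner_cons, horner_nil, eq_intCast] at ht ⊢
  push_cast at ht ⊢
  linear_combination ht

theorem interprets_opsTW (ht : ev₁ t octic = 0) (hw : w ^ 2 + w + 1 = 0) :
    Interprets opsTW (ev₂ t w) := by
  refine (interprets_opsT ht).adjoinRoot ?_
  simp only [horner_cons, horner_nil, ev₁_singleton]
  push_cast
  linear_combination hw

theorem pow_seven_of_ne [IsDomain S] (ht : ev₁ t octic = 0) (ht' : ev₁ t' octic = 0)
    (hne : t ≠ t') : t' ^ 7 = ev₂ t t' secondRootPowSeven := by
  refine mul_left_cancel₀ (sub_ne_zero.2 hne.symm) (sub_eq_zero.1 ?_)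
  simp only [ev₂, ev₁, octic, secondRootPowSeven, horner_cons, horner_nil, eq_intCast]
    at ht ht' ⊢
  push_cast at ht ht' ⊢
  linear_combination ht' - ht

theorem interprets_opsTT [IsDomain S] (ht : ev₁ t octic = 0) (ht' : ev₁ t' octic = 0)
    (hne : t ≠ t') : Interprets opsTT (ev₂ t t') :=
  (interprets_opsT ht).adjoinRoot (pow_seven_of_ne ht ht' hne)

theorem interprets_opsTTW [IsDomain S] (ht : ev₁ t octic = 0) (ht' : ev₁ t' octic = 0)
    (hne : t ≠ t') (hw : w ^ 2 + w + 1 = 0) : Interprets opsTTW (ev₃ t t' w) := by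
  refine (interprets_opsTT ht ht' hne).adjoinRoot ?_
  simp only [horner_cons, horner_nil, ev₂_singleton, ev₁_singleton]
  push_cast
  linear_combination hw

theorem pairRoot_cert :
    opsTTW.eq (opsTTW.mul pairRoot pairRoot)
      (opsTTW.mul [[[441]]] (opsTTW.mul (radicand.map (List.map fun n => [n]))
        (radicand.map fun l => [l]))) = true := by decide +kernel

theorem ev₃_pairRoot_sq [IsDomain S] (ht : ev₁ t octic = 0) (ht' : ev₁ t' octic = 0)
    (hne : t ≠ t') (hw : w ^ 2 + w + 1 = 0) :
    ev₃ t t' w pairRoot ^ 2 = 441 * (ev₂ t' w radicand * ev₂ t w radicand) := by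
  have h := interprets_opsTTW ht ht' hne hw
  have first : ev₃ t t' w (radicand.map fun l => [l]) = ev₂ t w radicand := by
    rw [ev₃, horner_map, ev₂, funext (ev₂_singleton t t')]
  have second : ev₃ t t' w (radicand.map (List.map fun n => [n])) = ev₂ t' w radicand := by
    have inner (l : List ℤ) : ev₂ t t' (l.map fun n => [n]) = ev₁ t' l := by
      rw [ev₂, horner_map, funext (ev₁_singleton t)]
      rfl
    rw [ev₃, horner_map, funext inner, ev₂]
  have key := h.eq pairRoot_cert
  rw [h.mul, h.mul, h.mul, first, second, ev₃_singleton, ev₂_singleton, ev₁_singleton] at key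
  rw [sq, key, Int.cast_ofNat]

theorem conjRoot_cert :
    opsTW.eq (opsTW.mul radicand (opsTW.eval (fun l => [l]) [[-1], [-1]] radicand))
      [opsT.mul [-3] (opsT.mul conjRoot conjRoot)] = true := by decide +kernel

theorem radicand_mul_conj (ht : ev₁ t octic = 0) (hw : w ^ 2 + w + 1 = 0) :
    ev₂ t w radicand * ev₂ t (-1 - w) radicand = ((1 + 2 * w) * ev₁ t conjRoot) ^ 2 := by
  have h := interprets_opsTW ht hw
  have hT := interprets_opsT ht
  have conj : ev₂ t w [[-1], [-1]] = -1 - w := by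
    simp only [ev₂, horner_cons, horner_nil, ev₁_singleton]
    push_cast
    ring
  have key := h.eq conjRoot_cert
  rw [h.mul, h.eval, conj, funext (ev₂_singleton t w), ← ev₂, ev₂_singleton, hT.mul, hT.mul,
    ev₁_singleton] at key
  rw [key]
  push_cast
  linear_combination -4 * ev₁ t conjRoot ^ 2 * hw

end Interpretation

/-- `t`, `w`, `y` satisfy the equations that define the tower
`ℚ ⊂ ℚ(t) ⊂ ℚ(t, w) ⊂ ℚ(t, w, y)`, whose top field is generated by a root of `f3`. -/
structure IsTriple {S : Type*} [CommRing S] (t w y : S) : Prop where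
  octic_root : ev₁ t octic = 0
  omega : w ^ 2 + w + 1 = 0
  sq_eq : y ^ 2 = ev₂ t w radicand

namespace IsTriple
variable {S : Type*} [CommRing S] {t w y : S}

theorem map {S' : Type*} [CommRing S'] (h : IsTriple t w y) (g : S →+* S') :
    IsTriple (g t) (g w) (g y) where
  octic_root := by rw [← map_ev₁, h.octic_root, map_zero]
  omega := by rw [← map_pow, ← map_add, ← map_one g, ← map_add, h.omega, map_zero]
  sq_eq := by rw [← map_pow, h.sq_eq, map_ev₂]

theorem of_map {S' : Type*} [CommRing S'] (g : S →+* S') (hg : Function.Injective g)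
    (h : IsTriple (g t) (g w) (g y)) : IsTriple t w y where
  octic_root := hg (by rw [map_ev₁, h.octic_root, map_zero])
  omega := hg (by rw [map_add, map_add, map_pow, map_one, h.omega, map_zero])
  sq_eq := hg (by rw [map_pow, h.sq_eq, map_ev₂])

theorem interprets_opsTWY (h : IsTriple t w y) : Interprets opsTWY (ev₃ t w y) :=
  (interprets_opsTW h.octic_root h.omega).adjoinRoot (h.sq_eq.trans (horner_singleton _ _ _).symm)

end IsTriple

/-- The polynomial `dⁿ⁻¹ p(X / d)`, where `n` is the number of coefficients of `p`. -/
def dilate (d : ℤ) : List ℤ → List ℤ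
  | [] => []
  | c :: l => c * d ^ l.length :: dilate d l

theorem mul_ev₁_dilate {S : Type*} [CommRing S] (d : ℤ) (x : S) (l : List ℤ) :
    d * ev₁ (d * x) (dilate d l) = d ^ l.length * ev₁ x l := by
  induction l with
  | nil => simp only [dilate, ev₁, horner_nil, mul_zero]
  | cons c l ih =>
    simp only [ev₁, dilate, horner_cons, eq_intCast, List.length_cons] at ih ⊢
    push_cast
    linear_combination (d * x) * ih

theorem aeval_f3 {L : Type*} [Field L] [Algebra ℚ L] (a : L) : aeval a f3 = ev₁ a f3Coeffs := by
  simp only [f3, map_add, map_sub, map_mul, map_pow, aeval_X, map_ofNat, map_one, ev₁, horner_cons,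
    horner_nil, f3Coeffs, eq_intCast]
  push_cast
  ring

theorem f3_eighteenAlpha_cert :
    opsTWY.isZero (opsTWY.eval (fun n => [[[n]]]) eighteenAlpha (dilate 18 f3Coeffs))
      = true := by decide +kernel

theorem IsTriple.aeval_f3_eq_zero {L : Type*} [Field L] [Algebra ℚ L] {t w y a : L}
    (h : IsTriple t w y) (ha : 18 * a = ev₃ t w y eighteenAlpha) : aeval a f3 = 0 := by
  have : CharZero L := algebraRat.charZero L
  have hK := h.interprets_opsTWY
  have key := hK.isZero _ f3_eighteenAlpha_cert
  rw [hK.eval, ← ha] at key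
  simp only [ev₃_singleton, ev₂_singleton, ev₁_singleton] at key
  change ev₁ (18 * a) (dilate 18 f3Coeffs) = 0 at key
  have scaled := mul_ev₁_dilate 18 a f3Coeffs
  rw [Int.cast_ofNat, key, mul_zero] at scaled
  rw [aeval_f3]
  exact (mul_eq_zero.1 scaled.symm).resolve_left (pow_ne_zero _ (by norm_num))

/-! ### The special linear group of the plane over `ℤ/p` -/

section Generation
open Matrix.SpecialLinearGroup

theorem transvection_pow {ι R : Type*} [DecidableEq ι] [Fintype ι] [CommRing R] {i j : ι}
    (hij : i ≠ j) (b : R) (n : ℕ) : transvection hij b ^ n = transvection hij (n * b) := by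
  induction n with
  | zero => rw [pow_zero, Nat.cast_zero, zero_mul, transvection_coeff_zero]
  | succ n ih => rw [pow_succ, ih, ← transvection_add, Nat.cast_succ, add_one_mul]

theorem eq_transvection_of_smul_single {R : Type*} [CommRing R] {i j : Fin 2} (hij : i ≠ j)
    {M : SL(2, R)} (hM : M • (Pi.single i 1 : Fin 2 → R) = Pi.single i 1) :
    M = transvection hij (M i j) := by
  have column (k : Fin 2) : M k i = (Pi.single i 1 : Fin 2 → R) k := by
    rw [← hM, Matrix.SpecialLinearGroup.smul_def, Matrix.smul_eq_mulVec, Matrix.mulVec_single_one]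
    rfl
  have det := M.det_coe
  rw [Matrix.det_fin_two] at det
  fin_cases i <;> fin_cases j <;> first | exact absurd rfl hij | skip
  all_goals
    have h0 := column 0
    have h1 := column 1
    simp at h0 h1 det
    simp [h0, h1] at det
    ext a b
    fin_cases a <;> fin_cases b <;> simp [transvection_coe, h0, h1, det]

variable {p : ℕ} [Fact p.Prime] {H : Subgroup SL(2, ZMod p)}

theorem transvection_mem_of_mem {i j : Fin 2} (hij : i ≠ j) {b : ZMod p} (hb : b ≠ 0)
    (h : transvection hij b ∈ H) (c : ZMod p) : transvection hij c ∈ H := by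
  have hc : transvection hij b ^ (c / b).val = transvection hij c := by
    rw [transvection_pow, ZMod.natCast_zmod_val, div_mul_cancel₀ c hb]
  exact hc ▸ pow_mem h _

theorem eq_top_of_fixes_axes
    (h : ∀ i : Fin 2, ∃ M ∈ H, M ≠ 1 ∧ M • (Pi.single i 1 : Fin 2 → ZMod p) = Pi.single i 1) :
    H = ⊤ := by
  refine Subgroup.eq_top_iff' H |>.2 fun M => Matrix.SL2.transvection_induction (· ∈ H)
    (fun i j hij c => ?_) (fun _ _ => mul_mem) M
  obtain ⟨A, hA, hA1, hfix⟩ := h i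
  have hAt := eq_transvection_of_smul_single hij hfix
  refine transvection_mem_of_mem hij (fun h0 => hA1 ?_) (hAt ▸ hA) c
  rw [hAt, h0, transvection_coeff_zero]

end Generation

section Determinant
variable {R : Type*} [CommRing R]

/-- The determinant of the matrix with columns `u` and `v`. -/
def det₂ (u v : Fin 2 → R) : R := u 0 * v 1 - u 1 * v 0

theorem det₂_smul_left (s : R) (u v : Fin 2 → R) :
    det₂ (s • u) v = s * det₂ u v := by
  simp only [det₂, Pi.smul_apply, smul_eq_mul]; ring

theorem det₂_smul_right (s : R) (u v : Fin 2 → R) :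
    det₂ u (s • v) = s * det₂ u v := by
  simp only [det₂, Pi.smul_apply, smul_eq_mul]; ring

theorem det₂_zero_left (v : Fin 2 → R) : det₂ 0 v = 0 := by
  simp only [det₂, Pi.zero_apply, zero_mul, sub_zero]

theorem det₂_zero_right (u : Fin 2 → R) : det₂ u 0 = 0 := by
  simp only [det₂, Pi.zero_apply, mul_zero, sub_zero]

theorem SL2_smul_apply (M : SL(2, R)) (v : Fin 2 → R) (i : Fin 2) :
    (M • v) i = M i 0 * v 0 + M i 1 * v 1 := by
  rw [Matrix.SpecialLinearGroup.smul_def, Matrix.smul_eq_mulVec, Matrix.mulVec,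
    dotProduct, Fin.sum_univ_two]

theorem det₂_SL2_smul (M : SL(2, R)) (u v : Fin 2 → R) :
    det₂ (M • u) (M • v) = det₂ u v := by
  have det := M.det_coe
  rw [Matrix.det_fin_two] at det
  simp only [det₂, SL2_smul_apply]
  linear_combination (u 0 * v 1 - u 1 * v 0) * det

theorem exists_SL2_smul_single {u v : Fin 2 → R} (h : det₂ u v = 1) :
    ∃ P : SL(2, R), P • Pi.single 0 1 = u ∧ P • Pi.single 1 1 = v := by
  let P : SL(2, R) := ⟨!![u 0, v 0; u 1, v 1], by
    rw [Matrix.det_fin_two_of, ← h, det₂, mul_comm (v 0)]⟩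
  have columns (i : Fin 2) : P i 0 = u i ∧ P i 1 = v i := by fin_cases i <;> exact ⟨rfl, rfl⟩
  exact ⟨P, funext fun i => by simp [SL2_smul_apply, columns],
    funext fun i => by simp [SL2_smul_apply, columns]⟩

end Determinant

theorem eq_top_of_fixes_independent {p : ℕ} [Fact p.Prime] {H : Subgroup SL(2, ZMod p)}
    {u v : Fin 2 → ZMod p} (huv : det₂ u v ≠ 0) {A B : SL(2, ZMod p)} (hA : A ∈ H) (hA1 : A ≠ 1)
    (hAu : A • u = u) (hB : B ∈ H) (hB1 : B ≠ 1) (hBv : B • v = v) : H = ⊤ := by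
  obtain ⟨P, hPu, hPv⟩ := exists_SL2_smul_single (u := u) (v := (det₂ u v)⁻¹ • v)
    (by rw [det₂_smul_right, inv_mul_cancel₀ huv])
  have conj_mem {M} (hM : M ∈ H) : P⁻¹ * M * P ∈ H.comap (MulAut.conj P).toMonoidHom := by
    simpa [mul_assoc] using hM
  have conj_ne {M} (hM : M ≠ 1) : P⁻¹ * M * P ≠ 1 := fun h => hM <| by
    rwa [mul_assoc, inv_mul_eq_one, eq_comm, mul_eq_right] at h
  have conj_fix {M : SL(2, ZMod p)} {e : Fin 2 → ZMod p} (hM : M • P • e = P • e) :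
      (P⁻¹ * M * P) • e = e := by
    rw [mul_smul, mul_smul, hM, inv_smul_smul]
  have top : H.comap (MulAut.conj P).toMonoidHom = ⊤ := by
    refine eq_top_of_fixes_axes fun i => ?_
    fin_cases i
    · exact ⟨_, conj_mem hA, conj_ne hA1, conj_fix (by rw [Fin.zero_eta, hPu, hAu])⟩
    · exact ⟨_, conj_mem hB, conj_ne hB1,
        conj_fix (by rw [Fin.mk_one, hPv, smul_comm, hBv])⟩
  refine (Subgroup.eq_top_iff' H).2 fun M => ?_
  have hM : P⁻¹ * M * P ∈ H.comap (MulAut.conj P).toMonoidHom := top ▸ Subgroup.mem_top _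
  simpa [mul_assoc] using hM

/-! ### Maps preserving the quadratic character of the determinant -/

instance : Fact (Nat.Prime 7) := ⟨by norm_num⟩

local notation "χ" => quadraticChar (ZMod 7)

/-- Equality up to multiplication by a nonzero square of `ℤ/7`. -/
def SqEquiv (u v : Fin 2 → ZMod 7) : Prop := ∃ s : ZMod 7, χ s = 1 ∧ u = s • v

namespace SqEquiv
variable {u v x : Fin 2 → ZMod 7}

theorem symm : SqEquiv u v → SqEquiv v u := by
  rintro ⟨s, hs, rfl⟩
  have hs0 : s ≠ 0 := by rintro rfl; simp at hs
  refine ⟨s⁻¹, ?_, (inv_smul_smul₀ hs0 v).symm⟩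
  have := map_mul χ s s⁻¹
  rwa [mul_inv_cancel₀ hs0, map_one, hs, one_mul, eq_comm] at this

theorem smul (M : SL(2, ZMod 7)) : SqEquiv u v → SqEquiv (M • u) (M • v) := by
  rintro ⟨s, hs, rfl⟩
  exact ⟨s, hs, smul_comm M s v⟩

theorem chi_det₂ (h : SqEquiv u v) : χ (det₂ x u) = χ (det₂ x v) := by
  obtain ⟨s, hs, rfl⟩ := h
  rw [det₂_smul_right, map_mul, hs, one_mul]

end SqEquiv

theorem exists_SL2_sqEquiv {u v x : Fin 2 → ZMod 7} (huv : χ (det₂ u v) = 1)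
    (hux : χ (det₂ u x) = 1) (hxv : χ (det₂ x v) = 1) :
    ∃ M : SL(2, ZMod 7), SqEquiv u (M • ![1, 0]) ∧ SqEquiv v (M • ![0, 1]) ∧
      SqEquiv x (M • ![1, 1]) := by
  have cube : ∀ d b c : ZMod 7, χ d = 1 → χ b = 1 → χ c = 1 →
      let k := c * b / d
      χ (k * (c / d)) = 1 ∧ χ (k * (b / d)) = 1 ∧ χ k = 1 ∧
        k * (c / d) * (k * (b / d) * d) = 1 ∧ d ≠ 0 := by decide +kernel
  obtain ⟨hku, hkv, hk, hdet, hd⟩ := cube _ _ _ huv hux hxv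
  set k := det₂ x v * det₂ u x / det₂ u v
  obtain ⟨M, hMu, hMv⟩ := exists_SL2_smul_single
    (u := (k * (det₂ x v / det₂ u v)) • u) (v := (k * (det₂ u x / det₂ u v)) • v)
    (by rw [det₂_smul_left, det₂_smul_right, hdet])
  have e₀ : ![1, 0] = (Pi.single 0 1 : Fin 2 → ZMod 7) := by decide
  have e₁ : ![0, 1] = (Pi.single 1 1 : Fin 2 → ZMod 7) := by decide
  have e₂ : ![1, 1] = (Pi.single 0 1 + Pi.single 1 1 : Fin 2 → ZMod 7) := by decide
  refine ⟨M, .symm ⟨_, hku, e₀ ▸ hMu⟩, .symm ⟨_, hkv, e₁ ▸ hMv⟩, .symm ⟨k, hk, ?_⟩⟩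
  rw [e₂, smul_add, hMu, hMv]
  ext i
  simp only [Pi.add_apply, Pi.smul_apply, smul_eq_mul]
  have cramer : det₂ x v * u i + det₂ u x * v i = det₂ u v * x i := by
    fin_cases i <;> simp only [det₂, Fin.zero_eta, Fin.mk_one] <;> ring
  rw [← mul_div_cancel_left₀ (x i) hd, ← cramer]
  ring

theorem sqEquiv_of_three_chi_det₂ : ∀ u : Fin 2 → ZMod 7,
    (∀ b ∈ [![1, 0], ![0, 1], ![1, 1]], χ (det₂ u b) = χ (det₂ ![1, 2] b)) →
      ∃ s : ZMod 7, χ s = 1 ∧ u = s • ![1, 2] := by decide +kernel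

theorem sqEquiv_of_four_chi_det₂ : ∀ u v : Fin 2 → ZMod 7,
    (∀ b ∈ [![1, 0], ![0, 1], ![1, 1], ![1, 2]], χ (det₂ u b) = χ (det₂ v b)) →
      ∃ s : ZMod 7, χ s = 1 ∧ u = s • v := by decide +kernel

theorem exists_SL2_forall_sqEquiv {f : (Fin 2 → ZMod 7) → Fin 2 → ZMod 7}
    (hf : ∀ u v, χ (det₂ (f u) (f v)) = χ (det₂ u v)) :
    ∃ M : SL(2, ZMod 7), ∀ v, SqEquiv (f v) (M • v) := by
  obtain ⟨M, h₀, h₁, h₂⟩ := exists_SL2_sqEquiv (u := f ![1, 0]) (v := f ![0, 1]) (x := f ![1, 1])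
    (by rw [hf]; decide +kernel) (by rw [hf]; decide +kernel) (by rw [hf]; decide +kernel)
  have agree (v b) (hb : SqEquiv (f b) (M • b)) : χ (det₂ (M⁻¹ • f v) b) = χ (det₂ v b) := by
    rw [← hf v b, hb.chi_det₂, ← det₂_SL2_smul M, smul_inv_smul]
  have transfer {v} (h : SqEquiv (M⁻¹ • f v) v) : SqEquiv (f v) (M • v) := by
    simpa only [smul_inv_smul] using h.smul M
  have h₃ : SqEquiv (f ![1, 2]) (M • ![1, 2]) := by
    refine transfer (sqEquiv_of_three_chi_det₂ _ fun b hb => agree _ b ?_)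
    simp only [List.mem_cons, List.not_mem_nil, or_false] at hb
    rcases hb with rfl | rfl | rfl <;> assumption
  refine ⟨M, fun v => transfer (sqEquiv_of_four_chi_det₂ _ v fun b hb => agree v b ?_)⟩
  simp only [List.mem_cons, List.not_mem_nil, or_false] at hb
  rcases hb with rfl | rfl | rfl | rfl <;> assumption

theorem eq_one_of_sqEquiv {M : SL(2, ZMod 7)} (h : ∀ v, SqEquiv (M • v) v) : M = 1 := by
  obtain ⟨r, -, h₀⟩ := h ![1, 0]
  obtain ⟨s, -, h₁⟩ := h ![0, 1]
  obtain ⟨k, hk, h₂⟩ := h ![1, 1]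
  have entry {v x : Fin 2 → ZMod 7} (hv : M • v = x) (i : Fin 2) :
      M i 0 * v 0 + M i 1 * v 1 = x i := by rw [← SL2_smul_apply, hv]
  have h10 : M 1 0 = 0 := by simpa using entry h₀ 1
  have h01 : M 0 1 = 0 := by simpa using entry h₁ 0
  have h00 : M 0 0 = k := by simpa [h01] using entry h₂ 0
  have h11 : M 1 1 = k := by simpa [h10] using entry h₂ 1
  have det := M.det_coe
  rw [Matrix.det_fin_two, h00, h01, h11, zero_mul, sub_zero] at det
  have scalar : ∀ k : ZMod 7, χ k = 1 → k * k = 1 → k = 1 := by decide +kernel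
  ext i j
  fin_cases i <;> fin_cases j <;> simp [h00, h01, h10, h11, scalar k hk det]

theorem exists_hom_SL2 {G O : Type*} [Group G] [MulAction G O] {X : (Fin 2 → ZMod 7) → O}
    (hX : ∀ u v, X u = X v ↔ SqEquiv u v) (closed : ∀ (g : G) u, ∃ u', g • X u = X u')
    (compat : ∀ (g : G) u v u' v', g • X u = X u' → g • X v = X v' →
      χ (det₂ u' v') = χ (det₂ u v)) :
    ∃ Ψ : G →* SL(2, ZMod 7), ∀ g v, g • X v = X (Ψ g • v) := by
  choose f hf using closed
  choose Ψ hΨ using fun g => exists_SL2_forall_sqEquiv (f := f g)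
    fun u v => compat g u v _ _ (hf g u) (hf g v)
  have act (g v) : g • X v = X (Ψ g • v) := (hf g v).trans ((hX _ _).2 (hΨ g v))
  refine ⟨MonoidHom.mk' Ψ fun g h => ?_, act⟩
  rw [← inv_mul_eq_one]
  refine eq_one_of_sqEquiv fun v => ?_
  have key : SqEquiv (Ψ (g * h) • v) (Ψ g • Ψ h • v) := by
    rw [← hX, ← act, ← act, ← act, mul_smul]
  simpa only [mul_smul, inv_smul_smul] using (key.smul (Ψ (g * h))⁻¹).symm

theorem exists_index_two_mulEquiv {G Γ S : Type*} [Group G] [Group Γ] [Group S] {ρ : G →* Γ}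
    (hρ : Function.Surjective ρ) {Ω : Subgroup G} (hΩ : Ω.index = 2) (hker : ρ.ker ≤ Ω)
    {Ψ : Ω →* S} (hΨ : Function.Surjective Ψ) (hΨρ : ∀ g : Ω, Ψ g = 1 ↔ ρ g = 1) :
    ∃ H : Subgroup Γ, H.index = 2 ∧ Nonempty (H ≃* S) := by
  have index : (Ω.map ρ).index = 2 := by
    rw [Subgroup.index_map, MonoidHom.range_eq_top.2 hρ, sup_eq_left.2 hker, hΩ,
      Subgroup.index_top, mul_one]
  have ker_eq : (ρ.subgroupMap Ω).ker = Ψ.ker := by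
    ext g
    rw [MonoidHom.mem_ker, MonoidHom.mem_ker, hΨρ, Subtype.ext_iff]
    rfl
  exact ⟨_, index,
    ⟨(QuotientGroup.quotientKerEquivOfSurjective _ (ρ.subgroupMap_surjective Ω)).symm.trans
      ((QuotientGroup.quotientMulEquivOfEq ker_eq).trans
        (QuotientGroup.quotientKerEquivOfSurjective Ψ hΨ))⟩⟩

/-! ### Labelling the triples by their residues modulo 8893 -/


instance : Fact (Nat.Prime 8893) := ⟨by norm_num⟩

/-- The roots of the octic modulo 8893. Their order is compatible with `point`. -/
def tRes : Fin 8 → ZMod 8893 := ![551, 783, 3667, 6465, 3342, 4239, 1450, 6186]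

/-- The primitive cube roots of unity modulo 8893. -/
def wRes (i : Bool) : ZMod 8893 := if i then 249 else -250

/-- A square root of `radicand(tRes a, wRes i)`. The signs are compatible with `point`. -/
def yRes (a : Fin 8) (i : Bool) : ZMod 8893 :=
  if i then ![1081, 8301, 8820, 6455, 5154, 6788, 1157, 8041] a
  else ![1153, 4970, 8751, 8782, 2735, 1939, 3665, 6929] a

/-- Representatives of the points of the projective line over `ℤ/7`. -/
def point : Fin 8 → Fin 2 → ZMod 7 :=
  ![![1, 0], ![0, 1], ![1, 1], ![2, 1], ![3, 1], ![4, 1], ![5, 1], ![6, 1]]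

theorem det₂_point_ne_zero : ∀ a b, a ≠ b → det₂ (point a) (point b) ≠ 0 := by decide +kernel

/-- The index of the point of the projective line spanned by `v`; the value at `v = 0` is junk. -/
def slot (v : Fin 2 → ZMod 7) : Fin 8 :=
  if v 1 = 0 then 0 else Fin.ofNat 8 (1 + (v 0 / v 1).val)

/-- The scalar by which `v` differs from the chosen representative of its point. -/
def scale (v : Fin 2 → ZMod 7) : ZMod 7 := if v 1 = 0 then v 0 else v 1

/-- Labels `(a, i, s)` for the triples `(t a, w i, s * y a i)`. -/
abbrev Label := Fin 8 × Bool × ℤˣ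

theorem scale_smul_point_slot : ∀ v, scale v • point (slot v) = v := by decide +kernel

theorem scale_smul_point : ∀ (c : ZMod 7) a, scale (c • point a) = c := by decide +kernel

theorem slot_smul_point : ∀ (c : ZMod 7) a, c ≠ 0 → slot (c • point a) = a := by decide +kernel

theorem tRes_injective : Function.Injective tRes := by
  unfold Function.Injective
  decide +kernel

theorem wRes_injective : Function.Injective wRes := by
  unfold Function.Injective
  decide +kernel

theorem yRes_ne_zero : ∀ a i, 2 * yRes a i ≠ 0 := by decide +kernel

theorem residue_cert : ∀ a i, ev₁ (tRes a) octic = 0 ∧ wRes i ^ 2 + wRes i + 1 = 0 ∧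
    yRes a i ^ 2 = ev₂ (tRes a) (wRes i) radicand := by decide +kernel

theorem pairRes_cert : ∀ a b, a ≠ b → 21 * (yRes a true * yRes b true) =
    ((χ (det₂ (point a) (point b)) : ℤ) : ZMod 8893) *
      ev₃ (tRes a) (tRes b) (wRes true) pairRoot := by decide +kernel

theorem conjRes_cert : ∀ a, yRes a true * yRes a false =
    (1 + 2 * wRes true) * ev₁ (tRes a) conjRoot := by decide +kernel

theorem alphaRes_injective : Function.Injective fun x : Label =>
    ev₃ (tRes x.1) (wRes x.2.1) ((x.2.2 : ℤ) * yRes x.1 x.2.1) eighteenAlpha := by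
  unfold Function.Injective
  decide +kernel

theorem vectorRes_cert : ∀ u v,
    ((χ (scale u) : ℤ) : ZMod 8893) * yRes (slot u) true =
      ((χ (scale v) : ℤ) : ZMod 8893) * yRes (slot v) true →
      ∃ s : ZMod 7, χ s = 1 ∧ u = s • v := by decide +kernel

section SquareRoots
variable {O k : Type*} [CommRing O] [Field k] {q : O →+* k}

theorem eq_of_sq_eq_sq_of_map_eq [IsDomain O] {x y : O} (h : x ^ 2 = y ^ 2) (hq : q x = q y)
    (hy : 2 * q y ≠ 0) : x = y := by
  refine (sq_eq_sq_iff_eq_or_eq_neg.1 h).resolve_right fun hneg => hy ?_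
  rw [hneg, map_neg] at hq
  linear_combination -hq

theorem exists_sq_eq_map_eq {c : O} {r : k} (hc : ∃ x, x ^ 2 = c) (hr : q c = r ^ 2) :
    ∃ x, x ^ 2 = c ∧ q x = r := by
  obtain ⟨x, rfl⟩ := hc
  rw [map_pow, sq_eq_sq_iff_eq_or_eq_neg] at hr
  rcases hr with hr | hr
  · exact ⟨x, rfl, hr⟩
  · exact ⟨-x, neg_sq x, by rw [map_neg, hr, neg_neg]⟩

end SquareRoots

/-- All solutions of the equations of a triple in `O`, with prescribed reductions
modulo a prime over 8893. -/
structure Labelling {O k : Type*} [CommRing O] [Field k] [Algebra (ZMod 8893) k]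
    (q : O →+* k) where
  t : Fin 8 → O
  w : Bool → O
  y : Fin 8 → Bool → O
  octic_eq_prod (x : O) : ev₁ x octic = ∏ a, (x - t a)
  isTriple (a : Fin 8) (i : Bool) : IsTriple (t a) (w i) (y a i)
  map_t (a : Fin 8) : q (t a) = algebraMap _ k (tRes a)
  map_w (i : Bool) : q (w i) = algebraMap _ k (wRes i)
  map_y (a : Fin 8) (i : Bool) : q (y a i) = algebraMap _ k (yRes a i)

namespace Labelling
variable {O k : Type*} [CommRing O] [Field k] [Algebra (ZMod 8893) k] {q : O →+* k}

theorem exists_octic_roots {z : Fin 8 → O} (hz : ∀ x, ev₁ x octic = ∏ a, (x - z a)) (q : O →+* k) :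
    ∃ t : Fin 8 → O, (∀ x, ev₁ x octic = ∏ a, (x - t a)) ∧
      ∀ a, q (t a) = algebraMap _ k (tRes a) := by
  have lift (a : Fin 8) : ∃ b, q (z b) = algebraMap _ k (tRes a) := by
    have zero : q (ev₁ ((tRes a).val : O) octic) = 0 := by
      rw [map_ev₁, map_natCast, ← map_natCast (algebraMap (ZMod 8893) k), ZMod.natCast_zmod_val,
        ← map_ev₁, (residue_cert a true).1, map_zero]
    rw [hz, map_prod, Finset.prod_eq_zero_iff] at zero
    obtain ⟨b, -, hb⟩ := zero
    rw [map_sub, map_natCast, ← map_natCast (algebraMap (ZMod 8893) k), ZMod.natCast_zmod_val] at hb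
    exact ⟨b, (sub_eq_zero.1 hb).symm⟩
  choose σ hσ using lift
  have injective : Function.Injective σ := fun a b hab =>
    tRes_injective ((algebraMap _ k).injective (by rw [← hσ, ← hσ, hab]))
  let e := Equiv.ofBijective σ (Finite.injective_iff_bijective.1 injective)
  exact ⟨z ∘ σ, fun x => (hz x).trans (Equiv.prod_comp e fun b => x - z b).symm, hσ⟩

theorem exists_cube_roots {w : O} (hw : w ^ 2 + w + 1 = 0) (q : O →+* k) :
    ∃ ω : Bool → O, (∀ i, ω i ^ 2 + ω i + 1 = 0) ∧ ∀ i, q (ω i) = algebraMap _ k (wRes i) := by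
  have sum : wRes true + wRes false = -1 := by decide +kernel
  have prod : wRes true * wRes false = 1 := by decide +kernel
  replace sum := congrArg (algebraMap _ k) sum
  replace prod := congrArg (algebraMap _ k) prod
  rw [map_add, map_neg, map_one] at sum
  rw [map_mul, map_one] at prod
  have reduced := congrArg q hw
  rw [map_add, map_add, map_pow, map_one, map_zero] at reduced
  have map_conj : q (-1 - w) = -1 - q w := by rw [map_sub, map_neg, map_one]
  have conj : (-1 - w) ^ 2 + (-1 - w) + 1 = 0 := by linear_combination hw
  have split : (q w - algebraMap _ k (wRes true)) * (q w - algebraMap _ k (wRes false)) = 0 := by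
    linear_combination reduced - q w * sum + prod
  rcases mul_eq_zero.1 split with h | h <;> rw [sub_eq_zero] at h
  · refine ⟨fun i => if i then w else -1 - w, ?_, ?_⟩ <;> rintro (_ | _)
    exacts [conj, hw, map_conj.trans (by linear_combination -h - sum), h]
  · refine ⟨fun i => if i then -1 - w else w, ?_, ?_⟩ <;> rintro (_ | _)
    exacts [hw, conj, h, map_conj.trans (by linear_combination -h - sum)]

theorem nonempty {z : Fin 8 → O} (hz : ∀ x, ev₁ x octic = ∏ a, (x - z a))
    {w : O} (hw : w ^ 2 + w + 1 = 0)
    (hy : ∀ t w : O, ev₁ t octic = 0 → w ^ 2 + w + 1 = 0 → ∃ y, y ^ 2 = ev₂ t w radicand) :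
    Nonempty (Labelling q) := by
  obtain ⟨t, octic_eq_prod, map_t⟩ := exists_octic_roots hz q
  obtain ⟨ω, omega, map_w⟩ := exists_cube_roots hw q
  have octic_root (a : Fin 8) : ev₁ (t a) octic = 0 := by
    rw [octic_eq_prod]
    exact Finset.prod_eq_zero (Finset.mem_univ a) (sub_self _)
  choose y sq_eq map_y using fun a i =>
    exists_sq_eq_map_eq (q := q) (r := algebraMap _ k (yRes a i))
      (hy (t a) (ω i) (octic_root a) (omega i))
    (by rw [map_ev₂, map_t, map_w, ← map_pow, (residue_cert a i).2.2, map_ev₂])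
  exact ⟨⟨t, ω, y, octic_eq_prod, fun a i => ⟨octic_root a, omega i, sq_eq a i⟩,
    map_t, map_w, map_y⟩⟩

variable (D : Labelling q)

theorem t_injective : Function.Injective D.t := fun a b hab =>
  tRes_injective ((algebraMap _ k).injective (by rw [← D.map_t, ← D.map_t, hab]))

theorem w_injective : Function.Injective D.w := fun i j hij =>
  wRes_injective ((algebraMap _ k).injective (by rw [← D.map_w, ← D.map_w, hij]))

theorem two_mul_map_y_ne_zero (a : Fin 8) (i : Bool) : 2 * q (D.y a i) ≠ 0 := by
  rw [D.map_y, ← map_ofNat (algebraMap (ZMod 8893) k), ← map_mul]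
  exact (_root_.map_ne_zero _).2 (yRes_ne_zero a i)

theorem y_ne_zero (a : Fin 8) (i : Bool) : D.y a i ≠ 0 := fun h =>
  D.two_mul_map_y_ne_zero a i (by rw [h, map_zero, mul_zero])

/-- The third entry of the triple with a given label. -/
def yAt (x : Label) : O := (x.2.2 : ℤ) * D.y x.1 x.2.1

/-- `18 α` for the root `α` of `f3` attached to a label. -/
def alpha (x : Label) : O := ev₃ (D.t x.1) (D.w x.2.1) (D.yAt x) eighteenAlpha

theorem isTriple_yAt (x : Label) : IsTriple (D.t x.1) (D.w x.2.1) (D.yAt x) where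
  octic_root := (D.isTriple x.1 x.2.1).octic_root
  omega := (D.isTriple x.1 x.2.1).omega
  sq_eq := by
    rw [yAt, mul_pow, (D.isTriple x.1 x.2.1).sq_eq, ← Int.cast_pow, ← Units.val_pow_eq_pow_val,
      Int.units_sq, Units.val_one, Int.cast_one, one_mul]

theorem alpha_injective : Function.Injective D.alpha := by
  have map_alpha (x : Label) : q (D.alpha x) = algebraMap _ k
      (ev₃ (tRes x.1) (wRes x.2.1) ((x.2.2 : ℤ) * yRes x.1 x.2.1) eighteenAlpha) := by
    rw [alpha, map_ev₃, map_ev₃, D.map_t, D.map_w, yAt, map_mul, map_mul, D.map_y, map_intCast,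
      map_intCast]
  exact fun x y hxy => alphaRes_injective ((algebraMap _ k).injective
    (by rw [← map_alpha, ← map_alpha, hxy]))

variable [IsDomain O]

theorem exists_eq_t {x : O} (hx : ev₁ x octic = 0) : ∃ a, x = D.t a := by
  rw [D.octic_eq_prod, Finset.prod_eq_zero_iff] at hx
  obtain ⟨a, -, ha⟩ := hx
  exact ⟨a, sub_eq_zero.1 ha⟩

theorem exists_eq_w {x : O} (hx : x ^ 2 + x + 1 = 0) : ∃ i, x = D.w i := by
  by_contra! hne
  have omega (i : Bool) := (D.isTriple 0 i).omega
  have other (i : Bool) : x + D.w i + 1 = 0 :=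
    mul_left_cancel₀ (sub_ne_zero.2 (hne i)) (by linear_combination hx - omega i)
  have collision : D.w true = D.w false := by linear_combination other true - other false
  exact absurd (D.w_injective collision) (by decide)

theorem exists_label {t w y : O} (h : IsTriple t w y) :
    ∃ x : Label, t = D.t x.1 ∧ w = D.w x.2.1 ∧ y = D.yAt x := by
  obtain ⟨a, rfl⟩ := D.exists_eq_t h.octic_root
  obtain ⟨i, rfl⟩ := D.exists_eq_w h.omega
  rcases sq_eq_sq_iff_eq_or_eq_neg.1 (h.sq_eq.trans (D.isTriple a i).sq_eq.symm) with hy | hy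
  · exact ⟨(a, i, 1), rfl, rfl, by simp [yAt, hy]⟩
  · exact ⟨(a, i, -1), rfl, rfl, by simp [yAt, hy]⟩

theorem y_true_mul_y_false (a : Fin 8) :
    D.y a true * D.y a false = (1 + 2 * D.w true) * ev₁ (D.t a) conjRoot := by
  have conj : D.w false = -1 - D.w true := by
    obtain ⟨i, hi⟩ := D.exists_eq_w (x := -1 - D.w true)
      (by linear_combination (D.isTriple a true).omega)
    cases i
    · exact hi.symm
    · exfalso
      have reduced := congrArg q hi
      rw [map_sub, map_neg, map_one, D.map_w, ← map_one (algebraMap (ZMod 8893) k), ← map_neg,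
        ← map_sub] at reduced
      exact absurd ((algebraMap (ZMod 8893) k).injective reduced) (by decide +kernel)
  have h := D.isTriple a
  have residue : q (D.y a true * D.y a false) =
      q ((1 + 2 * D.w true) * ev₁ (D.t a) conjRoot) := by
    simp only [map_mul, map_add, map_one, map_ofNat, map_ev₁, D.map_y, D.map_w, D.map_t]
    rw [← map_mul, conjRes_cert, map_mul, map_add, map_mul, map_one, map_ofNat, map_ev₁]
  refine eq_of_sq_eq_sq_of_map_eq ?_ residue ?_
  · rw [← radicand_mul_conj (h true).octic_root (h true).omega, mul_pow, (h true).sq_eq,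
      (h false).sq_eq, conj]
  · rw [← residue, map_mul, ← mul_assoc]
    exact mul_ne_zero (D.two_mul_map_y_ne_zero a true)
      (right_ne_zero_of_mul (D.two_mul_map_y_ne_zero a false))

theorem y_mul_y {a b : Fin 8} (hab : a ≠ b) : 21 * (D.y a true * D.y b true) =
    ((χ (det₂ (point a) (point b)) : ℤ) : O) * ev₃ (D.t a) (D.t b) (D.w true) pairRoot := by
  have ha := D.isTriple a true
  have hb := D.isTriple b true
  have residue : q (21 * (D.y a true * D.y b true)) =
      q (((χ (det₂ (point a) (point b)) : ℤ) : O) *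
        ev₃ (D.t a) (D.t b) (D.w true) pairRoot) := by
    simp only [map_mul, map_ofNat, map_intCast, map_ev₃, D.map_y, D.map_w, D.map_t]
    rw [← map_mul, ← map_ofNat (algebraMap (ZMod 8893) k), ← map_mul, pairRes_cert a b hab,
      map_mul, map_intCast, map_ev₃]
  refine eq_of_sq_eq_sq_of_map_eq ?_ residue ?_
  · rw [mul_pow _ (ev₃ _ _ _ _), ← Int.cast_pow, quadraticChar_sq_one (det₂_point_ne_zero a b hab),
      ev₃_pairRoot_sq ha.octic_root hb.octic_root (D.t_injective.ne hab) ha.omega, ← ha.sq_eq,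
      ← hb.sq_eq]
    push_cast
    ring
  · have h21 : (21 : k) ≠ 0 := by
      rw [← map_ofNat (algebraMap (ZMod 8893) k)]
      exact (_root_.map_ne_zero _).2 (by decide +kernel)
    rw [← residue, map_mul, map_mul, map_ofNat, mul_left_comm, ← mul_assoc 2]
    exact mul_ne_zero h21 (mul_ne_zero (D.two_mul_map_y_ne_zero a true)
      (right_ne_zero_of_mul (D.two_mul_map_y_ne_zero b true)))

end Labelling

/-! ### The action of the Galois group on the labels -/

namespace Labelling
variable {O k : Type*} [CommRing O] [Field k] [Algebra (ZMod 8893) k] {q : O →+* k}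
  (D : Labelling q) {G : Type*} [Group G] [MulSemiringAction G O]

/-- The function on the plane over `ℤ/7` that sends `s • point a` to `± y a true`, with the sign
given by the quadratic character of `s`. -/
def vec (v : Fin 2 → ZMod 7) : O := (χ (scale v) : ℤ) * D.y (slot v) true

theorem chi_intCast_unit : ∀ s : ℤˣ, χ ((s : ℤ) : ZMod 7) = s := by decide +kernel

theorem point_ne_zero_and_slot_point : ∀ a, point a ≠ 0 ∧ slot (point a) = a := by decide +kernel

theorem vec_smul_point (c : ZMod 7) (a : Fin 8) :
    D.vec (c • point a) = (χ c : ℤ) * D.y a true := by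
  rw [vec, scale_smul_point]
  by_cases hc : c = 0
  · rw [hc, MulChar.map_zero, Int.cast_zero, zero_mul, zero_mul]
  · rw [slot_smul_point c a hc]

theorem vec_point (a : Fin 8) : D.vec (point a) = D.y a true := by
  rw [← one_smul (ZMod 7) (point a), vec_smul_point, map_one, Int.cast_one, one_mul]

theorem vec_eq_vec_iff (u v : Fin 2 → ZMod 7) : D.vec u = D.vec v ↔ SqEquiv u v := by
  constructor
  · intro h
    have residue := congrArg q h
    simp only [vec, map_mul, map_intCast, D.map_y] at residue
    refine vectorRes_cert u v ((algebraMap _ k).injective ?_)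
    simpa only [map_mul, map_intCast] using residue
  · rintro ⟨s, hs, rfl⟩
    rw [← scale_smul_point_slot v, smul_smul, vec_smul_point, vec_smul_point, map_mul, hs, one_mul]

theorem slot_eq_of_sqEquiv {u v : Fin 2 → ZMod 7} (h : SqEquiv u v) : slot u = slot v := by
  have key : ∀ (s : ZMod 7) v, χ s = 1 → slot (s • v) = slot v := by decide +kernel
  obtain ⟨s, hs, rfl⟩ := h
  exact key s v hs

theorem smul_intCast_mul (g : G) (n : ℤ) (x : O) : g • ((n : O) * x) = n * g • x := by
  rw [smul_mul', ← MulSemiringAction.toRingHom_apply, map_intCast]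

theorem chi_eq_of_intCast_eq (q : O →+* k) {x y : ZMod 7} (h : ((χ x : ℤ) : O) = (χ y : ℤ)) :
    χ x = χ y := by
  have key : ∀ x y : ZMod 7, ((χ x : ℤ) : ZMod 8893) = (χ y : ℤ) → χ x = χ y := by decide +kernel
  refine key x y ((algebraMap _ k).injective ?_)
  rw [map_intCast, map_intCast, ← map_intCast q, h, map_intCast]

theorem eq_zero_of_smul_vec_zero {g : MulAction.stabilizer G (D.w true)} {v : Fin 2 → ZMod 7}
    (h : g • D.vec 0 = D.vec v) : v = 0 := by
  have vec_zero : D.vec 0 = 0 := by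
    rw [← zero_smul (ZMod 7) (point 0), vec_smul_point, MulChar.map_zero, Int.cast_zero, zero_mul]
  rw [vec_zero, smul_zero, ← vec_zero, eq_comm, vec_eq_vec_iff] at h
  obtain ⟨s, -, hs⟩ := h
  rw [hs, smul_zero]

variable [IsDomain O]

theorem exists_smul_label (g : G) (x : Label) : ∃ x' : Label, g • D.t x.1 = D.t x'.1 ∧
    g • D.w x.2.1 = D.w x'.2.1 ∧ g • D.yAt x = D.yAt x' ∧ g • D.alpha x = D.alpha x' := by
  obtain ⟨x', ht, hw, hy⟩ :=
    D.exists_label ((D.isTriple_yAt x).map (MulSemiringAction.toRingHom G O g))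
  refine ⟨x', ht, hw, hy, ?_⟩
  rw [← MulSemiringAction.toRingHom_apply, alpha, map_ev₃, ht, hw, hy, alpha]

theorem exists_smul_vec (g : MulAction.stabilizer G (D.w true)) (v : Fin 2 → ZMod 7) :
    ∃ v', g • D.vec v = D.vec v' ∧ (v ≠ 0 → g • D.t (slot v) = D.t (slot v')) := by
  obtain ⟨⟨b, i, s⟩, ht, hw, hy, -⟩ := D.exists_smul_label (g : G) (slot v, true, 1)
  obtain rfl : i = true := (D.w_injective (g.2.symm.trans hw)).symm
  have nonzero : ∀ (s : ℤˣ) v, v ≠ 0 → scale v * ((s : ℤ) : ZMod 7) ≠ 0 := by decide +kernel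
  refine ⟨(scale v * ((s : ℤ) : ZMod 7)) • point b, ?_, fun hv => ?_⟩
  · rw [yAt, yAt, Units.val_one, Int.cast_one, one_mul] at hy
    rw [vec_smul_point, map_mul, chi_intCast_unit, vec, Subgroup.smul_def, smul_intCast_mul, hy,
      Int.cast_mul, mul_assoc]
  · rw [slot_smul_point _ b (nonzero s v hv)]
    exact ht

theorem smul_t_slot {g : MulAction.stabilizer G (D.w true)} {v v' : Fin 2 → ZMod 7}
    (h : g • D.vec v = D.vec v') (hv : v ≠ 0) : g • D.t (slot v) = D.t (slot v') := by
  obtain ⟨u, hu, ht⟩ := D.exists_smul_vec g v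
  rw [ht hv, slot_eq_of_sqEquiv ((D.vec_eq_vec_iff u v').1 (hu.symm.trans h))]

theorem smul_t_of_smul_y {g : MulAction.stabilizer G (D.w true)} {a : Fin 8}
    (h : g • D.y a true = D.y a true) : g • D.t a = D.t a := by
  obtain ⟨hpoint, hslot⟩ := point_ne_zero_and_slot_point a
  rw [← vec_point] at h
  simpa only [hslot] using D.smul_t_slot h hpoint

theorem vec_mul_vec {u v : Fin 2 → ZMod 7} (h : slot u ≠ slot v) : 21 * (D.vec u * D.vec v) =
    ((χ (det₂ u v) : ℤ) : O) * ev₃ (D.t (slot u)) (D.t (slot v)) (D.w true) pairRoot := by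
  have det : det₂ u v = scale u * (scale v * det₂ (point (slot u)) (point (slot v))) := by
    rw [← det₂_smul_right, ← det₂_smul_left, scale_smul_point_slot, scale_smul_point_slot]
  rw [det, map_mul, map_mul, vec, vec]
  push_cast
  linear_combination (χ (scale u) : O) * (χ (scale v) : O) * D.y_mul_y h

theorem ev₃_pairRoot_ne_zero {a b : Fin 8} (hab : a ≠ b) :
    ev₃ (D.t a) (D.t b) (D.w true) pairRoot ≠ 0 := by
  have h21 : (21 : O) ≠ 0 := fun h => by
    have residue := congrArg q h
    rw [map_ofNat, map_zero, ← map_ofNat (algebraMap (ZMod 8893) k)] at residue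
    exact (_root_.map_ne_zero _).2 (by decide +kernel) residue
  exact right_ne_zero_of_mul (D.y_mul_y hab ▸
    mul_ne_zero h21 (mul_ne_zero (D.y_ne_zero a true) (D.y_ne_zero b true)))

theorem chi_det₂_of_smul_vec {g : MulAction.stabilizer G (D.w true)}
    {u v u' v' : Fin 2 → ZMod 7} (hu : g • D.vec u = D.vec u') (hv : g • D.vec v = D.vec v') :
    χ (det₂ u' v') = χ (det₂ u v) := by
  rcases eq_or_ne u 0 with rfl | hu0
  · rw [eq_zero_of_smul_vec_zero D hu, det₂_zero_left, det₂_zero_left]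
  rcases eq_or_ne v 0 with rfl | hv0
  · rw [eq_zero_of_smul_vec_zero D hv, det₂_zero_right, det₂_zero_right]
  have htu := D.smul_t_slot hu hu0
  have htv := D.smul_t_slot hv hv0
  have dependent : ∀ u v, slot u = slot v → det₂ u v = 0 := by decide +kernel
  by_cases huv : slot u = slot v
  · rw [dependent u v huv, dependent u' v' (D.t_injective (by rw [← htu, ← htv, huv]))]
  have huv' : slot u' ≠ slot v' := fun h => huv (D.t_injective (smul_left_cancel g
    (by rw [htu, htv, h])))
  have transported := congrArg (MulSemiringAction.toRingHom G O g) (D.vec_mul_vec huv)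
  simp only [map_mul, map_ofNat, map_intCast, map_ev₃, MulSemiringAction.toRingHom_apply,
    ← Subgroup.smul_def, hu, hv, htu, htv, MulAction.mem_stabilizer_iff.1 g.2] at transported
  rw [D.vec_mul_vec huv'] at transported
  exact chi_eq_of_intCast_eq q (mul_right_cancel₀ (D.ev₃_pairRoot_ne_zero huv') transported)

theorem exists_hom (G : Type*) [Group G] [MulSemiringAction G O] :
    ∃ Ψ : MulAction.stabilizer G (D.w true) →* SL(2, ZMod 7),
      ∀ g v, g • D.vec v = D.vec (Ψ g • v) :=
  exists_hom_SL2 D.vec_eq_vec_iff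
    (fun g v => (D.exists_smul_vec g v).imp fun _ h => h.1)
    (fun _ _ _ _ _ => D.chi_det₂_of_smul_vec)

variable {D} {Ψ : MulAction.stabilizer G (D.w true) →* SL(2, ZMod 7)}

theorem smul_w (g : MulAction.stabilizer G (D.w true)) (i : Bool) : g • D.w i = D.w i := by
  obtain ⟨x, -, hw, -⟩ := D.exists_smul_label (g : G) (0, i, 1)
  have hj : x.2.1 = true ↔ i = true := by
    rw [← D.w_injective.eq_iff, ← D.w_injective.eq_iff (a := i), ← hw]
    exact ⟨fun h => smul_left_cancel (g : G) (h.trans g.2.symm), fun h => by rw [h]; exact g.2⟩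
  exact hw.trans (congrArg D.w (Bool.eq_iff_iff.2 hj))

theorem smul_y_of_smul_y_true {g : MulAction.stabilizer G (D.w true)} {a : Fin 8}
    (hy : g • D.y a true = D.y a true) (i : Bool) : g • D.y a i = D.y a i := by
  cases i
  swap
  · exact hy
  have transported := congrArg (MulSemiringAction.toRingHom G O g) (D.y_true_mul_y_false a)
  simp only [map_mul, map_add, map_one, map_ofNat, map_ev₁, MulSemiringAction.toRingHom_apply,
    ← Subgroup.smul_def, hy, D.smul_t_of_smul_y hy, smul_w] at transported
  rw [← y_true_mul_y_false] at transported
  exact mul_left_cancel₀ (D.y_ne_zero a true) transported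

theorem hom_eq_one_iff (hΨ : ∀ g v, g • D.vec v = D.vec (Ψ g • v))
    (g : MulAction.stabilizer G (D.w true)) : Ψ g = 1 ↔ ∀ x, g • D.alpha x = D.alpha x := by
  constructor
  · intro h x
    have hy (a : Fin 8) : g • D.y a true = D.y a true := by
      rw [← vec_point, hΨ, h, one_smul]
    rw [Subgroup.smul_def, ← MulSemiringAction.toRingHom_apply, alpha, yAt, map_ev₃, map_mul,
      map_intCast]
    simp only [MulSemiringAction.toRingHom_apply, ← Subgroup.smul_def, smul_w,
      D.smul_t_of_smul_y (hy _), smul_y_of_smul_y_true (hy _)]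
  · intro h
    refine eq_one_of_sqEquiv fun v => (D.vec_eq_vec_iff _ _).1 ?_
    rw [← hΨ]
    obtain ⟨x, -, -, hy, hx⟩ := D.exists_smul_label (g : G) (slot v, true, 1)
    rw [D.alpha_injective (hx.symm.trans (h _)), yAt, Units.val_one, Int.cast_one, one_mul] at hy
    rw [vec, Subgroup.smul_def, smul_intCast_mul, hy]

theorem hom_pow_six_smul_point (hΨ : ∀ g v, g • D.vec v = D.vec (Ψ g • v))
    {g : MulAction.stabilizer G (D.w true)} {a : Fin 8} (hg : g • D.t a = D.t a) :
    Ψ (g ^ 6) • point a = point a := by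
  obtain ⟨hpoint, hslot⟩ := point_ne_zero_and_slot_point a
  have slot_eq : slot (Ψ g • point a) = a := D.t_injective <| by
    rw [← D.smul_t_slot (hΨ g (point a)) hpoint, hslot, hg]
  set c := scale (Ψ g • point a)
  have eigen : Ψ g • point a = c • point a := by
    conv_lhs => rw [← scale_smul_point_slot (Ψ g • point a), slot_eq]
  have hc : c ≠ 0 := fun h => by
    rw [h, zero_smul, smul_eq_zero_iff_eq] at eigen
    exact hpoint eigen
  have pow (n : ℕ) : Ψ g ^ n • point a = c ^ n • point a := by
    induction n with
    | zero => simp only [pow_zero, one_smul]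
    | succ n ih => rw [pow_succ', mul_smul, ih, smul_comm, eigen, smul_smul, pow_succ]
  rw [map_pow, pow, ZMod.pow_card_sub_one_eq_one hc, one_smul]

end Labelling

/-! ### Surjectivity onto `SL₂(𝔽₇)` -/

theorem map_pow_smul_eq_pow {O k G : Type*} [CommRing O] [CommRing k] [Group G]
    [MulSemiringAction G O] {q : O →+* k} {σ : G} {p : ℕ} (hσ : ∀ x, q (σ • x) = q x ^ p)
    (n : ℕ) (x : O) : q (σ ^ n • x) = q x ^ p ^ n := by
  induction n generalizing x with
  | zero => rw [pow_zero, one_smul, pow_zero, pow_one]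
  | succ n ih => rw [pow_succ, mul_smul, ih, hσ, ← pow_mul, pow_succ']

/-- `s ^ 7` as a polynomial in `s`, for `s ≠ 1` a root of the octic in characteristic two. -/
def septicLow : List (ZMod 2) := [1, 0, 1, 0, 1, 0, 1]

/-- `𝔽₂[s]` for a root `s ≠ 1` of the octic. -/
def opsSeptic : RingOps (List (ZMod 2)) := (RingOps.standard (ZMod 2)).adjoinRoot 7 septicLow

theorem septic_cert :
    opsSeptic.eq (opsSeptic.mul (opsSeptic.add (opsSeptic.frobenius 2 [0, 1] 12) [0, 1])
      [0, 0, 0, 1, 1, 1, 1]) [1] = true := by decide +kernel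

section CharTwo
variable {k : Type*} [Field k] [Algebra (ZMod 2) k]

theorem two_eq_zero_of_algebra (k : Type*) [Field k] [Algebra (ZMod 2) k] : (2 : k) = 0 := by
  rw [← map_ofNat (algebraMap (ZMod 2) k), show (OfNat.ofNat 2 : ZMod 2) = 0 from rfl, map_zero]

-- The cofactor of `X - 1` is irreducible of degree 7 and 7 does not divide 12.
theorem pow_two_pow_twelve_ne {s : k} (hs : ev₁ s octic = 0) (hs1 : s ≠ 1) : s ^ 2 ^ 12 ≠ s := by
  intro fixed
  have two := two_eq_zero_of_algebra k
  have septic : s ^ 7 = horner (algebraMap (ZMod 2) k) s septicLow := by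
    refine mul_left_cancel₀ (sub_ne_zero.2 hs1) ?_
    simp only [ev₁, octic, septicLow, horner_cons, horner_nil, map_one, map_zero,
      eq_intCast] at hs ⊢
    push_cast at hs
    linear_combination hs + (s ^ 7 - 3 * (s ^ 6 - s ^ 5 + s ^ 4 - s ^ 3 + s ^ 2 + s)) * two
  have h : Interprets opsSeptic _ := (Interprets.standard (algebraMap (ZMod 2) k)).adjoinRoot septic
  have generator : horner (algebraMap (ZMod 2) k) s [0, 1] = s := by
    rw [horner_cons, horner_singleton, map_zero, map_one, zero_add, mul_one]
  have key := h.eq septic_cert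
  rw [h.mul, h.add, h.frobenius, generator, fixed, horner_singleton, map_one,
    ← two_mul, two, zero_mul, zero_mul] at key
  exact zero_ne_one key

end CharTwo

theorem ev₁_octic_intCast_ne_zero {O : Type*} [CommRing O] [CharZero O] (n : ℤ) :
    ev₁ (n : O) octic ≠ 0 := by
  have key : ∀ x : ZMod 13, ev₁ x octic ≠ 0 := by
    simp only [ev₁, octic, horner_cons, horner_nil, eq_intCast]
    decide +kernel
  intro h
  rw [← eq_intCast (Int.castRingHom O), ← map_ev₁, eq_intCast, Int.cast_eq_zero] at h
  apply key n
  rw [← eq_intCast (Int.castRingHom (ZMod 13)), ← map_ev₁, h, map_zero]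

namespace Labelling
variable {O k : Type*} [CommRing O] [Field k] [Algebra (ZMod 8893) k] {q : O →+* k}
  {D : Labelling q} {G : Type*} [Group G] [MulSemiringAction G O]
  {k₂ : Type*} [Field k₂] [Algebra (ZMod 2) k₂] {q₂ : O →+* k₂} {σ : G}

variable (D q₂) in
theorem exists_map_t_eq_one : ∃ a, q₂ (D.t a) = 1 := by
  have zero : q₂ (ev₁ 1 octic) = 0 := by
    rw [map_ev₁, map_one]
    simp only [ev₁, octic, horner_cons, horner_nil, eq_intCast]
    push_cast
    linear_combination 5 * two_eq_zero_of_algebra k₂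
  rw [D.octic_eq_prod, map_prod, Finset.prod_eq_zero_iff] at zero
  obtain ⟨a, -, ha⟩ := zero
  rw [map_sub, map_one] at ha
  exact ⟨a, (sub_eq_zero.1 ha).symm⟩

theorem pow_twelve_smul_t_ne (hσ : ∀ x, q₂ (σ • x) = q₂ x ^ 2) {a : Fin 8}
    (ha : q₂ (D.t a) ≠ 1) : σ ^ 12 • D.t a ≠ D.t a := by
  intro fixed
  have root : ev₁ (q₂ (D.t a)) octic = 0 := by
    rw [← map_ev₁, (D.isTriple a true).octic_root, map_zero]
  refine pow_two_pow_twelve_ne root ha ?_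
  rw [← map_pow_smul_eq_pow hσ, fixed]

theorem smul_w_ne (hσ : ∀ x, q₂ (σ • x) = q₂ x ^ 2) (i : Bool) : σ • D.w i ≠ D.w i := by
  intro fixed
  have frobenius := hσ (D.w i)
  have relation := congrArg q₂ (D.isTriple 0 i).omega
  simp only [map_add, map_pow, map_one, map_zero] at relation
  rw [fixed] at frobenius
  exact one_ne_zero (α := k₂)
    (by linear_combination relation + frobenius - q₂ (D.w i) * two_eq_zero_of_algebra k₂)

variable (D) in
theorem exists_smul_t_ne [CharZero O] [Algebra.IsInvariant ℤ O G] (a : Fin 8) :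
    ∃ g : G, g • D.t a ≠ D.t a := by
  by_contra! fixed
  obtain ⟨n, hn⟩ := Algebra.IsInvariant.isInvariant (A := ℤ) (D.t a) fixed
  exact ev₁_octic_intCast_ne_zero (O := O) n (by
    rw [← eq_intCast (algebraMap ℤ O), hn, (D.isTriple a true).octic_root])

variable [IsDomain O]

theorem eq_of_map_t_eq_one {a b : Fin 8} (ha : q₂ (D.t a) = 1) (hb : q₂ (D.t b) = 1) : a = b := by
  by_contra hab
  have relation := congrArg q₂ (pow_seven_of_ne (D.isTriple a true).octic_root
    (D.isTriple b true).octic_root (D.t_injective.ne hab))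
  rw [map_pow, map_ev₂, ha, hb] at relation
  simp only [ev₂, ev₁, secondRootPowSeven, horner_cons, horner_nil, eq_intCast] at relation
  push_cast at relation
  exact one_ne_zero (α := k₂) (by linear_combination relation - 6 * two_eq_zero_of_algebra k₂)

theorem smul_t_of_map_t_eq_one (hσ : ∀ x, q₂ (σ • x) = q₂ x ^ 2) {a : Fin 8}
    (ha : q₂ (D.t a) = 1) : σ • D.t a = D.t a := by
  obtain ⟨x, ht, -⟩ := D.exists_smul_label σ (a, true, 1)
  have hx : q₂ (D.t x.1) = 1 := by rw [← ht, hσ, ha, one_pow]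
  rw [ht, eq_of_map_t_eq_one hx ha]

variable (D) in
theorem exists_smul_w (g : G) (i : Bool) : ∃ j, g • D.w i = D.w j := by
  obtain ⟨x, -, hw, -⟩ := D.exists_smul_label g (0, i, 1)
  exact ⟨x.2.1, hw⟩

theorem smul_w_eq_not (hσ : ∀ x, q₂ (σ • x) = q₂ x ^ 2) (i : Bool) : σ • D.w i = D.w (!i) := by
  obtain ⟨j, hj⟩ := D.exists_smul_w σ i
  have hij : j ≠ i := fun h => smul_w_ne hσ i (by rw [hj, h])
  rw [hj, Bool.eq_not.2 hij]

theorem index_stabilizer_w (hσ : ∀ x, q₂ (σ • x) = q₂ x ^ 2) :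
    (MulAction.stabilizer G (D.w true)).index = 2 := by
  have orbit : MulAction.orbit G (D.w true) = {D.w true, D.w false} := by
    refine Set.Subset.antisymm ?_ (Set.insert_subset (MulAction.mem_orbit_self _)
      (Set.singleton_subset_iff.2 ⟨σ, smul_w_eq_not hσ true⟩))
    rintro _ ⟨g, rfl⟩
    obtain ⟨j, hj⟩ := D.exists_smul_w g true
    cases j
    exacts [Or.inr hj, Or.inl hj]
  rw [MulAction.index_stabilizer, orbit, Set.ncard_pair (D.w_injective.ne (by decide))]

theorem exists_stabilizer_smul_t_ne [CharZero O] [Algebra.IsInvariant ℤ O G]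
    (hσ : ∀ x, q₂ (σ • x) = q₂ x ^ 2) {a : Fin 8} (ha : q₂ (D.t a) = 1) :
    ∃ h : MulAction.stabilizer G (D.w true), h • D.t a ≠ D.t a := by
  obtain ⟨g, hg⟩ := D.exists_smul_t_ne (G := G) a
  by_cases hgw : g ∈ MulAction.stabilizer G (D.w true)
  · exact ⟨⟨g, hgw⟩, hg⟩
  · refine ⟨⟨g * σ, ?_⟩, ?_⟩
    · exact (Subgroup.mul_mem_iff_of_index_two (index_stabilizer_w hσ)).2
        (iff_of_false hgw (smul_w_ne hσ true))
    · rwa [Subgroup.mk_smul, mul_smul, smul_t_of_map_t_eq_one hσ ha]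

variable {Ψ : MulAction.stabilizer G (D.w true) →* SL(2, ZMod 7)}

theorem eq_of_smul_alpha_eq {g : G} {x : Label} (h : g • D.alpha x = D.alpha x) :
    g • D.t x.1 = D.t x.1 ∧ g • D.w x.2.1 = D.w x.2.1 ∧ g • D.yAt x = D.yAt x := by
  obtain ⟨x', ht, hw, hy, hx⟩ := D.exists_smul_label g x
  obtain rfl := D.alpha_injective (h.symm.trans hx)
  exact ⟨ht, hw, hy⟩

theorem hom_ne_one (hΨ : ∀ g v, g • D.vec v = D.vec (Ψ g • v))
    {g : MulAction.stabilizer G (D.w true)} {a : Fin 8} (hg : g • D.t a ≠ D.t a) : Ψ g ≠ 1 :=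
  fun h => hg (eq_of_smul_alpha_eq ((hom_eq_one_iff hΨ g).1 h (a, true, 1))).1

-- The square of the Frobenius at 2 acts on the line of one point by a scalar and moves the other
-- points in a 7-cycle, so that its sixth power is a transvection.
theorem hom_surjective [CharZero O] [Algebra.IsInvariant ℤ O G]
    (hΨ : ∀ g v, g • D.vec v = D.vec (Ψ g • v)) (hσ : ∀ x, q₂ (σ • x) = q₂ x ^ 2) :
    Function.Surjective Ψ := by
  obtain ⟨a, ha⟩ := D.exists_map_t_eq_one q₂
  have σ_sq_mem : σ ^ 2 ∈ MulAction.stabilizer G (D.w true) := by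
    rw [MulAction.mem_stabilizer_iff, sq, mul_smul, smul_w_eq_not hσ, smul_w_eq_not hσ,
      Bool.not_not]
  let δ : MulAction.stabilizer G (D.w true) := ⟨σ ^ 2, σ_sq_mem⟩
  have δ_fixes : δ • D.t a = D.t a := by
    rw [Subgroup.mk_smul, sq, mul_smul, smul_t_of_map_t_eq_one hσ ha,
      smul_t_of_map_t_eq_one hσ ha]
  have δ_moves : Ψ (δ ^ 6) ≠ 1 := by
    obtain ⟨b, hb⟩ := exists_ne a
    refine hom_ne_one hΨ (a := b) ?_
    have := pow_twelve_smul_t_ne hσ (a := b) fun h => hb (eq_of_map_t_eq_one h ha)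
    rwa [Subgroup.smul_def, Subgroup.coe_pow, ← pow_mul]
  obtain ⟨h, hh⟩ := exists_stabilizer_smul_t_ne hσ ha
  obtain ⟨x, ht, -⟩ := D.exists_smul_label (h : G) (a, true, 1)
  have conj_fixes : (h * δ * h⁻¹) • D.t x.1 = D.t x.1 := by
    rw [← ht, ← Subgroup.smul_def, mul_smul, mul_smul, inv_smul_smul, δ_fixes]
  have conj_moves : Ψ ((h * δ * h⁻¹) ^ 6) ≠ 1 := by
    rwa [conj_pow, map_mul, map_mul, map_inv, ne_eq, conj_eq_one_iff]
  refine MonoidHom.range_eq_top.1 (eq_top_of_fixes_independent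
    (det₂_point_ne_zero a x.1 fun hax => hh (by rw [Subgroup.smul_def, ht, ← hax]))
    ⟨_, rfl⟩ δ_moves (hom_pow_six_smul_point hΨ δ_fixes)
    ⟨_, rfl⟩ conj_moves (hom_pow_six_smul_point hΨ conj_fixes))

theorem exists_smul_alpha_eq_of_hom_surjective (hΨ : ∀ g v, g • D.vec v = D.vec (Ψ g • v))
    (hsurj : Function.Surjective Ψ) (a : Fin 8) (s : ℤˣ) :
    ∃ g : G, g • D.alpha (0, true, 1) = D.alpha (a, true, s) := by
  have exists_basis : ∀ v : Fin 2 → ZMod 7, v ≠ 0 → ∃ u, det₂ v u = 1 := by decide +kernel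
  have sign_ne_zero : ∀ s : ℤˣ, ((s : ℤ) : ZMod 7) ≠ 0 := by decide +kernel
  obtain ⟨u, hu⟩ := exists_basis (((s : ℤ) : ZMod 7) • point a)
    (smul_ne_zero (sign_ne_zero s) (point_ne_zero_and_slot_point a).1)
  obtain ⟨P, hP, -⟩ := exists_SL2_smul_single hu
  rw [show (Pi.single 0 1 : Fin 2 → ZMod 7) = point 0 by decide +kernel] at hP
  obtain ⟨g, rfl⟩ := hsurj P
  have hvec := hΨ g (point 0)
  rw [hP] at hvec
  have ht := D.smul_t_slot hvec (point_ne_zero_and_slot_point 0).1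
  rw [(point_ne_zero_and_slot_point 0).2, slot_smul_point _ _ (sign_ne_zero s)] at ht
  rw [vec_point, vec_smul_point, chi_intCast_unit] at hvec
  refine ⟨g, ?_⟩
  rw [← MulSemiringAction.toRingHom_apply, alpha, map_ev₃, alpha, yAt, yAt, Units.val_one,
    Int.cast_one, one_mul]
  exact congr (congr (congr (congrArg ev₃ ht) g.2) hvec) rfl

theorem exists_smul_alpha_eq (hΨ : ∀ g v, g • D.vec v = D.vec (Ψ g • v))
    (hsurj : Function.Surjective Ψ) (hσ : ∀ x, q₂ (σ • x) = q₂ x ^ 2) (x : Label) :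
    ∃ g : G, g • D.alpha (0, true, 1) = D.alpha x := by
  obtain ⟨a, i, s⟩ := x
  cases i
  · obtain ⟨⟨b, j, r⟩, -, hw, -, hx⟩ := D.exists_smul_label σ⁻¹ (a, false, s)
    obtain rfl : j = true := D.w_injective
      (hw.symm.trans (inv_smul_eq_iff.2 (smul_w_eq_not hσ true).symm))
    obtain ⟨g, hg⟩ := exists_smul_alpha_eq_of_hom_surjective hΨ hsurj b r
    exact ⟨σ * g, by rw [mul_smul, hg, ← hx, smul_inv_smul]⟩
  · exact exists_smul_alpha_eq_of_hom_surjective hΨ hsurj a s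

end Labelling

/-! ### The Galois group of `f3` -/

universe u

theorem card_SL2_zmod_seven : Nat.card SL(2, ZMod 7) = 336 := by
  rw [Nat.card_eq_fintype_card]
  decide +kernel

theorem natDegree_f3 : f3.natDegree = 32 := by
  unfold f3
  compute_degree!

theorem monic_f3 : f3.Monic := by
  unfold f3
  monicity!

theorem card_le_card_roots {F L ι : Type*} [Field F] [Field L] [Algebra F L] [Fintype ι]
    {p : F[X]} (hp : p ≠ 0) {r : ι → L} (hr : Function.Injective r)
    (hroot : ∀ i, aeval (r i) p = 0) :
    Fintype.card ι ≤ Multiset.card (p.map (algebraMap F L)).roots := by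
  rw [← Finset.card_univ, ← Finset.card_image_of_injective _ hr]
  refine (Finset.card_le_card fun z hz => ?_).trans (Multiset.toFinset_card_le _)
  obtain ⟨i, -, rfl⟩ := Finset.mem_image.1 hz
  rw [Multiset.mem_toFinset, mem_roots (Polynomial.map_ne_zero hp), IsRoot, eval_map_algebraMap]
  exact hroot i

theorem exists_frobenius (L : Type u) [Field L] [NumberField L] [IsGalois ℚ L] (p : ℕ)
    [Fact p.Prime] : ∃ (k : Type u) (_ : Field k) (_ : Algebra (ZMod p) k) (q : 𝓞 L →+* k)
      (σ : L ≃ₐ[ℚ] L), ∀ x, q (σ • x) = q x ^ p := by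
  let P : Ideal ℤ := Ideal.span {(p : ℤ)}
  have hp : Prime (p : ℤ) := Nat.prime_iff_prime_int.1 Fact.out
  have : P.IsMaximal := PrincipalIdealRing.isMaximal_of_irreducible hp.irreducible
  obtain ⟨Q, maximal, liesOver⟩ := Ideal.exists_maximal_ideal_liesOver_of_isIntegral (S := 𝓞 L) P
  have hP : P ≠ ⊥ := Ideal.span_singleton_eq_bot.not.2 hp.ne_zero
  have : Finite (𝓞 L ⧸ Q) :=
    Ideal.finiteQuotientOfFreeOfNeBot Q (Ideal.ne_bot_of_liesOver_of_ne_bot hP Q)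
  have under_eq : Q.under ℤ = P := (Ideal.over_def Q P).symm
  have card_eq : Nat.card (ℤ ⧸ Q.under ℤ) = p := by
    rw [under_eq, Nat.card_congr (Int.quotientSpanNatEquivZMod p).toEquiv, Nat.card_zmod]
  have cast_eq_zero : (p : 𝓞 L ⧸ Q) = 0 := by
    have : (p : ℤ) ∈ Q.under ℤ := under_eq ▸ Ideal.mem_span_singleton_self _
    exact_mod_cast Ideal.Quotient.eq_zero_iff_mem.2 (Ideal.mem_comap.1 this)
  have : CharP (𝓞 L ⧸ Q) p :=
    (CharP.charP_iff_prime_eq_zero Fact.out).2 cast_eq_zero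
  obtain ⟨σ, hσ⟩ := IsArithFrobAt.exists_of_isInvariant ℤ (L ≃ₐ[ℚ] L) Q
  refine ⟨𝓞 L ⧸ Q, Ideal.Quotient.field Q, ZMod.algebra _ p, Ideal.Quotient.mk Q, σ, fun x => ?_⟩
  have := hσ.mk_apply x
  rwa [card_eq] at this

namespace Labelling
variable {L k : Type*} [Field L] [Field k] [Algebra (ZMod 8893) k] {q : 𝓞 L →+* k}
  {D : Labelling q}

variable (D) in
theorem isTriple_coe (x : Label) :
    IsTriple (D.t x.1 : L) (D.w x.2.1 : L) (D.yAt x : L) :=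
  (D.isTriple_yAt x).map (algebraMap (𝓞 L) L)

variable (D) in
/-- The roots of `f3` in `L`. -/
def root (x : Label) : L := D.alpha x / 18

variable [NumberField L]

variable (D) in
theorem eighteen_mul_root (x : Label) :
    18 * D.root x = ev₃ (D.t x.1 : L) (D.w x.2.1 : L) (D.yAt x : L) eighteenAlpha := by
  rw [root, mul_div_cancel₀ _ (by norm_num : (18 : L) ≠ 0), alpha]
  exact map_ev₃ (algebraMap (𝓞 L) L) _ _ _ _

variable (D) in
theorem aeval_root (x : Label) : aeval (D.root x) f3 = 0 :=
  (D.isTriple_coe x).aeval_f3_eq_zero (D.eighteen_mul_root x)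

variable (D) in
theorem root_injective : Function.Injective D.root := fun x x' h =>
  D.alpha_injective (NumberField.RingOfIntegers.coe_injective
    ((div_left_inj' (by norm_num : (18 : L) ≠ 0)).1 h))

theorem apply_root_eq_iff (g : L ≃ₐ[ℚ] L) (x x' : Label) :
    g (D.root x) = D.root x' ↔ g • D.alpha x = D.alpha x' := by
  rw [root, root, map_div₀, map_ofNat, div_left_inj' (by norm_num : (18 : L) ≠ 0),
    NumberField.RingOfIntegers.ext_iff]
  rfl

theorem splits_f3 (D : Labelling q) : (f3.map (algebraMap ℚ L)).Splits := by
  rw [splits_iff_card_roots]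
  refine le_antisymm (card_roots' _) ?_
  rw [natDegree_map, natDegree_f3]
  exact card_le_card_roots monic_f3.ne_zero D.root_injective D.aeval_root

variable (D) in
theorem exists_root_eq {z : L} (hz : aeval z f3 = 0) : ∃ x, D.root x = z := by
  by_contra! h
  have injective : Function.Injective (fun o : Option Label => o.elim z D.root) :=
    Option.injective_iff.2 ⟨D.root_injective, fun ⟨x, hx⟩ => h x hx⟩
  have card_le := (card_le_card_roots monic_f3.ne_zero injective (Option.rec hz D.aeval_root)).trans
    (card_roots' _)
  rw [natDegree_map, natDegree_f3, Fintype.card_option] at card_le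
  exact absurd card_le (by decide)

theorem minpoly_root (htrans : ∀ x, ∃ g : L ≃ₐ[ℚ] L, g • D.alpha (0, true, 1) = D.alpha x) :
    minpoly ℚ (D.root (0, true, 1)) = f3 := by
  have integral : IsIntegral ℚ (D.root (0, true, 1)) := Algebra.IsIntegral.isIntegral _
  refine (eq_of_monic_of_dvd_of_natDegree_le (minpoly.monic integral) monic_f3
    (minpoly.dvd _ _ (D.aeval_root _)) ?_).symm
  have conjugate (x : Label) : aeval (D.root x) (minpoly ℚ (D.root (0, true, 1))) = 0 := by
    obtain ⟨g, hg⟩ := htrans x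
    rw [← (apply_root_eq_iff g _ x).2 hg, ← minpoly.algEquiv_eq g, minpoly.aeval]
  rw [natDegree_f3]
  exact (card_le_card_roots (minpoly.ne_zero integral) D.root_injective conjugate).trans
    ((card_roots' _).trans natDegree_map_le)

theorem restrict_eq_one_iff [Fact (f3.map (algebraMap ℚ L)).Splits] (g : L ≃ₐ[ℚ] L) :
    Gal.restrict f3 L g = 1 ↔ ∀ x, g • D.alpha x = D.alpha x := by
  constructor
  · intro h x
    have := Gal.restrict_smul g
      (⟨D.root x, mem_rootSet.2 ⟨monic_f3.ne_zero, D.aeval_root x⟩⟩ : f3.rootSet L)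
    rw [h, one_smul] at this
    exact (apply_root_eq_iff g x x).1 this.symm
  · intro h
    apply Gal.galActionHom_injective f3 L
    rw [map_one]
    ext z
    obtain ⟨x, hx⟩ := D.exists_root_eq (mem_rootSet.1 z.2).2
    have := Gal.restrict_smul g z
    rwa [← hx, (apply_root_eq_iff g x x).2 (h x), hx] at this

theorem mem_adjoin_root [IsGalois ℚ L] {x : Label} {z : 𝓞 L}
    (hz : ∀ g : L ≃ₐ[ℚ] L, g • D.alpha x = D.alpha x → g • z = z) : (z : L) ∈ ℚ⟮D.root x⟯ := by
  rw [← IsGalois.fixedField_fixingSubgroup ℚ⟮D.root x⟯, mem_fixedField_iff]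
  intro g hg
  have fixes := (mem_fixingSubgroup_iff _ _).1 hg _ (mem_adjoin_simple_self ℚ (D.root x))
  exact congrArg (algebraMap (𝓞 L) L) (hz g ((apply_root_eq_iff g x x).1 fixes))

theorem exists_isTriple_of_aeval_f3 [IsGalois ℚ L] {x : Label} (hx : minpoly ℚ (D.root x) = f3)
    {K : Type*} [Field K] [Algebra ℚ K] {a : K} (ha : aeval a f3 = 0) :
    ∃ t w y : K, IsTriple t w y ∧ 18 * a = ev₃ t w y eighteenAlpha := by
  have ht := D.mem_adjoin_root (x := x) fun g hg => (eq_of_smul_alpha_eq hg).1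
  have hw := D.mem_adjoin_root (x := x) fun g hg => (eq_of_smul_alpha_eq hg).2.1
  have hy := D.mem_adjoin_root (x := x) fun g hg => (eq_of_smul_alpha_eq hg).2.2
  have integral : IsIntegral ℚ (D.root x) := Algebra.IsIntegral.isIntegral _
  have ha' : a ∈ (minpoly ℚ (D.root x)).aroots K :=
    mem_aroots.2 ⟨minpoly.ne_zero integral, by rw [hx, ha]⟩
  let φ : ℚ⟮D.root x⟯ →ₐ[ℚ] K := (algHomAdjoinIntegralEquiv ℚ integral).symm ⟨a, ha'⟩
  have hφ : φ (AdjoinSimple.gen ℚ (D.root x)) = a :=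
    algHomAdjoinIntegralEquiv_symm_apply_gen ℚ integral _
  have triple : IsTriple (⟨_, ht⟩ : ℚ⟮D.root x⟯) ⟨_, hw⟩ ⟨_, hy⟩ :=
    .of_map (algebraMap ℚ⟮D.root x⟯ L) (algebraMap ℚ⟮D.root x⟯ L).injective (D.isTriple_coe x)
  have eighteen : 18 * AdjoinSimple.gen ℚ (D.root x) =
      ev₃ (⟨_, ht⟩ : ℚ⟮D.root x⟯) ⟨_, hw⟩ ⟨_, hy⟩ eighteenAlpha := by
    apply (algebraMap ℚ⟮D.root x⟯ L).injective
    rw [map_mul, map_ofNat, map_ev₃]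
    exact D.eighteen_mul_root x
  refine ⟨_, _, _, triple.map φ.toRingHom, ?_⟩
  rw [← map_ev₃, ← eighteen, map_mul, map_ofNat]
  exact congrArg (18 * ·) hφ.symm

theorem exists_subgroup_f3_gal [IsGalois ℚ L] {k₂ : Type*} [Field k₂] [Algebra (ZMod 2) k₂]
    {q₂ : 𝓞 L →+* k₂}
    {σ : L ≃ₐ[ℚ] L} (hσ : ∀ x, q₂ (σ • x) = q₂ x ^ 2)
    {Ψ : MulAction.stabilizer (L ≃ₐ[ℚ] L) (D.w true) →* SL(2, ZMod 7)}
    (hΨ : ∀ g v, g • D.vec v = D.vec (Ψ g • v)) (hsurj : Function.Surjective Ψ) :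
    ∃ H : Subgroup f3.Gal, H.index = 2 ∧ Nonempty (H ≃* SL(2, ZMod 7)) := by
  have : Fact (f3.map (algebraMap ℚ L)).Splits := ⟨D.splits_f3⟩
  refine exists_index_two_mulEquiv (Gal.restrict_surjective f3 L) (index_stabilizer_w hσ) ?_ hsurj
    fun g => (hom_eq_one_iff hΨ g).trans (restrict_eq_one_iff (g : L ≃ₐ[ℚ] L)).symm
  intro g hg
  exact (eq_of_smul_alpha_eq ((restrict_eq_one_iff g).1 hg (0, true, 1))).2.1

end Labelling

/-! ### A Galois number field containing all the roots -/

/-- The polynomial with the given list of coefficients, constant term first. -/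
def toPoly (l : List ℤ) : ℤ[X] := ev₁ X l

theorem aeval_toPoly {S : Type*} [CommRing S] (x : S) (l : List ℤ) :
    aeval x (toPoly l) = ev₁ x l := by
  have := map_ev₁ (aeval (R := ℤ) x).toRingHom X l
  rwa [AlgHom.toRingHom_eq_coe, RingHom.coe_coe, aeval_X] at this

theorem toPoly_octic : toPoly octic = X ^ 8 - 4 * X ^ 7 + 7 * X ^ 6 - 7 * X ^ 5 + 7 * X ^ 4 -
    7 * X ^ 3 + 7 * X ^ 2 + 5 * X + 1 := by
  simp only [toPoly, ev₁, octic, horner_cons, horner_nil, eq_intCast]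
  push_cast
  ring

theorem natDegree_toPoly_octic : (toPoly octic).natDegree = 8 := by
  rw [toPoly_octic]
  compute_degree!

theorem monic_toPoly_octic : (toPoly octic).Monic := by
  rw [toPoly_octic]
  monicity!

theorem exists_eq_prod_of_splits {K : Type*} [Field K] {p : K[X]} {n : ℕ} (hp : p.Monic)
    (hs : p.Splits) (hn : p.natDegree = n) : ∃ z : Fin n → K, ∀ x, p.eval x = ∏ a, (x - z a) := by
  obtain ⟨l, hl⟩ := Quotient.exists_rep p.roots
  obtain rfl : l.length = n := by
    rw [← hn, hs.natDegree_eq_card_roots, ← hl]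
    rfl
  refine ⟨l.get, fun x => ?_⟩
  rw [hs.eval_eq_prod_roots_of_monic hp, ← hl]
  exact (Fin.prod_univ_fun_getElem l (x - ·)).symm

section Integrality
variable {S : Type*} [CommRing S] {t w : S}

theorem isIntegral_of_octic_root (ht : ev₁ t octic = 0) : IsIntegral ℤ t :=
  ⟨toPoly octic, monic_toPoly_octic, by rw [← aeval_def, aeval_toPoly, ht]⟩

theorem isIntegral_of_omega (hw : w ^ 2 + w + 1 = 0) : IsIntegral ℤ w :=
  ⟨X ^ 2 + X + 1, by monicity!, by simpa using hw⟩

theorem horner_mem {R : Type} {σ : Type*} [SetLike σ S] [SubringClass σ S] {A : σ} {φ : R → S}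
    {x : S} (hx : x ∈ A) (hφ : ∀ c, φ c ∈ A) (l : List R) : horner φ x l ∈ A := by
  induction l with
  | nil => exact zero_mem A
  | cons c l ih => exact add_mem (hφ c) (mul_mem hx ih)

theorem ev₁_mem {σ : Type*} [SetLike σ S] [SubringClass σ S] {A : σ} (ht : t ∈ A) (l : List ℤ) :
    ev₁ t l ∈ A :=
  horner_mem ht (fun c => intCast_mem A c) l

theorem ev₂_mem {σ : Type*} [SetLike σ S] [SubringClass σ S] {A : σ} (ht : t ∈ A) (hw : w ∈ A)
    (l : List (List ℤ)) : ev₂ t w l ∈ A :=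
  horner_mem hw (ev₁_mem ht) l

theorem ev₃_mem {σ : Type*} [SetLike σ S] [SubringClass σ S] {A : σ} {y : S} (ht : t ∈ A)
    (hw : w ∈ A) (hy : y ∈ A) (l : List (List (List ℤ))) : ev₃ t w y l ∈ A :=
  horner_mem hy (ev₂_mem ht hw) l

end Integrality

/-- The ring `O` contains the coordinates of all triples `t`, `w`, `y` with `IsTriple t w y`. -/
structure ContainsTriples (O : Type*) [CommRing O] : Prop where
  exists_octic_roots : ∃ z : Fin 8 → O, ∀ x, ev₁ x octic = ∏ a, (x - z a)
  exists_omega : ∃ w : O, w ^ 2 + w + 1 = 0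
  exists_sqrt (t w : O) : ev₁ t octic = 0 → w ^ 2 + w + 1 = 0 → ∃ y, y ^ 2 = ev₂ t w radicand

section Coordinates
variable {K : Type*} [Field K]

theorem exists_omega [IsAlgClosed K] [CharZero K] : ∃ w : K, w ^ 2 + w + 1 = 0 := by
  obtain ⟨r, hr⟩ := IsAlgClosed.exists_pow_nat_eq (-3 : K) two_pos
  exact ⟨(r - 1) / 2, by linear_combination hr / 4⟩

theorem exists_octic_roots [IsAlgClosed K] :
    ∃ z : Fin 8 → K, ∀ x, ev₁ x octic = ∏ a, (x - z a) := by
  have := exists_eq_prod_of_splits (monic_toPoly_octic.map (algebraMap ℤ K))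
    (IsAlgClosed.splits _) ((monic_toPoly_octic.natDegree_map _).trans natDegree_toPoly_octic)
  simpa only [eval_map_algebraMap, aeval_toPoly] using this

theorem finite_setOf_aeval_eq_zero {p : ℤ[X]} (hp : p.Monic) :
    {x : K | aeval x p = 0}.Finite := by
  simpa only [IsRoot.def, eval_map_algebraMap] using
    finite_setOfPred_isRoot (hp.map (algebraMap ℤ K)).ne_zero

/-- The coordinates of all triples `t`, `w`, `y` with `IsTriple t w y` in the field `K`. -/
def tripleCoords (K : Type*) [Field K] : Set K :=
  {t | ev₁ t octic = 0} ∪ {w | w ^ 2 + w + 1 = 0} ∪ {y | ∃ t w, IsTriple t w y}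

theorem finite_tripleCoords (K : Type*) [Field K] : (tripleCoords K).Finite := by
  have finite_octic : {t : K | ev₁ t octic = 0}.Finite := by
    simpa only [aeval_toPoly] using finite_setOf_aeval_eq_zero monic_toPoly_octic
  have finite_omega : {w : K | w ^ 2 + w + 1 = 0}.Finite := by
    have := finite_setOf_aeval_eq_zero (K := K) (p := X ^ 2 + X + 1) (by monicity!)
    simpa only [map_add, map_pow, aeval_X, map_one] using this
  have finite_sqrt (c : K) : {y : K | y ^ 2 = c}.Finite :=
    (nthRoots 2 c).toFinset.finite_toSet.subset fun y hy => by
      simpa [mem_nthRoots two_pos] using hy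
  refine (finite_octic.union finite_omega).union
    ((finite_octic.biUnion fun t _ => finite_omega.biUnion fun w _ =>
      finite_sqrt (ev₂ t w radicand)).subset ?_)
  rintro y ⟨t, w, h⟩
  exact Set.mem_biUnion h.octic_root (Set.mem_biUnion h.omega h.sq_eq)

theorem isIntegral_of_mem_tripleCoords {x : K} (hx : x ∈ tripleCoords K) : IsIntegral ℤ x := by
  rcases hx with (ht | hw) | ⟨t, w, h⟩
  · exact isIntegral_of_octic_root ht
  · exact isIntegral_of_omega hw
  · have : ev₂ t w radicand ∈ integralClosure ℤ K :=
      ev₂_mem (isIntegral_of_octic_root h.octic_root) (isIntegral_of_omega h.omega) _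
    exact .of_pow two_pos (h.sq_eq ▸ this)

end Coordinates

theorem exists_containsTriples (Ω : Type*) [Field Ω] [CharZero Ω] [IsAlgClosed Ω]
    [Algebra.IsAlgebraic ℚ Ω] :
    ∃ (L : IntermediateField ℚ Ω) (_ : NumberField L) (_ : IsGalois ℚ L),
      ContainsTriples (𝓞 L) := by
  have : IsAlgClosure ℚ Ω := ⟨inferInstance, inferInstance⟩
  have : IsGalois ℚ Ω := IsAlgClosure.isGalois ℚ Ω
  have : Finite (tripleCoords Ω) := finite_tripleCoords Ω
  have subset_adjoin := FiniteGaloisIntermediateField.subset_adjoin ℚ (tripleCoords Ω)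
  set L := FiniteGaloisIntermediateField.adjoin ℚ (tripleCoords Ω)
  have : NumberField L := ⟨⟩
  let ι : 𝓞 L →+* Ω := (algebraMap L Ω).comp (algebraMap (𝓞 L) L)
  have ι_injective : Function.Injective ι :=
    (algebraMap L Ω).injective.comp NumberField.RingOfIntegers.coe_injective
  have exists_lift {x : Ω} (hx : x ∈ tripleCoords Ω) : ∃ o, ι o = x :=
    ⟨⟨⟨x, subset_adjoin hx⟩, (isIntegral_algebraMap_iff (algebraMap L Ω).injective).1
      (isIntegral_of_mem_tripleCoords hx)⟩, rfl⟩
  refine ⟨L.toIntermediateField, inferInstance, L.isGalois, ?_, ?_, fun t w ht hw => ?_⟩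
  · obtain ⟨z, hz⟩ := exists_octic_roots (K := Ω)
    have octic_root (a : Fin 8) : ev₁ (z a) octic = 0 := by
      rw [hz]
      exact Finset.prod_eq_zero (Finset.mem_univ a) (sub_self _)
    choose o ho using fun a => exists_lift (.inl (.inl (octic_root a)))
    exact ⟨o, fun x => ι_injective (by simp only [map_ev₁, hz, map_prod, map_sub, ho])⟩
  · obtain ⟨w, hw⟩ := exists_omega (K := Ω)
    obtain ⟨o, rfl⟩ := exists_lift (.inl (.inr hw))
    exact ⟨o, ι_injective (by simpa only [map_add, map_pow, map_one, map_zero] using hw)⟩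
  · obtain ⟨y, hy⟩ := IsAlgClosed.exists_pow_nat_eq (ι (ev₂ t w radicand)) two_pos
    have triple : IsTriple (ι t) (ι w) y := by
      refine ⟨?_, ?_, by rw [hy, map_ev₂]⟩
      · rw [← map_ev₁, ht, map_zero]
      · simpa only [map_add, map_pow, map_one, map_zero] using congrArg ι hw
    obtain ⟨o, rfl⟩ := exists_lift (.inr ⟨_, _, triple⟩)
    exact ⟨o, ι_injective (by rw [map_pow, hy])⟩

theorem ContainsTriples.galoisTheory_f3 {L : Type*} [Field L] [NumberField L] [IsGalois ℚ L]
    (h : ContainsTriples (𝓞 L)) (K : Type*) [Field K] [Algebra ℚ K] :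
    Irreducible f3 ∧ (∃ H : Subgroup f3.Gal, H.index = 2 ∧ Nonempty (H ≃* SL(2, ZMod 7))) ∧
      ∀ a : K, aeval a f3 = 0 →
        ∃ t w y : K, IsTriple t w y ∧ 18 * a = ev₃ t w y eighteenAlpha := by
  obtain ⟨z, hz⟩ := h.exists_octic_roots
  obtain ⟨w, hw⟩ := h.exists_omega
  have : Fact (Nat.Prime 8893) := ⟨by norm_num⟩
  obtain ⟨k, _, _, q, -⟩ := exists_frobenius L 8893
  obtain ⟨k₂, _, _, q₂, σ, hσ⟩ := exists_frobenius L 2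
  obtain ⟨D⟩ := Labelling.nonempty (q := q) hz hw h.exists_sqrt
  obtain ⟨Ψ, hΨ⟩ := D.exists_hom (L ≃ₐ[ℚ] L)
  have Ψ_surjective := Labelling.hom_surjective hΨ hσ
  have minpoly_eq := D.minpoly_root (Labelling.exists_smul_alpha_eq hΨ Ψ_surjective hσ)
  refine ⟨?_, Labelling.exists_subgroup_f3_gal hσ hΨ Ψ_surjective,
    fun a => Labelling.exists_isTriple_of_aeval_f3 minpoly_eq⟩
  exact minpoly_eq ▸ minpoly.irreducible (Algebra.IsIntegral.isIntegral _)

theorem exists_containsTriples_numberField : ∃ (L : Type) (_ : Field L) (_ : NumberField L)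
    (_ : IsGalois ℚ L), ContainsTriples (𝓞 L) := by
  have : Algebra.IsAlgebraic ℚ (AlgebraicClosure ℚ) := AlgebraicClosure.isAlgebraic ℚ
  obtain ⟨L, hL, hG, h⟩ := exists_containsTriples (AlgebraicClosure ℚ)
  exact ⟨L, inferInstance, hL, hG, h⟩

theorem irreducible_f3 : Irreducible f3 := by
  obtain ⟨L, _, _, _, h⟩ := exists_containsTriples_numberField
  exact (h.galoisTheory_f3 ℚ).1

theorem exists_subgroup_f3_gal :
    ∃ H : Subgroup f3.Gal, H.index = 2 ∧ Nonempty (H ≃* SL(2, ZMod 7)) := by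
  obtain ⟨L, _, _, _, h⟩ := exists_containsTriples_numberField
  exact (h.galoisTheory_f3 ℚ).2.1

theorem exists_isTriple_of_aeval_f3 {K : Type*} [Field K] [Algebra ℚ K] {a : K}
    (ha : aeval a f3 = 0) : ∃ t w y : K, IsTriple t w y ∧ 18 * a = ev₃ t w y eighteenAlpha := by
  obtain ⟨L, _, _, _, h⟩ := exists_containsTriples_numberField
  exact (h.galoisTheory_f3 K).2.2 a ha

theorem card_f3_gal : Nat.card f3.Gal = 672 := by
  obtain ⟨H, index_eq, ⟨e⟩⟩ := exists_subgroup_f3_gal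
  rw [← H.card_mul_index, index_eq, Nat.card_congr e.toEquiv, card_SL2_zmod_seven]

/-! ### Unramified quadratic extensions -/

theorem minpoly_eq_of_adjoin_eq_top (A K L : Type*) {B : Type*} [CommRing A] [IsDomain A]
    [IsIntegrallyClosed A] [Field K] [CommRing B] [IsDomain B] [Field L] [Algebra A K]
    [IsFractionRing A K] [Algebra A B] [Module.IsTorsionFree A B] [Algebra B L] [Algebra K L]
    [Algebra A L] [IsScalarTower A K L] [IsScalarTower A B L] [FiniteDimensional K L]
    [IsIntegralClosure B A L] {x : B} (hx : K⟮algebraMap B L x⟯ = ⊤) {p : A[X]}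
    (hp : p.Monic) (hroot : aeval x p = 0) (hdeg : p.natDegree = Module.finrank K L) :
    minpoly A x = p := by
  have hi : IsIntegral A x := IsIntegralClosure.isIntegral A L x
  have hmin : minpoly K (algebraMap B L x) = (minpoly A x).map (algebraMap A K) := by
    rw [minpoly.isIntegrallyClosed_eq_field_fractions' K hi.algebraMap,
      minpoly.algebraMap_eq (IsIntegralClosure.algebraMap_injective B A L)]
  have hrank : (minpoly A x).natDegree = Module.finrank K L := by
    rw [← (minpoly.monic hi).natDegree_map (algebraMap A K), ← hmin,
      ← adjoin.finrank (Algebra.IsIntegral.isIntegral _), hx, finrank_top']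
  exact (eq_of_monic_of_dvd_of_natDegree_le (minpoly.monic hi) hp
    (minpoly.isIntegrallyClosed_dvd hi hroot) (hdeg.trans hrank.symm).le).symm

section UnramifiedQuadratic
variable {F M : Type*} [Field F] [NumberField F] [Field M] [NumberField M] [Algebra F M]

theorem isIntegral_of_quadratic {S : Type*} [CommRing S] {x a b : S} (ha : IsIntegral ℤ a)
    (hb : IsIntegral ℤ b) (h : x ^ 2 - a * x + b = 0) : IsIntegral ℤ x := by
  let A := integralClosure ℤ S
  have hx : IsIntegral A x := by
    refine ⟨X ^ 2 - C (⟨a, ha⟩ : A) * X + C (⟨b, hb⟩ : A), by monicity!, ?_⟩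
    rw [← aeval_def]
    simpa [Subalgebra.algebraMap_def] using h
  exact isIntegral_trans (R := ℤ) (A := A) x hx

theorem natAbs_discr_eq_sq_of_quadratic {x : M} {a b d : F} (hx : F⟮x⟯ = ⊤) (ha : IsIntegral ℤ a)
    (hb : IsIntegral ℤ b) (hd : IsIntegral ℤ d)
    (h : x ^ 2 - algebraMap F M a * x + algebraMap F M b = 0)
    (hunit : (a ^ 2 - 4 * b) * d = 1) (h2 : Module.finrank F M = 2) :
    (NumberField.discr M).natAbs = (NumberField.discr F).natAbs ^ 2 := by
  obtain ⟨x, rfl⟩ : ∃ z : 𝓞 M, (z : M) = x :=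
    ⟨⟨x, isIntegral_of_quadratic ha.algebraMap hb.algebraMap h⟩, rfl⟩
  obtain ⟨a, rfl⟩ : ∃ z : 𝓞 F, (z : F) = a := ⟨⟨a, ha⟩, rfl⟩
  obtain ⟨b, rfl⟩ : ∃ z : 𝓞 F, (z : F) = b := ⟨⟨b, hb⟩, rfl⟩
  obtain ⟨d, rfl⟩ : ∃ z : 𝓞 F, (z : F) = d := ⟨⟨d, hd⟩, rfl⟩
  set φ := algebraMap (𝓞 F) (𝓞 M)
  have root : x ^ 2 - φ a * x + φ b = 0 := NumberField.RingOfIntegers.coe_injective h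
  have unit : (φ a ^ 2 - 4 * φ b) * φ d = 1 := by
    have := congrArg φ (NumberField.RingOfIntegers.coe_injective hunit : (a ^ 2 - 4 * b) * d = 1)
    simpa only [map_mul, map_sub, map_pow, map_ofNat, map_one] using this
  have min : minpoly (𝓞 F) x = X ^ 2 - C a * X + C b :=
    minpoly_eq_of_adjoin_eq_top (𝓞 F) F M hx (by monicity!) (by simpa using root)
      (by rw [h2]; compute_degree!)
  have mem := aeval_derivative_mem_differentIdeal (𝓞 F) F M x
    (IntermediateField.adjoin_eq_top_iff.1 hx)
  have deriv : aeval x (derivative (minpoly (𝓞 F) x)) = 2 * x - φ a := by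
    simp [min, one_add_one_eq_two, map_ofNat, φ]
  have deriv_unit : (2 * x - φ a) * ((2 * x - φ a) * φ d) = 1 := by
    linear_combination 4 * φ d * root + unit
  have top : differentIdeal (𝓞 F) (𝓞 M) = ⊤ :=
    Ideal.eq_top_of_isUnit_mem _ mem (deriv ▸ IsUnit.of_mul_eq_one _ deriv_unit)
  rw [NumberField.natAbs_discr_eq_absNorm_differentIdeal_mul_natAbs_discr_pow F (𝓞 F) M (𝓞 M), top,
    Ideal.absNorm_top, h2, one_mul]

end UnramifiedQuadratic

/-- `3 θ` for the generator `θ` of the ring of integers of `ℚ(t)` over `ℤ[t]`. -/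
def threeTheta : List ℤ := [7, 17, -15, 17, -17, 15, -8, 2]

/-- The minimal polynomial of `θ`. -/
def thetaOctic : List ℤ := [16, 5, 49, 7, 14, 7, 7, -1, 1]

/-- `9 γ` for the generator `γ` of the ring of integers of `ℚ(t, w)` over that of `ℚ(t)`. -/
def nineGamma : List (List ℤ) :=
  [[-5, -53, 54, -52, 53, -45, 22, -5], [-4, -7, 0, -2, 7, -9, 5, -1]]

/-- `3 p(t, θ)` as a polynomial in `t`, for `p` of length two, i.e. linear in `θ`. -/
def clearTheta : List (List ℤ) → List ℤ
  | [a, b] => opsT.add (opsT.mul [3] a) (opsT.mul threeTheta b)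
  | _ => []

/-- `27 p(t, θ, γ)` as a polynomial in `t` and `w`, for `p` linear in `θ` and in `γ`. -/
def clearGamma : List (List (List ℤ)) → List (List ℤ)
  | [p, q] => opsTW.add [opsT.mul [9] (clearTheta p)] (opsTW.mul nineGamma [clearTheta q])
  | _ => []

/-- The trace of `γ` over `ℚ(t)`, as a polynomial in `t` and `θ`. -/
def gammaTrace : List (List ℤ) := [[0, -10, 11, -11, 10, -8, 4, -1], [0, 1]]

/-- The norm of `γ` over `ℚ(t)`, as a polynomial in `t` and `θ`. -/
def gammaNorm : List (List ℤ) := [[-5, -15, 15, -15, 16, -15, 8, -2], [0, -1]]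

/-- The inverse of the discriminant of `γ` over `ℚ(t)`, as a polynomial in `t` and `θ`. -/
def gammaDiscInv : List (List ℤ) := [[4, 24, -7, 13, -15, 8, -3, 1], [-1, -1]]

/-- `27 w` as a polynomial in `t` and `9 γ`. -/
def omegaOfGamma : List (List ℤ) :=
  [[-153, -639, 810, -711, 693, -648, 333, -72], [-4, 20, -15, 22, -17, 12, -7, 2]]

/-- The trace of the generator `ρ = (rhoTrace + y / 3) / 2` of the ring of integers of `ℚ(t, w, y)`
over that of `ℚ(t, w)`, as a polynomial in `t` and `w`. -/
def rhoTrace : List (List ℤ) := [[0, 0, 1, 1, 1, 0, 1, 0], [1, 0, 1, 1, 1, 1, 0, 0]]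

/-- The norm of `ρ` over `ℚ(t, w)`, as a polynomial in `t`, `θ` and `γ`. -/
def rhoNorm : List (List (List ℤ)) :=
  [[[-34, -171, -326, -24, -107, 116, -72, 13], [-1, 1]],
   [[13, 51, 23, -74, 24, -33, 58, -23], [-1, -1]]]

/-- The inverse of the discriminant `radicand / 9` of `ρ` over `ℚ(t, w)`, as a polynomial in `t`,
`θ` and `γ`. -/
def rhoDiscInv : List (List (List ℤ)) :=
  [[[-20, -108, -121, -41, 15, 37, -4, -9], [1, -1]], [[-1, 3, -44, -47, -3, 1, 24, -12], [-1, -1]]]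

section IntegralElements
variable {S : Type*} [CommRing S] {t w θ γ : S}

theorem ev₁_clearTheta (ht : ev₁ t octic = 0) (hθ : 3 * θ = ev₁ t threeTheta) (a b : List ℤ) :
    ev₁ t (clearTheta [a, b]) = 3 * ev₂ t θ [a, b] := by
  have h := interprets_opsT ht
  rw [clearTheta, h.add, h.mul, h.mul, ← hθ, ev₁_singleton]
  simp only [ev₂, horner_cons, horner_nil]
  push_cast
  ring

theorem ev₂_clearGamma (ht : ev₁ t octic = 0) (hw : w ^ 2 + w + 1 = 0)
    (hθ : 3 * θ = ev₁ t threeTheta) (hγ : 9 * γ = ev₂ t w nineGamma) (a b c d : List ℤ) :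
    ev₂ t w (clearGamma [[a, b], [c, d]]) = 27 * ev₃ t θ γ [[a, b], [c, d]] := by
  have h := interprets_opsTW ht hw
  rw [clearGamma, h.add, h.mul, ← hγ, ev₂_singleton, ev₂_singleton, (interprets_opsT ht).mul,
    ev₁_clearTheta ht hθ, ev₁_clearTheta ht hθ, ev₁_singleton]
  simp only [ev₃, horner_cons, horner_nil]
  push_cast
  ring

theorem thetaOctic_cert :
    opsT.isZero (opsT.eval (fun n => [n]) threeTheta (dilate 3 thetaOctic)) = true := by
  decide +kernel

theorem ev₁_thetaOctic_eq_zero [IsDomain S] [CharZero S] (ht : ev₁ t octic = 0)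
    (hθ : 3 * θ = ev₁ t threeTheta) : ev₁ θ thetaOctic = 0 := by
  have h := interprets_opsT ht
  have key := h.isZero _ thetaOctic_cert
  rw [h.eval, ← hθ, funext (ev₁_singleton t)] at key
  change ev₁ (3 * θ) (dilate 3 thetaOctic) = 0 at key
  have scaled := mul_ev₁_dilate 3 θ thetaOctic
  rw [Int.cast_ofNat, key, mul_zero] at scaled
  exact (mul_eq_zero.1 scaled.symm).resolve_left (pow_ne_zero _ (by norm_num))

theorem toPoly_thetaOctic : toPoly thetaOctic = X ^ 8 - X ^ 7 + 7 * X ^ 6 + 7 * X ^ 5 +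
    14 * X ^ 4 + 7 * X ^ 3 + 49 * X ^ 2 + 5 * X + 16 := by
  simp only [toPoly, ev₁, thetaOctic, horner_cons, horner_nil, eq_intCast]
  push_cast
  ring

theorem monic_toPoly_thetaOctic : (toPoly thetaOctic).Monic := by
  rw [toPoly_thetaOctic]
  monicity!

theorem isIntegral_theta [IsDomain S] [CharZero S] (ht : ev₁ t octic = 0)
    (hθ : 3 * θ = ev₁ t threeTheta) : IsIntegral ℤ θ :=
  ⟨toPoly thetaOctic, monic_toPoly_thetaOctic,
    by rw [← aeval_def, aeval_toPoly, ev₁_thetaOctic_eq_zero ht hθ]⟩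

theorem gamma_cert :
    opsTW.eq (opsTW.add (opsTW.mul nineGamma nineGamma) [opsT.mul [27] (clearTheta gammaNorm)])
      (opsTW.mul [opsT.mul [3] (clearTheta gammaTrace)] nineGamma) = true := by decide +kernel

theorem gamma_quadratic [IsDomain S] [CharZero S] (ht : ev₁ t octic = 0) (hw : w ^ 2 + w + 1 = 0)
    (hθ : 3 * θ = ev₁ t threeTheta) (hγ : 9 * γ = ev₂ t w nineGamma) :
    γ ^ 2 - ev₂ t θ gammaTrace * γ + ev₂ t θ gammaNorm = 0 := by
  have hT := interprets_opsT ht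
  have hTW := interprets_opsTW ht hw
  have key := hTW.eq gamma_cert
  rw [hTW.add, hTW.mul, hTW.mul, ev₂_singleton, ev₂_singleton, hT.mul, hT.mul, ev₁_singleton,
    ev₁_singleton, gammaTrace, gammaNorm, ev₁_clearTheta ht hθ, ev₁_clearTheta ht hθ, ← hγ] at key
  push_cast at key
  refine (mul_eq_zero.1 ?_).resolve_left (by norm_num : (81 : S) ≠ 0)
  rw [gammaTrace, gammaNorm]
  linear_combination key

theorem gammaDisc_cert :
    opsT.eq (opsT.mul (opsT.add (opsT.mul (clearTheta gammaTrace) (clearTheta gammaTrace))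
      (opsT.mul [-12] (clearTheta gammaNorm))) (clearTheta gammaDiscInv)) [27] = true := by
  decide +kernel

theorem gammaDisc_mul_inv [IsDomain S] [CharZero S] (ht : ev₁ t octic = 0)
    (hθ : 3 * θ = ev₁ t threeTheta) :
    (ev₂ t θ gammaTrace ^ 2 - 4 * ev₂ t θ gammaNorm) * ev₂ t θ gammaDiscInv = 1 := by
  have hT := interprets_opsT ht
  have key := hT.eq gammaDisc_cert
  rw [hT.mul, hT.add, hT.mul, hT.mul, ev₁_singleton, ev₁_singleton, gammaTrace, gammaNorm,
    gammaDiscInv, ev₁_clearTheta ht hθ, ev₁_clearTheta ht hθ, ev₁_clearTheta ht hθ] at key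
  push_cast at key
  refine mul_left_cancel₀ (by norm_num : (27 : S) ≠ 0) ?_
  rw [gammaTrace, gammaNorm, gammaDiscInv]
  linear_combination key

theorem omegaOfGamma_cert :
    opsTW.eq (opsTW.eval (fun l => [l]) nineGamma omegaOfGamma) [[], [27]] = true := by
  decide +kernel

theorem omega_eq_of_gamma (ht : ev₁ t octic = 0) (hw : w ^ 2 + w + 1 = 0)
    (hγ : 9 * γ = ev₂ t w nineGamma) : 27 * w = ev₂ t (9 * γ) omegaOfGamma := by
  have h := interprets_opsTW ht hw
  have key := h.eq omegaOfGamma_cert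
  rw [h.eval, ← hγ, funext (ev₂_singleton t w), ← ev₂] at key
  rw [key]
  simp only [ev₂, ev₁, horner_cons, horner_nil, eq_intCast]
  push_cast
  ring

theorem rhoNorm_cert :
    opsTW.eq (opsTW.add (opsTW.mul [[3]] radicand) (opsTW.mul [[4]] (clearGamma rhoNorm)))
      (opsTW.mul [[27]] (opsTW.mul rhoTrace rhoTrace)) = true := by decide +kernel

theorem radicand_eq_rhoDisc [IsDomain S] [CharZero S] (ht : ev₁ t octic = 0)
    (hw : w ^ 2 + w + 1 = 0) (hθ : 3 * θ = ev₁ t threeTheta) (hγ : 9 * γ = ev₂ t w nineGamma) :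
    ev₂ t w radicand = 9 * (ev₂ t w rhoTrace ^ 2 - 4 * ev₃ t θ γ rhoNorm) := by
  have h := interprets_opsTW ht hw
  have key := h.eq rhoNorm_cert
  rw [h.add, h.mul, h.mul, h.mul, h.mul, rhoNorm, ev₂_clearGamma ht hw hθ hγ] at key
  simp only [ev₂_singleton, ev₁_singleton] at key
  push_cast at key
  refine mul_left_cancel₀ (by norm_num : (3 : S) ≠ 0) ?_
  rw [rhoNorm]
  linear_combination key

theorem rhoDiscInv_cert :
    opsTW.eq (opsTW.mul radicand (clearGamma rhoDiscInv)) [[243]] = true := by decide +kernel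

theorem radicand_mul_rhoDiscInv [IsDomain S] [CharZero S] (ht : ev₁ t octic = 0)
    (hw : w ^ 2 + w + 1 = 0) (hθ : 3 * θ = ev₁ t threeTheta) (hγ : 9 * γ = ev₂ t w nineGamma) :
    ev₂ t w radicand * ev₃ t θ γ rhoDiscInv = 9 := by
  have h := interprets_opsTW ht hw
  have key := h.eq rhoDiscInv_cert
  rw [h.mul, rhoDiscInv, ev₂_clearGamma ht hw hθ hγ, ev₂_singleton, ev₁_singleton] at key
  push_cast at key
  refine mul_left_cancel₀ (by norm_num : (27 : S) ≠ 0) ?_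
  rw [rhoDiscInv]
  linear_combination key

end IntegralElements

section UnramifiedTower
variable {F M : Type*} [Field F] [NumberField F] [Field M] [NumberField M] [Algebra F M]

theorem exists_theta {K : Type*} [Field K] [CharZero K] {t : K} (ht : ev₁ t octic = 0) :
    ∃ θ : K, 3 * θ = ev₁ t threeTheta ∧ IsIntegral ℤ θ :=
  have hθ : 3 * (ev₁ t threeTheta / 3) = ev₁ t threeTheta := mul_div_cancel₀ _ (by norm_num)
  ⟨_, hθ, isIntegral_theta ht hθ⟩

theorem exists_gamma {K : Type*} [Field K] [CharZero K] {t w θ : K} (ht : ev₁ t octic = 0)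
    (hw : w ^ 2 + w + 1 = 0) (hθ : 3 * θ = ev₁ t threeTheta) :
    ∃ γ : K, 9 * γ = ev₂ t w nineGamma ∧ IsIntegral ℤ γ := by
  have hγ : 9 * (ev₂ t w nineGamma / 9) = ev₂ t w nineGamma := mul_div_cancel₀ _ (by norm_num)
  have int (l : List (List ℤ)) : ev₂ t θ l ∈ integralClosure ℤ K :=
    ev₂_mem (isIntegral_of_octic_root ht) (isIntegral_theta ht hθ) l
  exact ⟨_, hγ, isIntegral_of_quadratic (int _) (int _) (gamma_quadratic ht hw hθ hγ)⟩

theorem natAbs_discr_of_adjoin_omega {t : F} {w : M} (ht : ev₁ t octic = 0)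
    (hw : w ^ 2 + w + 1 = 0) (hgen : F⟮w⟯ = ⊤) (h2 : Module.finrank F M = 2) :
    (NumberField.discr M).natAbs = (NumberField.discr F).natAbs ^ 2 := by
  obtain ⟨θ, hθ, hθi⟩ := exists_theta ht
  set φ := algebraMap F M
  have ht' : ev₁ (φ t) octic = 0 := by rw [← map_ev₁, ht, map_zero]
  have hθ' : 3 * φ θ = ev₁ (φ t) threeTheta := by rw [← map_ev₁, ← hθ, map_mul, map_ofNat]
  obtain ⟨γ, hγ, -⟩ := exists_gamma ht' hw hθ'
  have int (l : List (List ℤ)) : ev₂ t θ l ∈ integralClosure ℤ F :=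
    ev₂_mem (isIntegral_of_octic_root ht) hθi l
  have quad := gamma_quadratic ht' hw hθ' hγ
  simp only [← map_ev₂] at quad
  have gen : F⟮γ⟯ = ⊤ := by
    have hw27 : w = ev₂ (φ t) (9 * γ) omegaOfGamma / 27 :=
      eq_div_of_mul_eq (by norm_num) (by rw [mul_comm, omega_eq_of_gamma ht' hw hγ])
    rw [eq_top_iff, ← hgen, adjoin_simple_le_iff, hw27]
    exact div_mem (ev₂_mem (F⟮γ⟯.algebraMap_mem t)
      (mul_mem (ofNat_mem _ 9) (mem_adjoin_simple_self F γ)) _) (ofNat_mem _ 27)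
  exact natAbs_discr_eq_sq_of_quadratic gen (int _) (int _) (int _) quad
    (gammaDisc_mul_inv ht hθ) h2

theorem natAbs_discr_of_adjoin_sqrt_radicand {t w : F} {y : M} (ht : ev₁ t octic = 0)
    (hw : w ^ 2 + w + 1 = 0) (hy : y ^ 2 = algebraMap F M (ev₂ t w radicand)) (hgen : F⟮y⟯ = ⊤)
    (h2 : Module.finrank F M = 2) :
    (NumberField.discr M).natAbs = (NumberField.discr F).natAbs ^ 2 := by
  obtain ⟨θ, hθ, hθi⟩ := exists_theta ht
  obtain ⟨γ, hγ, hγi⟩ := exists_gamma ht hw hθ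
  set φ := algebraMap F M
  have hti := isIntegral_of_octic_root ht
  have inte : ev₂ t w rhoTrace ∈ integralClosure ℤ F := ev₂_mem hti (isIntegral_of_omega hw) _
  have int (l : List (List (List ℤ))) : ev₃ t θ γ l ∈ integralClosure ℤ F := ev₃_mem hti hθi hγi l
  have disc := radicand_eq_rhoDisc ht hw hθ hγ
  have inv := radicand_mul_rhoDiscInv ht hw hθ hγ
  set e := ev₂ t w rhoTrace
  set q := ev₃ t θ γ rhoNorm
  have disc' : y ^ 2 = 9 * (φ e ^ 2 - 4 * φ q) := by
    rw [hy, disc]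
    simp only [map_mul, map_sub, map_pow, map_ofNat]
  obtain ⟨ρ, hρ⟩ : ∃ ρ : M, y = 3 * (2 * ρ - φ e) := ⟨(φ e + y / 3) / 2, by ring⟩
  have quad : ρ ^ 2 - φ e * ρ + φ q = 0 := by
    rw [hρ] at disc'
    linear_combination disc' / 36
  have gen : F⟮ρ⟯ = ⊤ := by
    rw [eq_top_iff, ← hgen, adjoin_simple_le_iff, hρ]
    exact mul_mem (ofNat_mem _ 3) (sub_mem
      (mul_mem (ofNat_mem _ 2) (mem_adjoin_simple_self F ρ)) (F⟮ρ⟯.algebraMap_mem e))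
  refine natAbs_discr_eq_sq_of_quadratic gen inte (int _) (int rhoDiscInv) quad ?_ h2
  rw [disc] at inv
  linear_combination inv / 9

end UnramifiedTower

/-! ### The discriminant of the octic field -/

theorem norm_algebraMap_sub_eq_eval_minpoly {R S : Type*} [CommRing R] [IsDomain R]
    [IsIntegrallyClosed R] [CommRing S] [IsDomain S] [Algebra R S] [Module.Free R S]
    [Module.Finite R S] {θ : S} (hdeg : (minpoly R θ).natDegree = Module.finrank R S) (a : R) :
    Algebra.norm R (algebraMap R S a - θ) = (minpoly R θ).eval a := by
  have hθ : IsIntegral R θ := Algebra.IsIntegral.isIntegral θ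
  have charpoly : (Algebra.lmul R S θ).charpoly = minpoly R θ :=
    eq_of_monic_of_dvd_of_natDegree_le (minpoly.monic hθ) (LinearMap.charpoly_monic _)
      (minpoly.isIntegrallyClosed_dvd hθ (Algebra.aeval_self_charpoly_lmul θ))
      (by rw [LinearMap.charpoly_natDegree, hdeg])
  rw [← charpoly, LinearMap.eval_charpoly, Algebra.norm_apply, map_sub, AlgHom.commutes]

section Saturation
variable {S : Type*} [CommRing S] {θ : S} {p : ℕ}

theorem exists_aeval_eq_eval_sub_mul (q : ℤ[X]) (a : ℤ) :
    ∃ s ∈ Algebra.adjoin ℤ {θ}, aeval θ q = q.eval a - (a - θ) * s := by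
  obtain ⟨s, hs⟩ : X - C a ∣ q - C (q.eval a) := X_sub_C_dvd_sub_C_eval
  refine ⟨aeval θ s, aeval_mem_adjoin_singleton ℤ θ, ?_⟩
  have := congrArg (aeval θ) hs
  simp only [map_sub, map_mul, aeval_X, eq_intCast, map_intCast] at this
  linear_combination this

variable [IsDomain S] [Module.Free ℤ S] [Module.Finite ℤ S]

theorem dvd_of_sub_mul_eq_intCast (hdeg : (minpoly ℤ θ).natDegree = Module.finrank ℤ S)
    (hp : p.Prime) {a k : ℤ} (ha : (p : ℤ) ∣ (minpoly ℤ θ).eval a) {z : S}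
    (hz : (a - θ) * z = k) : (p : ℤ) ∣ k := by
  have norm := congrArg (Algebra.norm ℤ) hz
  rw [map_mul, ← eq_intCast (algebraMap ℤ S) a, ← eq_intCast (algebraMap ℤ S) k,
    norm_algebraMap_sub_eq_eval_minpoly hdeg, Algebra.norm_algebraMap] at norm
  exact (Nat.prime_iff_prime_int.1 hp).dvd_of_dvd_pow (norm ▸ ha.mul_right _)

variable [CharZero S]

/-- The prime `(p, a - θ)` of `ℤ[θ]` is generated by `a - θ` locally, because `p` divides the norm
of `a - θ` exactly once. -/
theorem mem_adjoin_of_sub_mul_mem (hdeg : (minpoly ℤ θ).natDegree = Module.finrank ℤ S)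
    (hp : p.Prime) {a : ℤ} (ha : (p : ℤ) ∣ (minpoly ℤ θ).eval a)
    (ha2 : ¬ (p : ℤ) ^ 2 ∣ (minpoly ℤ θ).eval a) {z : S}
    (hz : (a - θ) * z ∈ Algebra.adjoin ℤ {θ}) (hpz : p * z ∈ Algebra.adjoin ℤ {θ}) :
    z ∈ Algebra.adjoin ℤ {θ} := by
  obtain ⟨u, hu, minpoly_eq⟩ := exists_aeval_eq_eval_sub_mul (θ := θ) (minpoly ℤ θ) a
  rw [minpoly.aeval] at minpoly_eq
  obtain ⟨q, hq⟩ : ∃ q : ℤ[X], aeval θ q = (a - θ) * z := by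
    rwa [Algebra.adjoin_singleton_eq_range_aeval] at hz
  obtain ⟨s, hs, q_eq⟩ := exists_aeval_eq_eval_sub_mul (θ := θ) q a
  have remainder : (a - θ) * (z + s) = (q.eval a : ℤ) := by linear_combination q_eq - hq
  obtain ⟨k, hk⟩ := dvd_of_sub_mul_eq_intCast hdeg hp ha remainder
  obtain ⟨m, hm⟩ := ha
  have mul_add_eq : m * (z + s) = u * k := by
    refine mul_left_cancel₀ (Nat.cast_ne_zero.2 hp.ne_zero : (p : S) ≠ 0) ?_
    rw [hm] at minpoly_eq
    rw [hk] at remainder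
    push_cast at minpoly_eq remainder
    linear_combination u * remainder - (z + s) * minpoly_eq
  obtain ⟨c, d, bezout⟩ : IsCoprime (p : ℤ) m := by
    rw [(Nat.prime_iff_prime_int.1 hp).coprime_iff_not_dvd]
    rintro ⟨n, rfl⟩
    exact ha2 ⟨n, by rw [hm]; ring⟩
  have bezout' : (c : S) * p + d * m = 1 := by exact_mod_cast congrArg (Int.cast : ℤ → S) bezout
  have z_eq : z = c * (p * z) + d * (u * k - m * s) := by
    linear_combination (-z) * bezout' + d * mul_add_eq
  rw [z_eq]
  exact add_mem (mul_mem (intCast_mem _ c) hpz) (mul_mem (intCast_mem _ d)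
    (sub_mem (mul_mem hu (intCast_mem _ k)) (mul_mem (intCast_mem _ m) hs)))

theorem mem_adjoin_of_prod_sub_mul_mem (hdeg : (minpoly ℤ θ).natDegree = Module.finrank ℤ S)
    (hp : p.Prime) {l : List ℤ} (ha : ∀ a ∈ l, (p : ℤ) ∣ (minpoly ℤ θ).eval a)
    (ha2 : ∀ a ∈ l, ¬ (p : ℤ) ^ 2 ∣ (minpoly ℤ θ).eval a) {z : S}
    (hz : (l.map fun a : ℤ => (a : S) - θ).prod * z ∈ Algebra.adjoin ℤ {θ})
    (hpz : p * z ∈ Algebra.adjoin ℤ {θ}) : z ∈ Algebra.adjoin ℤ {θ} := by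
  induction l generalizing z with
  | nil => simpa using hz
  | cons a l ih =>
    rw [List.forall_mem_cons] at ha ha2
    have a_sub_mem : (a : S) - θ ∈ Algebra.adjoin ℤ {θ} :=
      sub_mem (intCast_mem _ a) (Algebra.self_mem_adjoin_singleton ℤ θ)
    refine mem_adjoin_of_sub_mul_mem hdeg hp ha.1 ha2.1 (ih ha.2 ha2.2 ?_ ?_) hpz
    · rw [List.map_cons, List.prod_cons] at hz
      rwa [mul_left_comm, ← mul_assoc]
    · rw [mul_left_comm]
      exact mul_mem a_sub_mem hpz

/-- A case of Dedekind's criterion. -/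
theorem mem_adjoin_of_prime_mul_mem (hdeg : (minpoly ℤ θ).natDegree = Module.finrank ℤ S)
    (hp : p.Prime) {l : List ℤ}
    (hl : C (p : ℤ) ∣ minpoly ℤ θ - (l.map fun a => C a - X).prod)
    (ha2 : ∀ a ∈ l, ¬ (p : ℤ) ^ 2 ∣ (minpoly ℤ θ).eval a) {z : S}
    (hpz : p * z ∈ Algebra.adjoin ℤ {θ}) : z ∈ Algebra.adjoin ℤ {θ} := by
  obtain ⟨c, hc⟩ := hl
  refine mem_adjoin_of_prod_sub_mul_mem hdeg hp (fun a ha => ⟨c.eval a, ?_⟩) ha2 ?_ hpz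
  · have prod_eval : (l.map fun b : ℤ => C b - X).prod.eval a = 0 := by
      rw [eval_list_prod, List.map_map]
      exact List.prod_eq_zero (List.mem_map.2 ⟨a, ha, by simp⟩)
    rw [← sub_zero (eval a _), ← prod_eval, ← eval_sub, hc, eval_mul, eval_C]
  · have prod_eq : (l.map fun a : ℤ => (a : S) - θ).prod = -(p * aeval θ c) := by
      have := congrArg (aeval θ) hc
      rw [map_sub, minpoly.aeval, map_list_prod, List.map_map, zero_sub, neg_eq_iff_eq_neg] at this
      simpa [Function.comp_def] using this
    rw [prod_eq, neg_mul, mul_right_comm, mul_comm]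
    exact neg_mem (mul_mem (aeval_mem_adjoin_singleton ℤ θ) hpz)

end Saturation

/-- The root `t` of `octic` is `1 / 32563` times this polynomial in `θ`. -/
def rootOfTheta : List ℤ := [-18303, -60054, -9962, -10232, -15805, -6338, 689, -1232]

/-- The derivative of `octic`. -/
def octicDeriv : List ℤ := [5, 14, -21, 28, -35, 42, -28, 8]

/-- The derivative of `thetaOctic`. -/
def thetaOcticDeriv : List ℤ := [5, 98, 21, 56, 35, 42, -7, 8]

/-- Exact arithmetic in `ℤ[θ]`. -/
def opsTheta : RingOps (List ℤ) :=
  (RingOps.standard ℤ).adjoinRoot 8 [-16, -5, -49, -7, -14, -7, -7, 1]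

section ThetaCertificates
variable {S : Type*} [CommRing S] {t θ : S}

theorem rootOfTheta_cert : opsT.eq (opsT.eval (fun n => [n]) threeTheta (dilate 3 rootOfTheta))
    [0, 3 ^ 7 * 32563] = true := by decide +kernel

theorem root_eq_ev₁_theta [IsDomain S] [CharZero S] (ht : ev₁ t octic = 0)
    (hθ : 3 * θ = ev₁ t threeTheta) : 32563 * t = ev₁ θ rootOfTheta := by
  have h := interprets_opsT ht
  have key := h.eq rootOfTheta_cert
  rw [h.eval, ← hθ, funext (ev₁_singleton t)] at key
  change ev₁ (3 * θ) (dilate 3 rootOfTheta) = _ at key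
  have scaled := mul_ev₁_dilate 3 θ rootOfTheta
  rw [Int.cast_ofNat, key] at scaled
  simp only [ev₁, horner_cons, horner_nil, eq_intCast, rootOfTheta, List.length] at scaled ⊢
  push_cast at scaled ⊢
  refine mul_left_cancel₀ (by norm_num : (3 ^ 8 : S) ≠ 0) ?_
  linear_combination scaled

theorem interprets_opsTheta (hθ : ev₁ θ thetaOctic = 0) : Interprets opsTheta (ev₁ θ) := by
  refine (Interprets.standard (Int.castRingHom S)).adjoinRoot ?_
  simp only [ev₁, thetaOctic, horner_cons, horner_nil, eq_intCast] at hθ ⊢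
  push_cast at hθ ⊢
  linear_combination hθ

theorem derivative_toPoly_octic : derivative (toPoly octic) = toPoly octicDeriv := by
  rw [toPoly_octic]
  simp only [toPoly, ev₁, octicDeriv, horner_cons, horner_nil, eq_intCast, derivative_add,
    derivative_sub, derivative_mul, derivative_X_pow, derivative_X, derivative_ofNat,
    derivative_one]
  push_cast
  ring

theorem derivative_toPoly_thetaOctic :
    derivative (toPoly thetaOctic) = toPoly thetaOcticDeriv := by
  rw [toPoly_thetaOctic]
  simp only [toPoly, ev₁, thetaOcticDeriv, horner_cons, horner_nil, eq_intCast, derivative_add,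
    derivative_sub, derivative_mul, derivative_X_pow, derivative_X, derivative_ofNat]
  push_cast
  ring

theorem octicDeriv_cert : opsT.eq
    (opsT.mul octicDeriv [-277, -1156, 1158, -1157, 1126, -984, 509, -118]) [1323] = true := by
  decide +kernel

theorem ev₁_octicDeriv_dvd (ht : ev₁ t octic = 0) : ev₁ t octicDeriv ∣ 1323 := by
  have h := interprets_opsT ht
  have key := h.eq octicDeriv_cert
  rw [h.mul, ev₁_singleton] at key
  exact ⟨_, mod_cast key.symm⟩

theorem thetaOcticDeriv_cert :
    opsTheta.eq (opsTheta.mul thetaOcticDeriv [-643977235, -16770425634, -1045018753, -4131417158,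
      -2914770436, -2593394351, 407858793, -400052528])
      [3 * (3 * (7 * (7 * 32563 ^ 2)))] = true := by
  decide +kernel

theorem ev₁_thetaOcticDeriv_dvd (hθ : ev₁ θ thetaOctic = 0) :
    ev₁ θ thetaOcticDeriv ∣ 3 * (3 * (7 * (7 * 32563 ^ 2))) := by
  have h := interprets_opsTheta hθ
  have key := h.eq thetaOcticDeriv_cert
  rw [h.mul, ev₁_singleton] at key
  exact ⟨_, mod_cast key.symm⟩

theorem deriv_dvd_linear_factors_cert :
    opsTheta.eq (opsTheta.mul thetaOcticDeriv [-1989571636226, 5023710516917, -889260111603,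
      583993415292, 407555916414, 867182229482, -212908751738, 127457577554])
      (opsTheta.mul [32563 ^ 2] (opsTheta.mul (opsTheta.pow [-5, -1] 7) [2, -1])) = true := by
  decide +kernel

theorem linear_factors_dvd_deriv_cert :
    opsTheta.eq (opsTheta.mul (opsTheta.mul (opsTheta.pow [-5, -1] 7) [2, -1])
      [-318986907839333939980656820215, -213256272386099055020534691809,
        -715942221267648158596141065015, 283095919443188434428479809328,
        -453239745585172088659258640139, 26789964559990902517464055323,
        -24081590062229241108748936087, -9945689800344771521321108277])
      (opsTheta.mul [62 * 26921 ^ 7] thetaOcticDeriv) = true := by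
  decide +kernel

theorem ev₁_thetaOcticDeriv_dvd_mul_linear_factors (hθ : ev₁ θ thetaOctic = 0) :
    ev₁ θ thetaOcticDeriv ∣ ((32563 ^ 2 : ℕ) : S) * ((-5 - θ) ^ 7 * (2 - θ)) := by
  have h := interprets_opsTheta hθ
  have key := h.eq deriv_dvd_linear_factors_cert
  simp only [h.mul, h.pow, ev₁_singleton] at key
  refine ⟨_, Eq.trans ?_ key.symm⟩
  simp only [ev₁, horner_cons, horner_nil, eq_intCast]
  push_cast
  ring

theorem linear_factors_dvd_mul_ev₁_thetaOcticDeriv (hθ : ev₁ θ thetaOctic = 0) :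
    (-5 - θ) ^ 7 * (2 - θ) ∣ ((62 * 26921 ^ 7 : ℕ) : S) * ev₁ θ thetaOcticDeriv := by
  have h := interprets_opsTheta hθ
  have key := h.eq linear_factors_dvd_deriv_cert
  simp only [h.mul, h.pow, ev₁_singleton] at key
  refine ⟨_, Eq.trans (mod_cast key.symm) (congrArg (· * _) ?_)⟩
  simp only [ev₁, horner_cons, horner_nil, eq_intCast]
  push_cast
  ring

end ThetaCertificates

theorem natDegree_toPoly_thetaOctic : (toPoly thetaOctic).natDegree = 8 := by
  rw [toPoly_thetaOctic]
  compute_degree!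

theorem eval_toPoly_thetaOctic (a : ℤ) : (toPoly thetaOctic).eval a = ev₁ a thetaOctic := by
  rw [← coe_aeval_eq_eval, aeval_toPoly]

section OcticDiscriminant
variable {F : Type*} [Field F] [NumberField F]

theorem absNorm_dvd_pow_of_natCast_mem {I : Ideal (𝓞 F)} {n : ℕ} (hn : (n : 𝓞 F) ∈ I) :
    Ideal.absNorm I ∣ n ^ Module.finrank ℚ F := by
  have := Ideal.absNorm_dvd_norm_of_mem hn
  rw [← map_natCast (algebraMap ℤ (𝓞 F)) n, Algebra.norm_algebraMap,
    NumberField.RingOfIntegers.rank] at this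
  exact_mod_cast this

theorem adjoin_theta_eq_top {t θ : F} (ht : ev₁ t octic = 0) (hθ : 3 * θ = ev₁ t threeTheta)
    (hgen : ℚ⟮t⟯ = ⊤) : ℚ⟮θ⟯ = ⊤ := by
  have t_eq : t = ev₁ θ rootOfTheta / 32563 :=
    eq_div_of_mul_eq (by norm_num) (by rw [mul_comm, root_eq_ev₁_theta ht hθ])
  rw [eq_top_iff, ← hgen, adjoin_simple_le_iff, t_eq]
  exact div_mem (ev₁_mem (mem_adjoin_simple_self ℚ θ) _) (ofNat_mem _ 32563)

theorem natAbs_discr_dvd_of_octic {t : F} (ht : ev₁ t octic = 0) (hgen : ℚ⟮t⟯ = ⊤)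
    (h8 : Module.finrank ℚ F = 8) : (NumberField.discr F).natAbs ∣ 1323 ^ 8 := by
  obtain ⟨t, rfl⟩ : ∃ z : 𝓞 F, (z : F) = t := ⟨⟨t, isIntegral_of_octic_root ht⟩, rfl⟩
  have root : ev₁ t octic = 0 :=
    NumberField.RingOfIntegers.coe_injective (by rw [map_ev₁, ht, map_zero])
  have min : minpoly ℤ t = toPoly octic :=
    minpoly_eq_of_adjoin_eq_top ℤ ℚ F hgen monic_toPoly_octic (by rw [aeval_toPoly, root])
      (natDegree_toPoly_octic.trans h8.symm)
  have deriv_mem := aeval_derivative_mem_differentIdeal ℤ ℚ F t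
    (IntermediateField.adjoin_eq_top_iff.1 hgen)
  rw [min, derivative_toPoly_octic, aeval_toPoly] at deriv_mem
  rw [← NumberField.absNorm_differentIdeal F (𝓞 F), ← h8]
  exact absNorm_dvd_pow_of_natCast_mem
    (Ideal.mem_of_dvd _ (mod_cast ev₁_octicDeriv_dvd root) deriv_mem)

variable {θ : 𝓞 F}

theorem minpoly_theta (hθ : ev₁ θ thetaOctic = 0) (hgen : ℚ⟮(θ : F)⟯ = ⊤)
    (h8 : Module.finrank ℚ F = 8) : minpoly ℤ θ = toPoly thetaOctic :=
  minpoly_eq_of_adjoin_eq_top ℤ ℚ F hgen monic_toPoly_thetaOctic (by rw [aeval_toPoly, hθ])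
    (natDegree_toPoly_thetaOctic.trans h8.symm)

theorem natDegree_minpoly_theta (hmin : minpoly ℤ θ = toPoly thetaOctic)
    (h8 : Module.finrank ℚ F = 8) : (minpoly ℤ θ).natDegree = Module.finrank ℤ (𝓞 F) := by
  rw [hmin, natDegree_toPoly_thetaOctic, NumberField.RingOfIntegers.rank, h8]

theorem norm_sub_theta (hmin : minpoly ℤ θ = toPoly thetaOctic) (h8 : Module.finrank ℚ F = 8)
    (a : ℤ) : Algebra.norm ℤ (a - θ) = ev₁ a thetaOctic := by
  rw [← eval_toPoly_thetaOctic, ← hmin, ← eq_intCast (algebraMap ℤ (𝓞 F)),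
    norm_algebraMap_sub_eq_eval_minpoly (natDegree_minpoly_theta hmin h8)]

theorem mem_adjoin_theta_of_three_mul_mem (hmin : minpoly ℤ θ = toPoly thetaOctic)
    (h8 : Module.finrank ℚ F = 8) {z : 𝓞 F} (hz : 3 * z ∈ Algebra.adjoin ℤ {θ}) :
    z ∈ Algebra.adjoin ℤ {θ} := by
  refine mem_adjoin_of_prime_mul_mem (natDegree_minpoly_theta hmin h8) Nat.prime_three
    (l := [1, 1, 1, 1, 1, 1, 2, 2]) ⟨toPoly [4, 11, -12, 51, -47, 37, -12, 3], ?_⟩ ?_ hz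
  · rw [hmin, toPoly_thetaOctic]
    simp only [toPoly, ev₁, horner_cons, horner_nil, List.map_cons, List.map_nil, List.prod_cons,
      List.prod_nil, eq_intCast]
    push_cast
    ring
  · rw [hmin]
    simp only [eval_toPoly_thetaOctic]
    decide

theorem mem_adjoin_theta_of_seven_mul_mem (hmin : minpoly ℤ θ = toPoly thetaOctic)
    (h8 : Module.finrank ℚ F = 8) {z : 𝓞 F} (hz : 7 * z ∈ Algebra.adjoin ℤ {θ}) :
    z ∈ Algebra.adjoin ℤ {θ} := by
  refine mem_adjoin_of_prime_mul_mem (natDegree_minpoly_theta hmin h8) (by norm_num : Nat.Prime 7)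
    (l := [1, 2, 2, 2, 2, 2, 2, 2]) ⟨toPoly [-16, 83, -153, 177, -118, 53, -13, 2], ?_⟩ ?_ hz
  · rw [hmin, toPoly_thetaOctic]
    simp only [toPoly, ev₁, horner_cons, horner_nil, List.map_cons, List.map_nil, List.prod_cons,
      List.prod_nil, eq_intCast]
    push_cast
    ring
  · rw [hmin]
    simp only [eval_toPoly_thetaOctic]
    decide

theorem conductor_theta_mul_differentIdeal (hmin : minpoly ℤ θ = toPoly thetaOctic)
    (hgen : ℚ⟮(θ : F)⟯ = ⊤) :
    conductor ℤ θ * differentIdeal ℤ (𝓞 F) = Ideal.span {ev₁ θ thetaOcticDeriv} := by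
  rw [conductor_mul_differentIdeal ℤ ℚ F θ (IntermediateField.adjoin_eq_top_iff.1 hgen), hmin,
    derivative_toPoly_thetaOctic, aeval_toPoly]

theorem mem_conductor_theta (hθ : ev₁ θ thetaOctic = 0) (hgen : ℚ⟮(θ : F)⟯ = ⊤)
    (h8 : Module.finrank ℚ F = 8) : ((32563 ^ 2 : ℕ) : 𝓞 F) ∈ conductor ℤ θ := by
  have hmin := minpoly_theta hθ hgen h8
  have deriv_mem : ev₁ θ thetaOcticDeriv ∈ conductor ℤ θ := by
    rw [← Ideal.span_singleton_le_iff_mem, ← conductor_theta_mul_differentIdeal hmin hgen]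
    exact Ideal.mul_le_left
  have scaled_mem := Ideal.mem_of_dvd _ (ev₁_thetaOcticDeriv_dvd hθ) deriv_mem
  refine mem_conductor_iff.2 fun z => ?_
  have hz := mem_conductor_iff.1 scaled_mem z
  simp only [mul_assoc] at hz
  exact_mod_cast mem_adjoin_theta_of_seven_mul_mem hmin h8 <|
    mem_adjoin_theta_of_seven_mul_mem hmin h8 <| mem_adjoin_theta_of_three_mul_mem hmin h8 <|
    mem_adjoin_theta_of_three_mul_mem hmin h8 hz

theorem natAbs_norm_linear_factors (hmin : minpoly ℤ θ = toPoly thetaOctic)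
    (h8 : Module.finrank ℚ F = 8) :
    (Algebra.norm ℤ ((-5 - θ) ^ 7 * (2 - θ))).natAbs = 21 ^ 8 * (62 * 26921 ^ 7) := by
  have norm_neg_five := norm_sub_theta hmin h8 (-5)
  have norm_two := norm_sub_theta hmin h8 2
  push_cast at norm_neg_five norm_two
  rw [map_mul, map_pow, norm_neg_five, norm_two]
  decide

theorem natAbs_norm_natCast_mul (h8 : Module.finrank ℚ F = 8) (n : ℕ) (x : 𝓞 F) :
    (Algebra.norm ℤ (n * x)).natAbs = n ^ 8 * (Algebra.norm ℤ x).natAbs := by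
  rw [map_mul, ← map_natCast (algebraMap ℤ (𝓞 F)) n, Algebra.norm_algebraMap,
    NumberField.RingOfIntegers.rank, h8, Int.natAbs_mul, Int.natAbs_pow, Int.natAbs_natCast]

theorem natAbs_norm_thetaOcticDeriv (hmin : minpoly ℤ θ = toPoly thetaOctic)
    (hgen : ℚ⟮(θ : F)⟯ = ⊤) :
    (Algebra.norm ℤ (ev₁ θ thetaOcticDeriv)).natAbs =
      Ideal.absNorm (conductor ℤ θ) * (NumberField.discr F).natAbs := by
  rw [← Ideal.absNorm_span_singleton, ← conductor_theta_mul_differentIdeal hmin hgen, map_mul,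
    NumberField.absNorm_differentIdeal F (𝓞 F)]

/-- The norm of `(-5 - θ) ^ 7 * (2 - θ)` agrees with that of the derivative of `thetaOctic` at `θ`
up to factors prime to `21`, and it is read off from the values of `thetaOctic` at `-5` and `2`. -/
theorem natAbs_discr_of_octic {t : F} (ht : ev₁ t octic = 0) (hgen : ℚ⟮t⟯ = ⊤)
    (h8 : Module.finrank ℚ F = 8) : (NumberField.discr F).natAbs = 21 ^ 8 := by
  obtain ⟨θ, three_mul_theta, hθi⟩ := exists_theta ht
  have gen_theta := adjoin_theta_eq_top ht three_mul_theta hgen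
  obtain ⟨θ, rfl⟩ : ∃ z : 𝓞 F, (z : F) = θ := ⟨⟨θ, hθi⟩, rfl⟩
  have hθ : ev₁ θ thetaOctic = 0 := NumberField.RingOfIntegers.coe_injective <| by
    rw [map_ev₁, map_zero]
    exact ev₁_thetaOctic_eq_zero ht three_mul_theta
  have hmin := minpoly_theta hθ gen_theta h8
  have discr_dvd := natAbs_discr_dvd_of_octic ht hgen h8
  have conductor_dvd := absNorm_dvd_pow_of_natCast_mem (mem_conductor_theta hθ gen_theta h8)
  have dvd₁ := Int.natAbs_dvd_natAbs.2
    (map_dvd (Algebra.norm ℤ) (ev₁_thetaOcticDeriv_dvd_mul_linear_factors hθ))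
  have dvd₂ := Int.natAbs_dvd_natAbs.2
    (map_dvd (Algebra.norm ℤ) (linear_factors_dvd_mul_ev₁_thetaOcticDeriv hθ))
  rw [natAbs_norm_natCast_mul h8, natAbs_norm_thetaOcticDeriv hmin gen_theta,
    natAbs_norm_linear_factors hmin h8] at dvd₁ dvd₂
  refine Nat.dvd_antisymm ?_ ?_
  · have cop : (1323 ^ 8).Coprime ((32563 ^ 2) ^ 8 * (62 * 26921 ^ 7)) := by norm_num
    refine (cop.coprime_dvd_left discr_dvd).dvd_of_dvd_mul_left ?_
    exact (dvd_of_mul_left_dvd dvd₁).trans (dvd_of_eq (by ring))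
  · have cop : (21 ^ 8).Coprime ((62 * 26921 ^ 7) ^ 8 * (32563 ^ 2) ^ Module.finrank ℚ F) := by
      rw [h8]
      norm_num
    refine (cop.coprime_dvd_right (mul_dvd_mul_left _ conductor_dvd)).dvd_of_dvd_mul_left ?_
    rw [mul_assoc]
    exact (dvd_mul_right _ _).trans dvd₂

end OcticDiscriminant

section DiscriminantTower

theorem finrank_le_natDegree_of_adjoin_eq_top {F M : Type*} [Field F] [Field M] [Algebra F M]
    {x : M} {p : F[X]} (hx : F⟮x⟯ = ⊤) (hp : p.Monic) (hroot : aeval x p = 0) :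
    Module.finrank F M ≤ p.natDegree := by
  rw [← finrank_top', ← hx, adjoin.finrank ⟨p, hp, hroot⟩]
  exact natDegree_le_of_dvd (minpoly.dvd F x hroot) hp.ne_zero

theorem adjoin_simple_gen_eq_top (F : Type*) {M : Type*} [Field F] [Field M] [Algebra F M] (x : M) :
    F⟮AdjoinSimple.gen F x⟯ = ⊤ := by
  apply lift_injective F⟮x⟯
  rw [lift_adjoin_simple, lift_top, AdjoinSimple.coe_gen]

variable {F E K : Type*} [Field F] [NumberField F] [Field E] [NumberField E] [Field K]
  [NumberField K] [Algebra F E] [Algebra E K] {t : F} {w : E} {y : K}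

theorem finrank_eq_of_tower (ht : ev₁ t octic = 0) (hw : w ^ 2 + w + 1 = 0) {r : E}
    (hy : y ^ 2 = algebraMap E K r) (gen_t : ℚ⟮t⟯ = ⊤) (gen_w : F⟮w⟯ = ⊤) (gen_y : E⟮y⟯ = ⊤)
    (h32 : Module.finrank ℚ K = 32) :
    Module.finrank ℚ F = 8 ∧ Module.finrank F E = 2 ∧ Module.finrank E K = 2 := by
  have rank_F : Module.finrank ℚ F ≤ 8 := by
    rw [← natDegree_toPoly_octic, ← monic_toPoly_octic.natDegree_map (algebraMap ℤ ℚ)]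
    exact finrank_le_natDegree_of_adjoin_eq_top gen_t (monic_toPoly_octic.map _)
      (by rw [aeval_map_algebraMap, aeval_toPoly, ht])
  have rank_E : Module.finrank F E ≤ 2 :=
    (finrank_le_natDegree_of_adjoin_eq_top gen_w (p := X ^ 2 + X + 1) (by monicity!)
      (by simpa using hw)).trans (by compute_degree!)
  have rank_K : Module.finrank E K ≤ 2 :=
    (finrank_le_natDegree_of_adjoin_eq_top gen_y (p := X ^ 2 - C r) (by monicity!)
      (by simp [hy])).trans (by compute_degree!)
  have mul_rank : Module.finrank ℚ F * Module.finrank F E * Module.finrank E K = 32 := by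
    rw [Module.finrank_mul_finrank, Module.finrank_mul_finrank, h32]
  generalize Module.finrank ℚ F = a at *
  generalize Module.finrank F E = b at *
  generalize Module.finrank E K = c at *
  interval_cases b <;> interval_cases c <;> omega

theorem natAbs_discr_of_tower (ht : ev₁ t octic = 0) (hw : w ^ 2 + w + 1 = 0)
    (hy : y ^ 2 = algebraMap E K (ev₂ (algebraMap F E t) w radicand)) (gen_t : ℚ⟮t⟯ = ⊤)
    (gen_w : F⟮w⟯ = ⊤) (gen_y : E⟮y⟯ = ⊤) (h32 : Module.finrank ℚ K = 32) :
    (NumberField.discr K).natAbs = 21 ^ 32 := by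
  obtain ⟨rank_F, rank_E, rank_K⟩ := finrank_eq_of_tower ht hw hy gen_t gen_w gen_y h32
  have ht' : ev₁ (algebraMap F E t) octic = 0 := by rw [← map_ev₁, ht, map_zero]
  rw [natAbs_discr_of_adjoin_sqrt_radicand ht' hw hy gen_y rank_K,
    natAbs_discr_of_adjoin_omega ht hw gen_w rank_E, natAbs_discr_of_octic ht gen_t rank_F,
    ← pow_mul, ← pow_mul]

end DiscriminantTower

theorem IsTriple.abs_discr {K : Type*} [Field K] [NumberField K] {t w y : K} (h : IsTriple t w y)
    (gen : ∀ F : IntermediateField ℚ K, t ∈ F → w ∈ F → y ∈ F → F = ⊤)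
    (h32 : Module.finrank ℚ K = 32) : |NumberField.discr K| = 21 ^ 32 := by
  let F := ℚ⟮t⟯
  let E := F⟮w⟯
  have : NumberField E := NumberField.of_module_finite F E
  let tF : F := AdjoinSimple.gen ℚ t
  let wE : E := AdjoinSimple.gen F w
  have ht : ev₁ tF octic = 0 := by
    apply (algebraMap F K).injective
    rw [map_ev₁, map_zero]
    exact h.octic_root
  have hw : wE ^ 2 + wE + 1 = 0 := Subtype.ext h.omega
  have hy : y ^ 2 = algebraMap E K (ev₂ (algebraMap F E tF) wE radicand) := by
    rw [map_ev₂]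
    exact h.sq_eq
  have gen_y : E⟮y⟯ = ⊤ := by
    have top := gen ((E⟮y⟯.restrictScalars F).restrictScalars ℚ)
      (E⟮y⟯.algebraMap_mem (algebraMap F E tF)) (E⟮y⟯.algebraMap_mem wE)
      (mem_adjoin_simple_self E y)
    rw [restrictScalars_eq_top_iff, restrictScalars_eq_top_iff] at top
    exact top
  rw [Int.abs_eq_natAbs, natAbs_discr_of_tower ht hw hy (adjoin_simple_gen_eq_top ℚ t)
    (adjoin_simple_gen_eq_top F w) gen_y h32]
  norm_num

theorem finrank_adjoin_root_f3 {L : Type*} [Field L] [Algebra ℚ L] {a : L} (ha : aeval a f3 = 0) :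
    Module.finrank ℚ ℚ⟮a⟯ = 32 := by
  rw [adjoin.finrank ⟨f3, monic_f3, ha⟩,
    ← minpoly.eq_of_irreducible_of_monic irreducible_f3 ha monic_f3, natDegree_f3]

theorem abs_discr_of_adjoin_root_f3 {K : Type*} [Field K] [NumberField K] {a : K}
    (ha : aeval a f3 = 0) (hgen : ℚ⟮a⟯ = ⊤) : |NumberField.discr K| = 21 ^ 32 := by
  obtain ⟨t, w, y, h, a_eq⟩ := exists_isTriple_of_aeval_f3 ha
  refine h.abs_discr (fun F ht hw hy => ?_) ?_
  · have : a = ev₃ t w y eighteenAlpha / 18 :=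
      eq_div_of_mul_eq (by norm_num) (by rw [mul_comm, a_eq])
    rw [eq_top_iff, ← hgen, adjoin_simple_le_iff, this]
    exact div_mem (ev₃_mem ht hw hy _) (ofNat_mem F 18)
  · rw [← finrank_top', ← hgen, finrank_adjoin_root_f3 ha]

end SL2Seven

/- `f3.Gal`, the Galois group of the splitting field of `f3` over `ℚ`, is the Galois group
of the Galois closure of the degree 32 number field `ℚ⟮α⟯` defined by a root `α` of `f3`. -/
theorem stmt3 :
    Irreducible f3 ∧
    (∀ α : Qbar, aeval α f3 = 0 →
      Module.finrank ℚ (IntermediateField.adjoin ℚ {α}) = 32 ∧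
      |absd (IntermediateField.adjoin ℚ {α})| = 21 ^ 32) ∧
    Nat.card f3.Gal = 672 ∧
    (∃ H : Subgroup f3.Gal, H.index = 2 ∧
      Nonempty (H ≃* Matrix.SpecialLinearGroup (Fin 2) (ZMod 7))) := by
  refine ⟨SL2Seven.irreducible_f3, fun α hα => ⟨SL2Seven.finrank_adjoin_root_f3 hα, ?_⟩,
    SL2Seven.card_f3_gal, SL2Seven.exists_subgroup_f3_gal⟩
  have finite : FiniteDimensional ℚ ℚ⟮α⟯ :=
    adjoin.finiteDimensional ⟨f3, SL2Seven.monic_f3, hα⟩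
  have : NumberField ℚ⟮α⟯ := ⟨⟩
  rw [absd, dif_pos finite]
  refine SL2Seven.abs_discr_of_adjoin_root_f3 (a := AdjoinSimple.gen ℚ α) ?_
    (SL2Seven.adjoin_simple_gen_eq_top ℚ α)
  apply (algebraMap ℚ⟮α⟯ Qbar).injective
  rw [← aeval_algebraMap_apply, AdjoinSimple.algebraMap_gen, hα, map_zero]

end
end
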